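/- arXiv:0712.0492 — 4 statements merged into one kernel-verified Lean document; each statement's English description precedes it below -/
import Mathlib

section
/- Let f be a bounded analytic function on Re s > 0 represented by a Dirichlet series ∑ a_n n^{-s} in some half-plane, with boundary values f(it) defined almost everywhere. Then liminf_{T→∞} (1/T) ∫_0^T |f(it)|² dt ≥ ∑_{n=1}^∞ |a_n|². -/
open MeasureTheory Filter Complex Real

/-!
For distinct real frequencies `ω i`, the characters `t ↦ exp (-ω i * t * I)` are orthonormal for the
mean value `lim T⁻¹ ∫₀ᵀ`. Far to the right, where the Dirichlet series converges absolutely, its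
Fourier–Bohr coefficients can be read off termwise. By Cauchy's theorem on a tall rectangle, the
integrals of `f s * exp (ω s)` over two vertical segments differ only by the contribution of the
horizontal sides, which stays bounded as the height `T` grows; so the boundary function has `a i` as
its Fourier–Bohr coefficients too. The claim is then Bessel's inequality for the mean value.
-/

section

open Set
open scoped Topology Interval ComplexConjugate

section MeanValue

variable {E : Type*} [NormedAddCommGroup E]

theorem intervalIntegrable_of_locallyIntegrable {g : ℝ → E} (hg : LocallyIntegrable g) (a b : ℝ) :
    IntervalIntegrable g volume a b :=
  (hg.integrableOn_isCompact isCompact_uIcc).intervalIntegrable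

variable [NormedSpace ℝ E]

/-- `m` is the mean value of `g` in the sense of Bohr and Besicovitch, except that the averages are
taken over `[0, T]` rather than over `[-T, T]`. -/
def HasMeanValue (g : ℝ → E) (m : E) : Prop :=
  Tendsto (fun T : ℝ ↦ T⁻¹ • ∫ t in (0 : ℝ)..T, g t) atTop (𝓝 m)

namespace HasMeanValue

theorem sub {g h : ℝ → E} {m n : E} (hg : HasMeanValue g m) (hh : HasMeanValue h n)
    (hg_int : LocallyIntegrable g) (hh_int : LocallyIntegrable h) :
    HasMeanValue (fun t ↦ g t - h t) (m - n) := by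
  refine (Tendsto.sub hg hh).congr fun T ↦ ?_
  rw [intervalIntegral.integral_sub (intervalIntegrable_of_locallyIntegrable hg_int 0 T)
    (intervalIntegrable_of_locallyIntegrable hh_int 0 T), smul_sub]

theorem sum {ι : Type*} {s : Finset ι} {g : ι → ℝ → E} {m : ι → E}
    (hg : ∀ i ∈ s, HasMeanValue (g i) (m i)) (hg_int : ∀ i ∈ s, LocallyIntegrable (g i)) :
    HasMeanValue (fun t ↦ ∑ i ∈ s, g i t) (∑ i ∈ s, m i) := by
  refine (tendsto_finsetSum s hg).congr fun T ↦ ?_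
  rw [intervalIntegral.integral_finsetSum fun i hi ↦
    intervalIntegrable_of_locallyIntegrable (hg_int i hi) 0 T, Finset.smul_sum]

theorem const_mul {g : ℝ → ℂ} {m : ℂ} (hg : HasMeanValue g m) (c : ℂ) :
    HasMeanValue (fun t ↦ c * g t) (c * m) := by
  refine (Tendsto.const_mul c hg).congr fun T ↦ ?_
  rw [intervalIntegral.integral_const_mul, mul_smul_comm]

theorem re {g : ℝ → ℂ} {m : ℂ} (hg : HasMeanValue g m) (hg_int : LocallyIntegrable g) :
    HasMeanValue (fun t ↦ (g t).re) m.re := by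
  refine ((continuous_re.tendsto m).comp hg).congr fun T ↦ ?_
  have hre : ∫ t in (0 : ℝ)..T, (g t).re = (∫ t in (0 : ℝ)..T, g t).re :=
    reCLM.intervalIntegral_comp_comm (intervalIntegrable_of_locallyIntegrable hg_int 0 T)
  rw [hre, Function.comp_apply, smul_re]

theorem of_norm_integral_sub_le {g h : ℝ → E} {m : E} {K : ℝ} (hg : HasMeanValue g m)
    (hK : ∀ T : ℝ, ‖(∫ t in (0 : ℝ)..T, h t) - ∫ t in (0 : ℝ)..T, g t‖ ≤ K) :
    HasMeanValue h m := by
  have hdiff : Tendsto (fun T : ℝ ↦ T⁻¹ • ((∫ t in (0 : ℝ)..T, h t) - ∫ t in (0 : ℝ)..T, g t))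
      atTop (𝓝 0) :=
    tendsto_inv_atTop_zero.zero_smul_isBoundedUnder_le (isBoundedUnder_of ⟨K, hK⟩)
  simpa only [HasMeanValue, ← smul_add, sub_add_cancel, zero_add] using hdiff.add hg

theorem zero_of_norm_integral_le {g : ℝ → E} {K : ℝ}
    (hK : ∀ T : ℝ, ‖∫ t in (0 : ℝ)..T, g t‖ ≤ K) : HasMeanValue g 0 := by
  have hzero : HasMeanValue (fun _ ↦ (0 : E)) 0 := by simp [HasMeanValue]
  exact hzero.of_norm_integral_sub_le (by simpa using hK)

theorem of_hasSum [CompleteSpace E] {ι : Type*} [Countable ι] {F : ι → ℝ → E} {g : ℝ → E}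
    {m : ι → E} {u : ι → ℝ} (hF : ∀ i, HasMeanValue (F i) (m i))
    (hF_meas : ∀ i, AEStronglyMeasurable (F i)) (hu : Summable u) (hFu : ∀ i t, ‖F i t‖ ≤ u i)
    (hg : ∀ t, HasSum (F · t) (g t)) : HasMeanValue g (∑' i, m i) := by
  have hterm (T : ℝ) : HasSum (fun i ↦ ∫ t in (0 : ℝ)..T, F i t) (∫ t in (0 : ℝ)..T, g t) :=
    intervalIntegral.hasSum_integral_of_dominated_convergence (fun i _ ↦ u i)
      (fun i ↦ (hF_meas i).restrict) (fun i ↦ ae_of_all _ fun t _ ↦ hFu i t)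
      (ae_of_all _ fun _ _ ↦ hu) intervalIntegrable_const (ae_of_all _ fun t _ ↦ hg t)
  refine (tendsto_tsum_of_dominated_convergence hu hF ?_).congr fun T ↦
    ((hterm T).const_smul T⁻¹).tsum_eq
  filter_upwards [eventually_gt_atTop 0] with T hT i
  calc ‖T⁻¹ • ∫ t in (0 : ℝ)..T, F i t‖ ≤ T⁻¹ * (u i * |T - 0|) := by
        rw [norm_smul, Real.norm_of_nonneg (inv_nonneg.2 hT.le)]
        gcongr
        exact intervalIntegral.norm_integral_le_of_norm_le_const fun t _ ↦ hFu i t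
    _ = u i := by
        rw [sub_zero, abs_of_pos hT]
        field_simp

theorem le_liminf {g h : ℝ → ℝ} {m : ℝ} (hg : HasMeanValue g m) (hg_int : LocallyIntegrable g)
    (hh_int : LocallyIntegrable h) (hgh : g ≤ h)
    (hh_cob : IsCoboundedUnder (· ≥ ·) atTop fun T : ℝ ↦ 1 / T * ∫ t in (0 : ℝ)..T, h t) :
    m ≤ liminf (fun T : ℝ ↦ 1 / T * ∫ t in (0 : ℝ)..T, h t) atTop := by
  rw [← hg.liminf_eq]
  refine liminf_le_liminf ?_ hg.isBoundedUnder_ge hh_cob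
  filter_upwards [eventually_ge_atTop 0] with T hT
  rw [smul_eq_mul, one_div]
  gcongr
  exact intervalIntegral.integral_mono hT (intervalIntegrable_of_locallyIntegrable hg_int 0 T)
    (intervalIntegrable_of_locallyIntegrable hh_int 0 T) hgh

end HasMeanValue

theorem isCoboundedUnder_ge_mean_of_ae_le {h : ℝ → ℝ} {C : ℝ} (hh : LocallyIntegrable h)
    (hC : ∀ᵐ t, h t ≤ C) :
    IsCoboundedUnder (· ≥ ·) atTop fun T : ℝ ↦ 1 / T * ∫ t in (0 : ℝ)..T, h t := by
  suffices h_le : ∀ᶠ T : ℝ in atTop, 1 / T * ∫ t in (0 : ℝ)..T, h t ≤ C from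
    (isBoundedUnder_of_eventually_le h_le).isCoboundedUnder_ge
  filter_upwards [eventually_gt_atTop 0] with T hT
  have h_int : ∫ t in (0 : ℝ)..T, h t ≤ ∫ _ in (0 : ℝ)..T, C :=
    intervalIntegral.integral_mono_ae hT.le (intervalIntegrable_of_locallyIntegrable hh 0 T)
      intervalIntegrable_const hC
  rw [intervalIntegral.integral_const, sub_zero, smul_eq_mul] at h_int
  rwa [one_div_mul_eq_div, div_le_iff₀' hT]

end MeanValue

section FourierBohr

variable {ι : Type*} {ω : ι → ℝ}

theorem hasMeanValue_cexp (c : ℝ) :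
    HasMeanValue (fun t : ℝ ↦ cexp (c * t * I)) (if c = 0 then 1 else 0) := by
  split_ifs with hc
  · refine tendsto_const_nhds.congr' ?_
    filter_upwards [eventually_ne_atTop 0] with T hT
    simp [hc, hT]
  · have hcI : (c * I : ℂ) ≠ 0 := mul_ne_zero (ofReal_ne_zero.2 hc) I_ne_zero
    refine HasMeanValue.zero_of_norm_integral_le (K := 2 / ‖(c * I : ℂ)‖) fun T ↦ ?_
    simp only [mul_right_comm (c : ℂ) _ I]
    rw [integral_exp_mul_complex hcI, norm_div]
    gcongr
    calc ‖cexp (c * I * T) - cexp (c * I * (0 : ℝ))‖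
        ≤ ‖cexp (c * I * T)‖ + ‖cexp (c * I * (0 : ℝ))‖ := norm_sub_le _ _
      _ = 2 := by norm_num [Complex.norm_exp]

theorem hasMeanValue_mul_cexp_of_hasSum [Countable ι] (hω : Function.Injective ω) {b : ι → ℂ}
    {g : ℝ → ℂ} (hg : ∀ t : ℝ, HasSum (fun i ↦ b i * cexp (-(ω i * t * I))) (g t)) (i : ι) :
    HasMeanValue (fun t ↦ g t * cexp (ω i * t * I)) (b i) := by
  classical
  have hnorm (c t : ℝ) : ‖cexp (c * t * I)‖ = 1 := by
    rw [← ofReal_mul, norm_exp_ofReal_mul_I]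
  have hb : Summable fun j ↦ ‖b j‖ := by simpa using (hg 0).summable.norm
  have hterm (j : ι) : HasMeanValue (fun t : ℝ ↦ b j * cexp ((ω i - ω j : ℝ) * t * I))
      (if j = i then b i else 0) := by
    convert (hasMeanValue_cexp (ω i - ω j)).const_mul (b j) using 1
    by_cases hji : j = i
    · simp [hji]
    · simp [hji, sub_eq_zero, hω.eq_iff, Ne.symm hji]
  rw [← tsum_ite_eq i fun _ ↦ b i]
  refine HasMeanValue.of_hasSum hterm (fun j ↦ Continuous.aestronglyMeasurable (by fun_prop)) hb
    (fun j t ↦ by rw [norm_mul, hnorm, mul_one]) fun t ↦ ?_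
  refine ((hg t).mul_right (cexp (ω i * t * I))).congr_fun fun j ↦ ?_
  rw [mul_assoc (b j), ← Complex.exp_add]
  push_cast
  ring_nf

theorem hasMeanValue_vertical_mul_cexp [Countable ι] (hω : Function.Injective ω) {a : ι → ℂ}
    {f : ℂ → ℂ} {σ : ℝ}
    (hf : ∀ t : ℝ, HasSum (fun i ↦ a i * cexp (-(ω i * (σ + t * I)))) (f (σ + t * I))) (i : ι) :
    HasMeanValue (fun t ↦ f (σ + t * I) * cexp (ω i * (σ + t * I))) (a i) := by
  have hline (t : ℝ) :
      HasSum (fun j ↦ a j * cexp (-(ω j * σ)) * cexp (-(ω j * t * I))) (f (σ + t * I)) := by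
    simpa only [mul_assoc, ← Complex.exp_add, ← neg_add, ← mul_add] using hf t
  convert (hasMeanValue_mul_cexp_of_hasSum hω hline i).const_mul (cexp (ω i * σ)) using 2 with t
  · rw [mul_left_comm, ← Complex.exp_add, mul_add, mul_assoc]
  · rw [mul_left_comm, ← Complex.exp_add, add_neg_cancel, Complex.exp_zero, mul_one]

theorem conj_sum_mul_cexp [Fintype ι] (b : ι → ℂ) (t : ℝ) :
    conj (∑ i, b i * cexp (-(ω i * t * I))) = ∑ i, conj (b i) * cexp (ω i * t * I) := by
  simp only [map_sum, map_mul, ← Complex.exp_conj, map_neg, conj_ofReal, conj_I, mul_neg, neg_neg]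

theorem HasMeanValue.mul_conj_sum_mul_cexp [Fintype ι] {g : ℝ → ℂ} {c : ι → ℂ}
    (hg : LocallyIntegrable g)
    (hc : ∀ i, HasMeanValue (fun t ↦ g t * cexp (ω i * t * I)) (c i)) (b : ι → ℂ) :
    HasMeanValue (fun t ↦ g t * conj (∑ i, b i * cexp (-(ω i * t * I))))
      (∑ i, conj (b i) * c i) := by
  simp only [conj_sum_mul_cexp, Finset.mul_sum, mul_left_comm (g _)]
  exact HasMeanValue.sum (fun i _ ↦ (hc i).const_mul _) fun i _ ↦
    (hg.mul_continuous (by fun_prop)).continuous_mul continuous_const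

theorem re_two_mul_sub_mul_conj_le (z w : ℂ) : ((2 * z - w) * conj w).re ≤ ‖z‖ ^ 2 := by
  have h : ((2 * z - w) * conj w).re = ‖z‖ ^ 2 - ‖z - w‖ ^ 2 := by
    simp only [Complex.sq_norm, normSq_apply, mul_re, sub_re, sub_im, mul_im, conj_re, conj_im,
      re_ofNat, im_ofNat]
    ring
  rw [h]
  exact sub_le_self _ (sq_nonneg _)

theorem sum_norm_sq_le_liminf_mean_norm_sq [Fintype ι] (hω : Function.Injective ω) {g : ℝ → ℂ}
    {c : ι → ℂ} (hg : LocallyIntegrable g) (hg_sq : LocallyIntegrable fun t ↦ ‖g t‖ ^ 2)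
    (hg_cob : IsCoboundedUnder (· ≥ ·) atTop fun T : ℝ ↦ 1 / T * ∫ t in (0 : ℝ)..T, ‖g t‖ ^ 2)
    (hc : ∀ i, HasMeanValue (fun t ↦ g t * cexp (ω i * t * I)) (c i)) :
    ∑ i, ‖c i‖ ^ 2 ≤ liminf (fun T : ℝ ↦ 1 / T * ∫ t in (0 : ℝ)..T, ‖g t‖ ^ 2) atTop := by
  set P : ℝ → ℂ := fun t ↦ ∑ i, c i * cexp (-(ω i * t * I))
  have hP_cont : Continuous P := by fun_prop
  -- `2 * g - P` has the same coefficients as `g`, and `Re ((2 * g - P) * conj P)` equals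
  -- `‖g‖ ^ 2 - ‖g - P‖ ^ 2`, so the mean of `‖g - P‖ ^ 2` need not be expanded.
  have hgP : LocallyIntegrable fun t ↦ 2 * g t - P t :=
    (hg.continuous_mul continuous_const).sub hP_cont.locallyIntegrable
  have hgP_coeff (i : ι) :
      HasMeanValue (fun t ↦ (2 * g t - P t) * cexp (ω i * t * I)) (c i) := by
    have hP_coeff := hasMeanValue_mul_cexp_of_hasSum hω (fun t ↦ hasSum_fintype _) i (b := c)
    have h := ((hc i).const_mul 2).sub hP_coeff
      ((hg.mul_continuous (by fun_prop)).continuous_mul continuous_const)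
      (Continuous.locallyIntegrable (by fun_prop))
    simpa only [two_mul, add_sub_cancel_right, ← add_mul, ← sub_mul] using h
  have hgP_int : LocallyIntegrable fun t ↦ (2 * g t - P t) * conj (P t) :=
    hgP.mul_continuous (by fun_prop)
  have hgP_re_int : LocallyIntegrable fun t ↦ ((2 * g t - P t) * conj (P t)).re :=
    hgP_int.mono (continuous_re.comp_aestronglyMeasurable hgP_int.aestronglyMeasurable)
      (ae_of_all _ fun t ↦ abs_re_le_norm _)
  have hmean := (HasMeanValue.mul_conj_sum_mul_cexp hgP hgP_coeff c).re hgP_int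
  have hsum : (∑ i, conj (c i) * c i).re = ∑ i, ‖c i‖ ^ 2 := by
    simp only [conj_mul', re_sum, ← ofReal_pow, ofReal_re]
  rw [← hsum]
  exact hmean.le_liminf hgP_re_int hg_sq (fun t ↦ re_two_mul_sub_mul_conj_le (g t) (P t)) hg_cob

theorem tsum_norm_sq_le_liminf_mean_norm_sq (hω : Function.Injective ω) {g : ℝ → ℂ} {c : ι → ℂ}
    (hg : LocallyIntegrable g) (hg_sq : LocallyIntegrable fun t ↦ ‖g t‖ ^ 2)
    (hg_cob : IsCoboundedUnder (· ≥ ·) atTop fun T : ℝ ↦ 1 / T * ∫ t in (0 : ℝ)..T, ‖g t‖ ^ 2)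
    (hc : ∀ i, HasMeanValue (fun t ↦ g t * cexp (ω i * t * I)) (c i)) :
    Summable (fun i ↦ ‖c i‖ ^ 2) ∧
      ∑' i, ‖c i‖ ^ 2 ≤ liminf (fun T : ℝ ↦ 1 / T * ∫ t in (0 : ℝ)..T, ‖g t‖ ^ 2) atTop := by
  have hfinite (s : Finset ι) : ∑ i ∈ s, ‖c i‖ ^ 2 ≤
      liminf (fun T : ℝ ↦ 1 / T * ∫ t in (0 : ℝ)..T, ‖g t‖ ^ 2) atTop := by
    rw [← s.sum_coe_sort]
    exact sum_norm_sq_le_liminf_mean_norm_sq (hω.comp Subtype.val_injective) hg hg_sq hg_cob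
      fun i ↦ hc i
  have hnonneg : 0 ≤ fun i ↦ ‖c i‖ ^ 2 := fun i ↦ sq_nonneg _
  exact ⟨summable_of_sum_le hnonneg hfinite, Real.tsum_le_of_sum_le hnonneg hfinite⟩

end FourierBohr

section BoundaryValues

variable {E : Type*} [NormedAddCommGroup E]

theorem continuous_comp_vertical_line {X : Type*} [TopologicalSpace X] {F : ℂ → X} {S : Set ℝ}
    {x : ℝ} (hx : x ∈ S) (hF : ContinuousOn F (Complex.re ⁻¹' S)) :
    Continuous fun t : ℝ ↦ F (x + t * I) :=
  hF.comp_continuous (by fun_prop) fun t ↦ by simpa using hx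

variable {F : ℂ → E} {Fb : ℝ → E} {σ B : ℝ}

theorem aestronglyMeasurable_boundary (hσ : 0 < σ) (hF : ContinuousOn F (Complex.re ⁻¹' Ioc 0 σ))
    (hFb : ∀ᵐ t : ℝ, Tendsto (fun x : ℝ ↦ F (x + t * I)) (𝓝[>] 0) (𝓝 (Fb t))) :
    AEStronglyMeasurable Fb := by
  have : (comap ((↑) : Ioc 0 σ → ℝ) (𝓝[>] 0)).NeBot :=
    NeBot.comap_of_range_mem inferInstance (by rw [Subtype.range_coe]; exact Ioc_mem_nhdsGT hσ)
  exact aestronglyMeasurable_of_tendsto_ae (comap ((↑) : Ioc 0 σ → ℝ) (𝓝[>] 0))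
    (fun x ↦ (continuous_comp_vertical_line x.2 hF).aestronglyMeasurable)
    (hFb.mono fun t ht ↦ ht.comp tendsto_comap)

theorem ae_norm_boundary_le (hσ : 0 < σ) (hB : ∀ s ∈ Complex.re ⁻¹' Ioc 0 σ, ‖F s‖ ≤ B)
    (hFb : ∀ᵐ t : ℝ, Tendsto (fun x : ℝ ↦ F (x + t * I)) (𝓝[>] 0) (𝓝 (Fb t))) :
    ∀ᵐ t, ‖Fb t‖ ≤ B := by
  filter_upwards [hFb] with t ht
  refine le_of_tendsto ht.norm ?_
  filter_upwards [Ioc_mem_nhdsGT hσ] with x hx using hB _ (by simpa using hx)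

variable [NormedSpace ℂ E]

theorem norm_integral_vertical_sub_le {x₁ x₂ y₁ y₂ : ℝ}
    (hF : DifferentiableOn ℂ F ([[x₁, x₂]] ×ℂ [[y₁, y₂]]))
    (hB : ∀ s ∈ [[x₁, x₂]] ×ℂ [[y₁, y₂]], ‖F s‖ ≤ B) :
    ‖(∫ y in y₁..y₂, F (x₁ + y * I)) - ∫ y in y₁..y₂, F (x₂ + y * I)‖ ≤ 2 * (B * |x₂ - x₁|) := by
  have hhor (y : ℝ) (hy : y ∈ [[y₁, y₂]]) : ‖∫ x in x₁..x₂, F (x + y * I)‖ ≤ B * |x₂ - x₁| :=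
    intervalIntegral.norm_integral_le_of_norm_le_const fun x hx ↦
      hB _ (mem_reProdIm.2 (by simpa using ⟨uIoc_subset_uIcc hx, hy⟩))
  have hrect := integral_boundary_rect_eq_zero_of_differentiableOn F ⟨x₁, y₁⟩ ⟨x₂, y₂⟩ hF
  simp only [add_sub_assoc, ← smul_sub] at hrect
  calc _ = ‖I • ((∫ y in y₁..y₂, F (x₂ + y * I)) - ∫ y in y₁..y₂, F (x₁ + y * I))‖ := by
        rw [norm_smul, norm_I, one_mul, norm_sub_rev]
    _ = ‖(∫ x in x₁..x₂, F (x + y₁ * I)) - ∫ x in x₁..x₂, F (x + y₂ * I)‖ := by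
        rw [eq_neg_of_add_eq_zero_left hrect, norm_neg]
    _ ≤ B * |x₂ - x₁| + B * |x₂ - x₁| :=
        norm_sub_le_of_le (hhor y₁ left_mem_uIcc) (hhor y₂ right_mem_uIcc)
    _ = 2 * (B * |x₂ - x₁|) := (two_mul _).symm

theorem norm_integral_boundary_sub_le (hσ : 0 < σ)
    (hF : DifferentiableOn ℂ F (Complex.re ⁻¹' Ioc 0 σ))
    (hB : ∀ s ∈ Complex.re ⁻¹' Ioc 0 σ, ‖F s‖ ≤ B)
    (hFb : ∀ᵐ t : ℝ, Tendsto (fun x : ℝ ↦ F (x + t * I)) (𝓝[>] 0) (𝓝 (Fb t))) (T : ℝ) :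
    ‖(∫ t in (0 : ℝ)..T, Fb t) - ∫ t in (0 : ℝ)..T, F (σ + t * I)‖ ≤ 2 * (B * σ) := by
  have hB₀ : 0 ≤ B := (norm_nonneg _).trans (hB σ (by simpa using hσ))
  have hstrip : ∀ᶠ x : ℝ in 𝓝[>] 0, x ∈ Ioc 0 σ := Ioc_mem_nhdsGT hσ
  have hlim : Tendsto (fun x : ℝ ↦ ∫ t in (0 : ℝ)..T, F (x + t * I)) (𝓝[>] 0)
      (𝓝 (∫ t in (0 : ℝ)..T, Fb t)) := by
    refine intervalIntegral.tendsto_integral_filter_of_dominated_convergence (fun _ ↦ B)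
      ?_ ?_ intervalIntegrable_const (hFb.mono fun t ht _ ↦ ht)
    · filter_upwards [hstrip] with x hx
      exact (continuous_comp_vertical_line hx hF.continuousOn).aestronglyMeasurable
    · filter_upwards [hstrip] with x hx
      exact ae_of_all _ fun t _ ↦ hB _ (by simpa using hx)
  refine le_of_tendsto (hlim.sub_const _).norm ?_
  filter_upwards [hstrip] with x hx
  have hsub : [[x, σ]] ×ℂ [[0, T]] ⊆ Complex.re ⁻¹' Ioc 0 σ := fun s hs ↦ by
    have hs_re := (mem_reProdIm.1 hs).1
    rw [uIcc_of_le hx.2] at hs_re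
    exact ⟨hx.1.trans_le hs_re.1, hs_re.2⟩
  refine (norm_integral_vertical_sub_le (hF.mono hsub) fun s hs ↦ hB s (hsub hs)).trans ?_
  rw [abs_of_nonneg (sub_nonneg.2 hx.2)]
  gcongr
  exact sub_le_self _ hx.1.le

theorem HasMeanValue.boundary_mul_cexp {F : ℂ → ℂ} {Fb : ℝ → ℂ} (hσ : 0 < σ)
    (hF : DifferentiableOn ℂ F (Complex.re ⁻¹' Ioc 0 σ))
    (hB : ∀ s ∈ Complex.re ⁻¹' Ioc 0 σ, ‖F s‖ ≤ B)
    (hFb : ∀ᵐ t : ℝ, Tendsto (fun x : ℝ ↦ F (x + t * I)) (𝓝[>] 0) (𝓝 (Fb t))) {c : ℝ} {m : ℂ}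
    (hm : HasMeanValue (fun t ↦ F (σ + t * I) * cexp (c * (σ + t * I))) m) :
    HasMeanValue (fun t ↦ Fb t * cexp (c * t * I)) m := by
  have hFc : DifferentiableOn ℂ (fun s ↦ F s * cexp (c * s)) (Complex.re ⁻¹' Ioc 0 σ) :=
    hF.mul (by fun_prop)
  have hFc_le : ∀ s ∈ Complex.re ⁻¹' Ioc 0 σ, ‖F s * cexp (c * s)‖ ≤ B * rexp (|c| * σ) := by
    intro s hs
    have hre : c * s.re ≤ |c| * σ :=
      mul_le_mul (le_abs_self c) hs.2 hs.1.le (abs_nonneg c)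
    rw [norm_mul, Complex.norm_exp, re_ofReal_mul]
    gcongr
    · exact (norm_nonneg _).trans (hB s hs)
    · exact hB s hs
  have hFc_lim : ∀ᵐ t : ℝ, Tendsto (fun x : ℝ ↦ F (x + t * I) * cexp (c * (x + t * I))) (𝓝[>] 0)
      (𝓝 (Fb t * cexp (c * t * I))) := by
    filter_upwards [hFb] with t ht
    have hexp : Continuous fun x : ℝ ↦ cexp (c * (x + t * I)) := by fun_prop
    simpa [mul_assoc] using ht.mul ((hexp.tendsto 0).mono_left nhdsWithin_le_nhds)
  exact hm.of_norm_integral_sub_le (norm_integral_boundary_sub_le hσ hFc hFc_le hFc_lim)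

end BoundaryValues

theorem natCast_cpow_neg {n : ℕ} (hn : n ≠ 0) (s : ℂ) :
    (n : ℂ) ^ (-s) = cexp (-(Real.log n * s)) := by
  rw [cpow_def_of_ne_zero (Nat.cast_ne_zero.2 hn), ← natCast_log, mul_neg]

theorem injective_log_natCast_succ : Function.Injective fun n : ℕ ↦ Real.log (n + 1 : ℕ) :=
  fun m n hmn ↦ Nat.succ_injective <| Nat.cast_injective (R := ℝ) <|
    Real.log_injOn_pos (mem_Ioi.2 (by positivity)) (mem_Ioi.2 (by positivity)) hmn

theorem liminf_boundary_mean_square_ge_general {ι : Type*} [Countable ι] {f : ℂ → ℂ} {a : ι → ℂ}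
    {ω : ι → ℝ} {σ C : ℝ} {fb : ℝ → ℂ} (hσ : 0 < σ) (hω : Function.Injective ω)
    (hf : DifferentiableOn ℂ f (Complex.re ⁻¹' Ioc 0 σ))
    (hC : ∀ s ∈ Complex.re ⁻¹' Ioc 0 σ, ‖f s‖ ≤ C)
    (hrep : ∀ t : ℝ, HasSum (fun i ↦ a i * cexp (-(ω i * (σ + t * I)))) (f (σ + t * I)))
    (hfb : ∀ᵐ t : ℝ, Tendsto (fun x : ℝ ↦ f (x + t * I)) (𝓝[>] 0) (𝓝 (fb t))) :
    Summable (fun i ↦ ‖a i‖ ^ 2) ∧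
      ∑' i, ‖a i‖ ^ 2 ≤ liminf (fun T : ℝ ↦ 1 / T * ∫ t in (0 : ℝ)..T, ‖fb t‖ ^ 2) atTop := by
  have hcoeff (i : ι) : HasMeanValue (fun t ↦ fb t * cexp (ω i * t * I)) (a i) :=
    .boundary_mul_cexp hσ hf hC hfb (hasMeanValue_vertical_mul_cexp hω hrep i)
  have hfb_meas : AEStronglyMeasurable fb := aestronglyMeasurable_boundary hσ hf.continuousOn hfb
  have hfb_le : ∀ᵐ t, ‖fb t‖ ≤ C := ae_norm_boundary_le hσ hC hfb
  have hsq_le : ∀ᵐ t, ‖fb t‖ ^ 2 ≤ C ^ 2 :=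
    hfb_le.mono fun t ht ↦ pow_le_pow_left₀ (norm_nonneg _) ht 2
  have hfb_int : LocallyIntegrable fb :=
    (memLp_top_of_bound hfb_meas C hfb_le).locallyIntegrable le_top
  have hsq_int : LocallyIntegrable fun t ↦ ‖fb t‖ ^ 2 :=
    (memLp_top_of_bound (hfb_meas.norm.pow 2) (C ^ 2) (by simpa using hsq_le)).locallyIntegrable
      le_top
  exact tsum_norm_sq_le_liminf_mean_norm_sq hω hfb_int hsq_int
    (isCoboundedUnder_ge_mean_of_ae_le hsq_int hsq_le) hcoeff

end

/-- For a bounded analytic function on `Re s > 0` represented by a Dirichlet series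
`∑ aₙ n^{-s}` in some half-plane, with a.e. boundary values `fb` on the imaginary axis,
`liminf_{T→∞} (1/T) ∫_0^T |f(it)|² dt ≥ ∑ |aₙ|²`. -/
theorem liminf_boundary_mean_square_ge (f : ℂ → ℂ) (a : ℕ → ℂ) (σ₀ : ℝ) (fb : ℝ → ℂ)
    (hf : DifferentiableOn ℂ f {s : ℂ | 0 < s.re})
    (hbdd : ∃ C : ℝ, ∀ s : ℂ, 0 < s.re → ‖f s‖ ≤ C)
    (hrep : ∀ s : ℂ, σ₀ < s.re →
      HasSum (fun n : ℕ => a (n + 1) * ((n + 1 : ℕ) : ℂ) ^ (-s)) (f s))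
    (hfb : ∀ᵐ t : ℝ ∂volume,
      Tendsto (fun σ : ℝ => f (σ + t * I)) (nhdsWithin 0 (Set.Ioi 0)) (nhds (fb t))) :
    (∑' n : ℕ, ‖a (n + 1)‖ ^ 2) ≤
      Filter.liminf (fun T : ℝ => (1 / T) * ∫ t in (0:ℝ)..T, ‖fb t‖ ^ 2) atTop := by
  obtain ⟨C, hC⟩ := hbdd
  obtain ⟨σ, hσ⟩ := exists_gt (max σ₀ 0)
  rw [max_lt_iff] at hσ
  refine (liminf_boundary_mean_square_ge_general hσ.2 injective_log_natCast_succ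
    (hf.mono fun s hs ↦ hs.1) (fun s hs ↦ hC s hs.1) (fun t ↦ ?_) hfb).2
  simpa only [natCast_cpow_neg (Nat.succ_ne_zero _)] using hrep (σ + t * I) (by simpa using hσ.1)
end

section
/- Let (a_k)_{k≥1} be a summable sequence of nonnegative reals, let λ_k be the singular measures on T² with Fourier coefficients λ̂_k(m,n) = 1 if m = n and k | m, else 0, and suppose μ is a positive measure on T² with μ ≤ ∑_{k=1}^∞ a_k λ_k. Let L ⊂ T² be the image of the curve t ↦ (e^{-i t log 2}, e^{-i t log 3}). Then the radial Poisson extension satisfies lim_{r→1⁻} Pμ(rτ) = 0 for almost every τ ∈ L with respect to the linear (Hausdorff 1-) measure on L. -/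
open MeasureTheory Filter Complex Real

/-!
Write `Λ = ∑ a_k λ_k`. The off-diagonal Fourier coefficients of `Λ` vanish, so integrating the
product of the Fourier series of two Poisson kernels against `Λ` leaves only the diagonal terms
`r ^ (2|n|) (z₁z₂)⁻ⁿ (w₁w₂)ⁿ`: the Poisson integral of `Λ` at `(r z₁, r z₂)` is the one-variable
Poisson integral, at `r² z₁z₂`, of the image of `Λ` under `w ↦ w₁w₂`. This image is carried by the
roots of unity, hence singular, and Fatou's theorem gives it the radial limit `0` almost everywhere
on the circle. The Kronecker line is not tangent to the fibres of `w ↦ w₁w₂`, so null sets of the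
circle pull back to null sets of the line. Positivity transfers the conclusion to `μ ≤ Λ`.
-/

open ProbabilityTheory
open scoped ENNReal NNReal Topology

/-! ### Fatou's theorem for singular measures on the circle -/

lemma lt_cauchyPDFReal_iff_abs_lt_sqrt {γ : ℝ≥0} {t x : ℝ} (hγ : γ ≠ 0) (ht : 0 < t) :
    t < cauchyPDFReal 0 γ x ↔ |x| < √(γ / (π * t) - γ ^ 2) := by
  have hden : 0 < x ^ 2 + (γ : ℝ) ^ 2 := by positivity
  rw [cauchyPDFReal_def, sub_zero, ← div_eq_mul_inv, lt_div_iff₀ hden, inv_mul_eq_div,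
    lt_div_iff₀ pi_pos, Real.lt_sqrt (abs_nonneg x), sq_abs, lt_sub_iff_add_lt,
    lt_div_iff₀ (by positivity)]
  ring_nf

section

variable {Ω : Type*} [MeasurableSpace Ω] {N : Measure Ω} {g : Ω → ℝ}

lemma lintegral_cauchyPDF_comp_le {ε : ℝ≥0∞} (hg : Measurable g)
    (hN : ∀ s > 0, N {ω | |g ω| < s} ≤ ε * volume (Metric.ball (0 : ℝ) s))
    {γ : ℝ≥0} (hγ : γ ≠ 0) :
    ∫⁻ ω, cauchyPDF 0 γ (g ω) ∂N ≤ ε := by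
  have hnonneg (x : ℝ) : 0 ≤ cauchyPDFReal 0 γ x := (cauchyPDF_pos 0 hγ x).le
  -- The superlevel sets of the Cauchy density are balls, so `hN` applies level by level.
  have hsuper : ∀ t ∈ Set.Ioi (0 : ℝ), N {ω | t < cauchyPDFReal 0 γ (g ω)} ≤
      ε * volume {x : ℝ | t < cauchyPDFReal 0 γ x} := fun t ht => by
    simp only [lt_cauchyPDFReal_iff_abs_lt_sqrt hγ ht]
    rcases (Real.sqrt_nonneg (γ / (π * t) - γ ^ 2)).eq_or_lt with hs | hs
    · simp [← hs, (abs_nonneg _).not_gt]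
    · simpa [Metric.ball, Real.dist_eq] using hN _ hs
  calc ∫⁻ ω, cauchyPDF 0 γ (g ω) ∂N
      = ∫⁻ t in Set.Ioi 0, N {ω | t < cauchyPDFReal 0 γ (g ω)} :=
        lintegral_eq_lintegral_meas_lt N (ae_of_all _ fun _ => hnonneg _)
          ((measurable_cauchyPDFReal 0 γ).comp hg).aemeasurable
    _ ≤ ∫⁻ t in Set.Ioi 0, ε * volume {x : ℝ | t < cauchyPDFReal 0 γ x} :=
        setLIntegral_mono' measurableSet_Ioi hsuper
    _ = ε * ∫⁻ x : ℝ, cauchyPDF 0 γ x := by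
        have hanti : Antitone fun t : ℝ => volume {x : ℝ | t < cauchyPDFReal 0 γ x} :=
          fun _ _ hst => measure_mono fun _ hx => hst.trans_lt hx
        rw [lintegral_const_mul _ hanti.measurable]
        exact congrArg (ε * ·) (lintegral_eq_lintegral_meas_lt volume
          (ae_of_all _ hnonneg) (measurable_cauchyPDFReal 0 γ).aemeasurable).symm
    _ = ε := by rw [lintegral_cauchyPDF_eq_one 0 hγ, mul_one]

lemma cauchyPDF_le_of_le_abs {γ : ℝ≥0} {δ x : ℝ} (hδ : 0 < δ) (hx : δ ≤ |x|) :
    cauchyPDF 0 γ x ≤ ENNReal.ofReal (γ / (π * δ ^ 2)) := by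
  have hsq : δ ^ 2 ≤ x ^ 2 := by rw [← sq_abs x]; gcongr
  rw [cauchyPDF_def, cauchyPDFReal_def, sub_zero, ← div_eq_mul_inv, inv_mul_eq_div, div_div]
  gcongr
  linarith [sq_nonneg (γ : ℝ)]

lemma lintegral_cauchyPDF_comp_le_add {ε : ℝ≥0∞} {δ : ℝ} (hg : Measurable g) (hδ : 0 < δ)
    (hN : ∀ s ∈ Set.Ioc 0 δ, N {ω | |g ω| < s} ≤ ε * volume (Metric.ball (0 : ℝ) s))
    {γ : ℝ≥0} (hγ : γ ≠ 0) :
    ∫⁻ ω, cauchyPDF 0 γ (g ω) ∂N ≤ ε + ENNReal.ofReal (γ / (π * δ ^ 2)) * N Set.univ := by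
  set near : Set Ω := {ω | |g ω| < δ}
  have hnear : MeasurableSet near := measurableSet_lt hg.abs measurable_const
  rw [← lintegral_add_compl _ hnear]
  gcongr ?_ + ?_
  · refine lintegral_cauchyPDF_comp_le hg (fun s hs => ?_) hγ
    rcases le_total s δ with hsδ | hδs
    · exact (Measure.restrict_apply_le _ _).trans (hN s ⟨hs, hsδ⟩)
    · calc N.restrict near {ω | |g ω| < s} ≤ N.restrict near Set.univ := by gcongr; simp
        _ = N near := Measure.restrict_apply_univ near
        _ ≤ ε * volume (Metric.ball (0 : ℝ) δ) := hN δ ⟨hδ, le_rfl⟩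
        _ ≤ ε * volume (Metric.ball (0 : ℝ) s) := by gcongr
  · calc ∫⁻ ω in nearᶜ, cauchyPDF 0 γ (g ω) ∂N
        ≤ ∫⁻ _ in nearᶜ, ENNReal.ofReal (γ / (π * δ ^ 2)) ∂N :=
          setLIntegral_mono' hnear.compl fun _ hω => cauchyPDF_le_of_le_abs hδ (not_lt.1 hω)
      _ = ENNReal.ofReal (γ / (π * δ ^ 2)) * N nearᶜ := setLIntegral_const _ _
      _ ≤ ENNReal.ofReal (γ / (π * δ ^ 2)) * N Set.univ := by gcongr; simp

lemma tendsto_lintegral_cauchyPDF_comp_zero [IsFiniteMeasure N] (hg : Measurable g)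
    (hN : Tendsto (fun s => N {ω | |g ω| < s} / volume (Metric.ball (0 : ℝ) s)) (𝓝[>] 0) (𝓝 0)) :
    Tendsto (fun γ : ℝ≥0 => ∫⁻ ω, cauchyPDF 0 γ (g ω) ∂N) (𝓝[≠] 0) (𝓝 0) := by
  refine ENNReal.tendsto_nhds_zero.2 fun ε hε => ?_
  have hε2 : 0 < ε / 2 := ENNReal.half_pos hε.ne'
  obtain ⟨δ, hδ : 0 < δ, hsmall⟩ :=
    mem_nhdsGT_iff_exists_Ioc_subset.1 (ENNReal.tendsto_nhds_zero.1 hN (ε / 2) hε2)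
  have hdensity : ∀ s ∈ Set.Ioc 0 δ,
      N {ω | |g ω| < s} ≤ ε / 2 * volume (Metric.ball (0 : ℝ) s) := fun s hs =>
    (ENNReal.div_le_iff (Metric.measure_ball_pos volume 0 hs.1).ne' measure_ball_lt_top.ne).1
      (hsmall hs)
  have htail : Tendsto (fun γ : ℝ≥0 => ENNReal.ofReal (γ / (π * δ ^ 2)) * N Set.univ)
      (𝓝[≠] 0) (𝓝 0) := by
    have hcont : Continuous fun γ : ℝ≥0 => ENNReal.ofReal (γ / (π * δ ^ 2)) * N Set.univ :=
      (ENNReal.continuous_mul_const (measure_ne_top N _)).comp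
        (ENNReal.continuous_ofReal.comp (by fun_prop))
    simpa using (hcont.tendsto 0).mono_left nhdsWithin_le_nhds
  filter_upwards [ENNReal.tendsto_nhds_zero.1 htail (ε / 2) hε2, self_mem_nhdsWithin]
    with γ htailγ hγ
  calc ∫⁻ ω, cauchyPDF 0 γ (g ω) ∂N
      ≤ ε / 2 + ENNReal.ofReal (γ / (π * δ ^ 2)) * N Set.univ :=
        lintegral_cauchyPDF_comp_le_add hg hδ hdensity hγ
    _ ≤ ε / 2 + ε / 2 := by gcongr
    _ = ε := ENNReal.add_halves ε

end

lemma exists_coe_eq_and_abs_eq_norm {T : ℝ} (x : AddCircle T) :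
    ∃ u : ℝ, (u : AddCircle T) = x ∧ |u| = ‖x‖ := by
  obtain ⟨v, rfl⟩ := QuotientAddGroup.mk_surjective x
  refine ⟨v - round (T⁻¹ * v) * T, ?_, (AddCircle.norm_eq T).symm⟩
  simp [← zsmul_eq_mul, AddCircle.coe_period]

lemma four_mul_norm_le_mul_norm_toCircle_sub_one {T : ℝ} (hT : 0 < T) (x : AddCircle T) :
    4 * ‖x‖ ≤ T * ‖(x.toCircle : ℂ) - 1‖ := by
  obtain ⟨u, rfl, hu⟩ := exists_coe_eq_and_abs_eq_norm x
  have hhalf : |u| ≤ T / 2 := by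
    simpa [hu, abs_of_pos hT] using AddCircle.norm_le_half_period T (x := (u : AddCircle T)) hT.ne'
  have hangle : |π / T * u| = π / T * |u| := by rw [abs_mul, abs_of_pos (by positivity)]
  have hsin : 2 / π * |π / T * u| ≤ |Real.sin (π / T * u)| := by
    refine Real.mul_abs_le_abs_sin ?_
    calc |π / T * u| ≤ π / T * (T / 2) := by rw [hangle]; gcongr
      _ = π / 2 := by field_simp
  have hchord : ‖(AddCircle.toCircle (u : AddCircle T) : ℂ) - 1‖ = 2 * |Real.sin (π / T * u)| := by
    rw [AddCircle.toCircle_apply_mk, Circle.coe_exp, mul_comm _ I, norm_exp_I_mul_ofReal_sub_one,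
      norm_mul, Real.norm_two, Real.norm_eq_abs]
    ring_nf
  calc 4 * ‖(u : AddCircle T)‖ = T * (2 * (2 / π * |π / T * u|)) := by
        rw [hangle, hu]; field_simp; ring
    _ ≤ T * ‖(AddCircle.toCircle (u : AddCircle T) : ℂ) - 1‖ := by rw [hchord]; gcongr

lemma four_mul_dist_le_mul_norm_toCircle_sub {T : ℝ} (hT : 0 < T) (x y : AddCircle T) :
    4 * dist x y ≤ T * ‖(x.toCircle : ℂ) - y.toCircle‖ := by
  have hfactor : (x.toCircle : ℂ) - y.toCircle = y.toCircle * ((x - y).toCircle - 1) := by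
    rw [mul_sub_one, ← Circle.coe_mul, ← AddCircle.toCircle_add, add_sub_cancel]
  rw [dist_eq_norm, hfactor, norm_mul, Circle.norm_coe, one_mul]
  exact four_mul_norm_le_mul_norm_toCircle_sub_one hT _

lemma ae_tendsto_measure_closedBall_div_of_mutuallySingular {X : Type*} [PseudoMetricSpace X]
    [MeasurableSpace X] [SecondCountableTopology X] [BorelSpace X] {μ ν : Measure X}
    [IsUnifLocDoublingMeasure μ] [IsLocallyFiniteMeasure μ] [IsLocallyFiniteMeasure ν]
    (h : ν ⟂ₘ μ) :
    ∀ᵐ x ∂μ, Tendsto (fun s => ν (Metric.closedBall x s) / μ (Metric.closedBall x s))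
      (𝓝[>] 0) (𝓝 0) := by
  filter_upwards [(IsUnifLocDoublingMeasure.vitaliFamily μ
    1).ae_eventually_measure_zero_of_singular h] with x hx
  refine hx.comp (IsUnifLocDoublingMeasure.tendsto_closedBall_filterAt μ _ _ tendsto_id ?_)
  filter_upwards [self_mem_nhdsWithin] with s (hs : 0 < s)
  exact Metric.mem_closedBall_self (by simpa using hs.le)

section

variable {ρ : ℝ} {z w : ℂ}

lemma poissonKernel_zero_left (hw : ‖w‖ = 1) (hz : ‖z‖ = 1) :
    poissonKernel 0 (ρ * z) w = (1 - ρ ^ 2) / ‖w - ρ * z‖ ^ 2 := by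
  simp [poissonKernel_def, hz, hw]

lemma norm_one_sub_mul_conj (hw : ‖w‖ = 1) :
    ‖1 - ρ * (z * (starRingEnd ℂ) w)‖ = ‖w - ρ * z‖ := by
  have hw0 : w ≠ 0 := norm_ne_zero_iff.1 (by simp [hw])
  have hfactor : w - ρ * z = w * (1 - ρ * (z * (starRingEnd ℂ) w)) := by
    rw [← Complex.inv_eq_conj hw]
    field_simp
  rw [hfactor, norm_mul, hw, one_mul]

lemma norm_sub_ofReal_mul_sq (hz : ‖z‖ = 1) (hw : ‖w‖ = 1) :
    ‖w - ρ * z‖ ^ 2 = (1 - ρ) ^ 2 + ρ * ‖z - w‖ ^ 2 := by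
  have hz2 := hz ▸ Complex.normSq_eq_norm_sq z
  have hw2 := hw ▸ Complex.normSq_eq_norm_sq w
  simp only [← Complex.normSq_eq_norm_sq, Complex.normSq_apply, sub_re, sub_im, re_ofReal_mul,
    im_ofReal_mul] at *
  linear_combination (ρ ^ 2 - ρ) * hz2 + (1 - ρ) * hw2

lemma poissonKernel_nonneg (hz : ‖z‖ = 1) (hw : ‖w‖ = 1) (hρ : |ρ| ≤ 1) :
    0 ≤ poissonKernel 0 (ρ * z) w := by
  rw [poissonKernel_zero_left hw hz]
  exact div_nonneg (sub_nonneg.2 ((sq_le_one_iff_abs_le_one ρ).2 hρ)) (sq_nonneg _)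

lemma poissonKernel_le (hz : ‖z‖ = 1) (hw : ‖w‖ = 1) (hρ : |ρ| < 1) :
    poissonKernel 0 (ρ * z) w ≤ (1 + |ρ|) / (1 - |ρ|) := by
  have hpos : 0 < 1 - |ρ| := sub_pos.2 hρ
  have hdist : 1 - |ρ| ≤ ‖w - ρ * z‖ := by
    simpa [hz, hw] using norm_sub_norm_le w (ρ * z)
  calc poissonKernel 0 (ρ * z) w
      = (1 + |ρ|) * (1 - |ρ|) / ‖w - ρ * z‖ ^ 2 := by
        rw [poissonKernel_zero_left hw hz, ← sq_abs ρ]; ring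
    _ ≤ (1 + |ρ|) * (1 - |ρ|) / (1 - |ρ|) ^ 2 := by gcongr
    _ = (1 + |ρ|) / (1 - |ρ|) := by field_simp

lemma poissonKernel_le_cauchyPDFReal (hz : ‖z‖ = 1) (hw : ‖w‖ = 1) (hρ : 1 / 2 ≤ ρ) (hρ1 : ρ < 1) :
    poissonKernel 0 (ρ * z) w ≤ 4 * π * cauchyPDFReal 0 (1 - ρ).toNNReal ‖z - w‖ := by
  have hγ : 0 < 1 - ρ := sub_pos.2 hρ1
  rw [poissonKernel_zero_left hw hz, norm_sub_ofReal_mul_sq hz hw, cauchyPDFReal_def, sub_zero,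
    Real.coe_toNNReal _ hγ.le]
  calc (1 - ρ ^ 2) / ((1 - ρ) ^ 2 + ρ * ‖z - w‖ ^ 2)
      ≤ 2 * (1 - ρ) / ((‖z - w‖ ^ 2 + (1 - ρ) ^ 2) / 2) := by
        gcongr <;> nlinarith [sq_nonneg ‖z - w‖]
    _ = 4 * π * (π⁻¹ * (1 - ρ) * (‖z - w‖ ^ 2 + (1 - ρ) ^ 2)⁻¹) := by
        field_simp [pi_pos.ne']
        ring

end

section

variable {T : ℝ} [hT : Fact (0 < T)] {ν : Measure (AddCircle T)}

lemma tendsto_measure_chord_lt_div {x : AddCircle T}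
    (hx : Tendsto (fun s => ν (Metric.closedBall x s) / volume (Metric.closedBall x s))
      (𝓝[>] 0) (𝓝 0)) :
    Tendsto (fun s => ν {y | ‖(x.toCircle : ℂ) - y.toCircle‖ < s} / volume (Metric.ball (0 : ℝ) s))
      (𝓝[>] 0) (𝓝 0) := by
  have hT0 : 0 < T := hT.out
  have hscale : Tendsto (fun s => T / 4 * s) (𝓝[>] 0) (𝓝[>] 0) := by
    simpa using TendstoNhdsWithinIoi.const_mul (b := T / 4) (c := 0) (f := id) (by positivity)
      tendsto_id
  have hlim := ENNReal.Tendsto.const_mul (a := ENNReal.ofReal (T / 4)) (hx.comp hscale)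
    (.inr ENNReal.ofReal_ne_top)
  rw [mul_zero] at hlim
  refine tendsto_of_tendsto_of_tendsto_of_le_of_le tendsto_const_nhds hlim (fun _ => zero_le)
    fun s => ?_
  have hsubset : {y | ‖(x.toCircle : ℂ) - y.toCircle‖ < s} ⊆ Metric.closedBall x (T / 4 * s) :=
    fun y (hy : _ < s) => by
      rw [Metric.mem_closedBall']
      nlinarith [four_mul_dist_le_mul_norm_toCircle_sub hT0 x y]
  have hvolume : volume (Metric.closedBall x (T / 4 * s)) ≤
      ENNReal.ofReal (T / 4) * volume (Metric.ball (0 : ℝ) s) := by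
    rw [AddCircle.volume_closedBall, Real.volume_ball, ← ENNReal.ofReal_mul (by positivity)]
    exact ENNReal.ofReal_le_ofReal ((min_le_right _ _).trans_eq (by ring))
  calc ν {y | ‖(x.toCircle : ℂ) - y.toCircle‖ < s} / volume (Metric.ball (0 : ℝ) s)
      ≤ ν (Metric.closedBall x (T / 4 * s)) / volume (Metric.ball (0 : ℝ) s) := by gcongr
    _ = ENNReal.ofReal (T / 4) * (ν (Metric.closedBall x (T / 4 * s)) /
          (ENNReal.ofReal (T / 4) * volume (Metric.ball (0 : ℝ) s))) := by
        rw [← mul_div_assoc, ENNReal.mul_div_mul_left _ _ (by simpa) ENNReal.ofReal_ne_top]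
    _ ≤ ENNReal.ofReal (T / 4) * (ν (Metric.closedBall x (T / 4 * s)) /
          volume (Metric.closedBall x (T / 4 * s))) := by gcongr

theorem ae_tendsto_integral_poissonKernel_of_mutuallySingular [IsFiniteMeasure ν]
    (hν : ν ⟂ₘ volume) :
    ∀ᵐ x : AddCircle T, Tendsto
      (fun ρ : ℝ => ∫ y : AddCircle T, poissonKernel 0 (ρ * x.toCircle) y.toCircle ∂ν)
      (𝓝[<] 1) (𝓝 0) := by
  filter_upwards [ae_tendsto_measure_closedBall_div_of_mutuallySingular hν] with x hx
  set chord : AddCircle T → ℝ := fun y => ‖(x.toCircle : ℂ) - y.toCircle‖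
  have hchord : Measurable chord := by
    have : Continuous chord := by fun_prop
    exact this.measurable
  have hcauchy : Tendsto (fun ρ : ℝ => ENNReal.ofReal (4 * π) *
      ∫⁻ y, cauchyPDF 0 (1 - ρ).toNNReal (chord y) ∂ν) (𝓝[<] 1) (𝓝 0) := by
    have hγ : Tendsto (fun ρ : ℝ => (1 - ρ).toNNReal) (𝓝[<] 1) (𝓝[≠] 0) := by
      refine tendsto_nhdsWithin_iff.2 ⟨?_, ?_⟩
      · have : Continuous fun ρ : ℝ => (1 - ρ).toNNReal := by fun_prop
        simpa using (this.tendsto 1).mono_left nhdsWithin_le_nhds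
      · filter_upwards [self_mem_nhdsWithin] with ρ (hρ : ρ < 1)
        simpa using hρ
    have hdensity := tendsto_lintegral_cauchyPDF_comp_zero hchord
      (by simpa [chord] using tendsto_measure_chord_lt_div hx)
    simpa using ENNReal.Tendsto.const_mul (a := ENNReal.ofReal (4 * π)) (hdensity.comp hγ)
      (.inr ENNReal.ofReal_ne_top)
  rw [tendsto_zero_iff_enorm_tendsto_zero]
  refine tendsto_of_tendsto_of_tendsto_of_le_of_le' tendsto_const_nhds hcauchy
    (.of_forall fun _ => zero_le) ?_
  filter_upwards [Ico_mem_nhdsLT (by norm_num : (1 / 2 : ℝ) < 1)] with ρ hρ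
  calc ‖∫ y : AddCircle T, poissonKernel 0 (ρ * x.toCircle) y.toCircle ∂ν‖ₑ
      ≤ ∫⁻ y : AddCircle T, ‖poissonKernel 0 (ρ * x.toCircle) y.toCircle‖ₑ ∂ν :=
        enorm_integral_le_lintegral_enorm _
    _ ≤ ∫⁻ y, ENNReal.ofReal (4 * π) * cauchyPDF 0 (1 - ρ).toNNReal (chord y) ∂ν := by
        gcongr with y
        have hρ_abs : |ρ| ≤ 1 := abs_le.2 ⟨by linarith [hρ.1], hρ.2.le⟩
        rw [Real.enorm_of_nonneg (poissonKernel_nonneg (Circle.norm_coe _) (Circle.norm_coe _)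
          hρ_abs), cauchyPDF_def, ← ENNReal.ofReal_mul (by positivity)]
        exact ENNReal.ofReal_le_ofReal (poissonKernel_le_cauchyPDFReal (Circle.norm_coe _)
          (Circle.norm_coe _) hρ.1 hρ.2)
    _ = ENNReal.ofReal (4 * π) * ∫⁻ y, cauchyPDF 0 (1 - ρ).toNNReal (chord y) ∂ν :=
        lintegral_const_mul _ ((measurable_cauchyPDF 0 _).comp hchord)

end

/-! ### Fourier expansion of Poisson integrals -/

lemma hasSum_pow_natAbs_mul_zpow {K : Type*} [NormedField K] {r q : K} (hq : q ≠ 0)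
    (hrq : ‖r * q‖ < 1) (hrq' : ‖r * q⁻¹‖ < 1) :
    HasSum (fun n : ℤ => r ^ n.natAbs * q ^ n) ((1 - r ^ 2) / ((1 - r * q) * (1 - r * q⁻¹))) := by
  have hne : 1 - r * q ≠ 0 := sub_ne_zero.2 fun h => by simp [← h] at hrq
  have hne' : 1 - r * q⁻¹ ≠ 0 := sub_ne_zero.2 fun h => by simp [← h] at hrq'
  have hpos : HasSum (fun n : ℕ => r ^ (n : ℤ).natAbs * q ^ (n : ℤ)) (1 - r * q)⁻¹ := by
    simpa [mul_pow] using hasSum_geometric_of_norm_lt_one hrq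
  have hneg : HasSum (fun n : ℕ => r ^ (-((n : ℤ) + 1)).natAbs * q ^ (-((n : ℤ) + 1)))
      (r * q⁻¹ * (1 - r * q⁻¹)⁻¹) := by
    refine ((hasSum_geometric_of_norm_lt_one hrq').mul_left (r * q⁻¹)).congr_fun fun n => ?_
    have hn : (-((n : ℤ) + 1)).natAbs = n + 1 := by omega
    rw [hn, zpow_neg, ← inv_zpow, ← pow_succ', mul_pow]
    norm_cast
  convert! HasSum.of_nat_of_neg_add_one (f := fun n : ℤ => r ^ n.natAbs * q ^ n) hpos hneg using 1
  have hq' : q * q⁻¹ = 1 := mul_inv_cancel₀ hq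
  generalize q⁻¹ = p at *
  field_simp
  linear_combination r ^ 2 * hq'

lemma summable_pow_natAbs {r : ℝ} (hr : |r| < 1) : Summable fun n : ℤ => r ^ n.natAbs := by
  simpa using (hasSum_pow_natAbs_mul_zpow (r := r) one_ne_zero (by simpa) (by simpa)).summable

lemma hasSum_poissonKernel {r : ℝ} {z w : ℂ} (hr : |r| < 1) (hz : ‖z‖ = 1) (hw : ‖w‖ = 1) :
    HasSum (fun n : ℤ => (r : ℂ) ^ n.natAbs * z ^ (-n) * w ^ n)
      (poissonKernel 0 (r * z) w : ℂ) := by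
  have hz0 : z ≠ 0 := norm_ne_zero_iff.1 (by simp [hz])
  have hw0 : w ≠ 0 := norm_ne_zero_iff.1 (by simp [hw])
  have hnorm : ((‖w - r * z‖ ^ 2 : ℝ) : ℂ) = (1 - r * (z⁻¹ * w)) * (1 - r * (z⁻¹ * w)⁻¹) := by
    rw [← Complex.normSq_eq_norm_sq, Complex.normSq_eq_conj_mul_self, map_sub, map_mul,
      conj_ofReal, ← Complex.inv_eq_conj hz, ← Complex.inv_eq_conj hw]
    field_simp
  rw [poissonKernel_zero_left hw hz, ofReal_div, hnorm]
  push_cast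
  refine (hasSum_pow_natAbs_mul_zpow (mul_ne_zero (inv_ne_zero hz0) hw0) (by simpa [hz, hw])
    (by simpa [hz, hw])).congr_fun fun n => ?_
  rw [mul_zpow, inv_zpow', mul_assoc]

section

variable {Ω : Type*} [MeasurableSpace Ω] {Λ : Measure Ω} [IsFiniteMeasure Λ] {φ ψ : Ω → ℂ}
  {r : ℝ} {z z₁ z₂ : ℂ}

lemma hasSum_integral_of_norm_le_summable {ι E : Type*} [Countable ι] [NormedAddCommGroup E]
    [NormedSpace ℝ E] {F : ι → Ω → E} {f : Ω → E} {b : ι → ℝ}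
    (hFm : ∀ i, AEStronglyMeasurable (F i) Λ) (hb : Summable b)
    (hFb : ∀ᵐ ω ∂Λ, ∀ i, ‖F i ω‖ ≤ b i) (hf : ∀ᵐ ω ∂Λ, HasSum (fun i => F i ω) (f ω)) :
    HasSum (fun i => ∫ ω, F i ω ∂Λ) (∫ ω, f ω ∂Λ) :=
  hasSum_integral_of_dominated_convergence (fun i _ => b i) hFm (ae_all_iff.1 hFb)
    (.of_forall fun _ => hb) (integrable_const _) hf

lemma integrable_zpow_mul_zpow (hφ : Measurable φ) (hφ1 : ∀ᵐ ω ∂Λ, ‖φ ω‖ = 1)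
    (hψ : Measurable ψ) (hψ1 : ∀ᵐ ω ∂Λ, ‖ψ ω‖ = 1) (m n : ℤ) :
    Integrable (fun ω => φ ω ^ m * ψ ω ^ n) Λ := by
  refine .of_bound (by fun_prop) 1 ?_
  filter_upwards [hφ1, hψ1] with ω hφω hψω
  simp [hφω, hψω]

lemma hasSum_integral_poissonKernel (hφ : Measurable φ) (hφ1 : ∀ᵐ ω ∂Λ, ‖φ ω‖ = 1)
    (hr : |r| < 1) (hz : ‖z‖ = 1) :
    HasSum (fun n : ℤ => (r : ℂ) ^ n.natAbs * z ^ (-n) * ∫ ω, φ ω ^ n ∂Λ)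
      (∫ ω, (poissonKernel 0 (r * z) (φ ω) : ℂ) ∂Λ) := by
  simp_rw [← integral_const_mul]
  refine hasSum_integral_of_norm_le_summable
    (fun n => (by fun_prop : Measurable _).aestronglyMeasurable)
    (summable_pow_natAbs (r := |r|) (by simpa)) ?_ ?_
  · filter_upwards [hφ1] with ω hω n
    simp [hω, hz]
  · filter_upwards [hφ1] with ω hω
    exact hasSum_poissonKernel hr hz hω

lemma hasSum_integral_poissonKernel_mul (hφ : Measurable φ) (hφ1 : ∀ᵐ ω ∂Λ, ‖φ ω‖ = 1)
    (hψ : Measurable ψ) (hψ1 : ∀ᵐ ω ∂Λ, ‖ψ ω‖ = 1)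
    (hr : |r| < 1) (hz₁ : ‖z₁‖ = 1) (hz₂ : ‖z₂‖ = 1) :
    HasSum (fun p : ℤ × ℤ => (r : ℂ) ^ p.1.natAbs * z₁ ^ (-p.1) *
        ((r : ℂ) ^ p.2.natAbs * z₂ ^ (-p.2)) * ∫ ω, φ ω ^ p.1 * ψ ω ^ p.2 ∂Λ)
      (∫ ω, (poissonKernel 0 (r * z₁) (φ ω) : ℂ) * poissonKernel 0 (r * z₂) (ψ ω) ∂Λ) := by
  have hr' : Summable fun n : ℤ => |r| ^ n.natAbs := summable_pow_natAbs (by simpa)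
  simp_rw [← integral_const_mul]
  refine hasSum_integral_of_norm_le_summable
    (fun p => (by fun_prop : Measurable _).aestronglyMeasurable)
    (hr'.mul_of_nonneg hr' (fun _ => by positivity) fun _ => by positivity) ?_ ?_
  · filter_upwards [hφ1, hψ1] with ω hφω hψω p
    simp [hφω, hψω, hz₁, hz₂]
  · filter_upwards [hφ1, hψ1] with ω hφω hψω
    have h₁ := hasSum_poissonKernel hr hz₁ hφω
    have h₂ := hasSum_poissonKernel hr hz₂ hψω
    have hsummable := summable_mul_of_summable_norm h₁.summable.norm h₂.summable.norm
    exact (h₁.mul h₂ hsummable).congr_fun fun p => by ring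

end

/-- A measure on `ℂ × ℂ` carried by the torus `|w₁| = |w₂| = 1` whose Fourier coefficients vanish
off the diagonal, that is, which is invariant under the translations `(w₁, w₂) ↦ (ζ w₁, ζ⁻¹ w₂)`. -/
structure HasDiagonalSpectrum (Λ : Measure (ℂ × ℂ)) : Prop where
  ae_norm_fst : ∀ᵐ w ∂Λ, ‖w.1‖ = 1
  ae_norm_snd : ∀ᵐ w ∂Λ, ‖w.2‖ = 1
  integral_zpow_mul_zpow : ∀ m n : ℤ, m ≠ n → ∫ w, w.1 ^ m * w.2 ^ n ∂Λ = 0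

namespace HasDiagonalSpectrum

variable {Λ : Measure (ℂ × ℂ)}

lemma ae_norm_mul (hΛ : HasDiagonalSpectrum Λ) : ∀ᵐ w ∂Λ, ‖w.1 * w.2‖ = 1 := by
  filter_upwards [hΛ.ae_norm_fst, hΛ.ae_norm_snd] with w hw₁ hw₂
  rw [norm_mul, hw₁, hw₂, one_mul]

lemma integral_poissonKernel_mul [IsFiniteMeasure Λ] (hΛ : HasDiagonalSpectrum Λ) {r : ℝ}
    {z₁ z₂ : ℂ} (hr : |r| < 1) (hz₁ : ‖z₁‖ = 1) (hz₂ : ‖z₂‖ = 1) :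
    ∫ w, poissonKernel 0 (r * z₁) w.1 * poissonKernel 0 (r * z₂) w.2 ∂Λ =
      ∫ w, poissonKernel 0 ((r ^ 2 : ℝ) * (z₁ * z₂)) (w.1 * w.2) ∂Λ := by
  have htorus := hasSum_integral_poissonKernel_mul measurable_fst hΛ.ae_norm_fst measurable_snd
    hΛ.ae_norm_snd hr hz₁ hz₂
  have hcircle := hasSum_integral_poissonKernel (φ := fun w : ℂ × ℂ => w.1 * w.2) (by fun_prop)
    hΛ.ae_norm_mul (r := r ^ 2) (by simpa) (z := z₁ * z₂) (by simp [hz₁, hz₂])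
  have hinj : Function.Injective fun n : ℤ => (n, n) := fun _ _ h => congrArg Prod.fst h
  have hoff : ∀ p ∉ Set.range fun n : ℤ => (n, n), ∫ w : ℂ × ℂ, w.1 ^ p.1 * w.2 ^ p.2 ∂Λ = 0 :=
    fun p hp => hΛ.integral_zpow_mul_zpow _ _ fun h => hp ⟨p.1, Prod.ext rfl h⟩
  have hdiag := (hinj.hasSum_iff fun p hp => by rw [hoff p hp, mul_zero]).2 htorus
  refine ofReal_injective ?_
  rw [← integral_complex_ofReal, ← integral_complex_ofReal]
  simp only [ofReal_mul]
  refine hdiag.unique (hcircle.congr_fun fun n => ?_)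
  simp only [Function.comp_apply, mul_zpow, ofReal_pow]
  ring

lemma smul (hΛ : HasDiagonalSpectrum Λ) (c : ℝ≥0∞) : HasDiagonalSpectrum (c • Λ) where
  ae_norm_fst := Measure.ae_smul_measure hΛ.ae_norm_fst c
  ae_norm_snd := Measure.ae_smul_measure hΛ.ae_norm_snd c
  integral_zpow_mul_zpow m n hmn := by
    rw [integral_smul_measure, hΛ.integral_zpow_mul_zpow m n hmn, smul_zero]

lemma sum {ι : Type*} [Countable ι] {lam : ι → Measure (ℂ × ℂ)} [IsFiniteMeasure (Measure.sum lam)]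
    (h : ∀ i, HasDiagonalSpectrum (lam i)) : HasDiagonalSpectrum (Measure.sum lam) where
  ae_norm_fst := Measure.ae_sum_iff.2 fun i => (h i).ae_norm_fst
  ae_norm_snd := Measure.ae_sum_iff.2 fun i => (h i).ae_norm_snd
  integral_zpow_mul_zpow m n hmn := by
    have hint := integrable_zpow_mul_zpow measurable_fst
      (Measure.ae_sum_iff.2 fun i => (h i).ae_norm_fst) measurable_snd
      (Measure.ae_sum_iff.2 fun i => (h i).ae_norm_snd) m n
    rw [integral_sum_measure hint]
    simp [(h _).integral_zpow_mul_zpow m n hmn]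

end HasDiagonalSpectrum

/-! ### The angle of `w₁w₂` -/

lemma countable_setOf_isOfFinAddOrder (T : ℝ) :
    {x : AddCircle T | IsOfFinAddOrder x}.Countable := by
  refine (Set.countable_iUnion fun n : ℕ =>
    (AddCircle.finite_setOfPred_addOrderOf_eq T n.succ_pos).countable).mono fun x hx => ?_
  exact Set.mem_iUnion.2 ⟨addOrderOf x - 1, (Nat.succ_pred_eq_of_pos hx.addOrderOf_pos).symm⟩

section

variable {T : ℝ} [hT : Fact (0 < T)]

lemma volume_eq_zero_of_countable {s : Set (AddCircle T)} (hs : s.Countable) : volume s = 0 := by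
  have hatomless (x : AddCircle T) : volume {x} = 0 := by
    simpa [hT.out.le] using AddCircle.volume_closedBall T (x := x) 0
  rw [← Set.biUnion_of_singleton s]
  exact (measure_biUnion_null_iff hs).2 fun x _ => hatomless x

lemma quasiMeasurePreserving_coe_mul_left {c : ℝ} (hc : c ≠ 0) :
    Measure.QuasiMeasurePreserving fun t : ℝ => ((c * t : ℝ) : AddCircle T) := by
  have hcoe : Measure.QuasiMeasurePreserving ((↑) : ℝ → AddCircle T) := by
    refine ⟨AddCircle.measurable_mk', ?_⟩
    rw [← (AddCircle.measurePreserving_mk T 0).map_eq]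
    exact (isAddFundamentalDomain_Ioc' hT.out 0).absolutelyContinuous_map
  refine hcoe.comp ⟨by fun_prop, ?_⟩
  rw [Real.map_volume_mul_left hc]
  exact Measure.smul_absolutelyContinuous

end

local instance : Fact (0 < 2 * π) := ⟨Real.two_pi_pos⟩

lemma toCircle_coe_arg {z : ℂ} (hz : ‖z‖ = 1) :
    (AddCircle.toCircle (z.arg : AddCircle (2 * π)) : ℂ) = z := by
  rw [AddCircle.toCircle_apply_mk, div_self (by positivity), one_mul, Circle.coe_exp]
  simpa [hz] using norm_mul_exp_arg_mul_I z

lemma isOfFinAddOrder_coe_arg {z : ℂ} (hz : IsOfFinOrder z) :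
    IsOfFinAddOrder (z.arg : AddCircle (2 * π)) := by
  obtain ⟨n, hn, hzn⟩ := isOfFinOrder_iff_pow_eq_one.1 hz
  refine isOfFinAddOrder_iff_nsmul_eq_zero.2
    ⟨n, hn, AddCircle.injective_toCircle (by positivity) (Circle.ext ?_)⟩
  rw [AddCircle.toCircle_nsmul, Circle.coe_pow, toCircle_coe_arg hz.norm_eq_one, hzn]
  simp

lemma tendsto_sq_nhdsLT_one : Tendsto (fun r : ℝ => r ^ 2) (𝓝[<] 1) (𝓝[<] 1) := by
  refine tendsto_nhdsWithin_iff.2 ⟨?_, ?_⟩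
  · simpa using ((continuous_pow 2).tendsto (1 : ℝ)).mono_left nhdsWithin_le_nhds
  · filter_upwards [Ico_mem_nhdsLT (zero_lt_one (α := ℝ))] with r hr
    exact pow_lt_one₀ hr.1 hr.2 two_ne_zero

/-- The push-forward of `Λ` to the circle `ℝ / 2πℤ` under the angle of `w₁w₂`. On the torus this
map is the quotient by the translations `(w₁, w₂) ↦ (ζ w₁, ζ⁻¹ w₂)`. -/
noncomputable def angleDistribution (Λ : Measure (ℂ × ℂ)) : Measure (AddCircle (2 * π)) :=
  Λ.map fun w => (arg (w.1 * w.2) : AddCircle (2 * π))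

section

variable {Λ : Measure (ℂ × ℂ)}

lemma measurable_coe_arg_mul :
    Measurable fun w : ℂ × ℂ => (arg (w.1 * w.2) : AddCircle (2 * π)) :=
  AddCircle.measurable_mk'.comp (measurable_arg.comp (measurable_fst.mul measurable_snd))

instance [IsFiniteMeasure Λ] : IsFiniteMeasure (angleDistribution Λ) :=
  Measure.isFiniteMeasure_map Λ _

lemma angleDistribution_mutuallySingular (hΛ : ∀ᵐ w ∂Λ, IsOfFinOrder (w.1 * w.2)) :
    angleDistribution Λ ⟂ₘ volume := by
  have hcountable := countable_setOf_isOfFinAddOrder (2 * π)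
  have htorsion : ∀ᵐ x ∂angleDistribution Λ, IsOfFinAddOrder x :=
    (ae_map_iff measurable_coe_arg_mul.aemeasurable hcountable.measurableSet).2
      (hΛ.mono fun _ => isOfFinAddOrder_coe_arg)
  exact .mk htorsion (volume_eq_zero_of_countable hcountable) fun x _ =>
    (em (IsOfFinAddOrder x)).symm

lemma integral_angleDistribution {f : ℂ → ℝ} (hf : Measurable f) (hΛ : ∀ᵐ w ∂Λ, ‖w.1 * w.2‖ = 1) :
    ∫ y, f (AddCircle.toCircle y) ∂angleDistribution Λ = ∫ w, f (w.1 * w.2) ∂Λ := by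
  have hmeas : Measurable fun y : AddCircle (2 * π) => f y.toCircle :=
    hf.comp (by fun_prop : Continuous fun y : AddCircle (2 * π) => (y.toCircle : ℂ)).measurable
  rw [angleDistribution,
    integral_map measurable_coe_arg_mul.aemeasurable hmeas.aestronglyMeasurable]
  exact integral_congr_ae (hΛ.mono fun w hw => congrArg f (toCircle_coe_arg hw))

end

namespace HasDiagonalSpectrum

variable {Λ : Measure (ℂ × ℂ)} [IsFiniteMeasure Λ]

lemma ae_tendsto_integral_poissonKernel_mul (hΛ : HasDiagonalSpectrum Λ)
    (hsing : angleDistribution Λ ⟂ₘ volume) :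
    ∀ᵐ x : AddCircle (2 * π), ∀ z₁ z₂ : ℂ, ‖z₁‖ = 1 → ‖z₂‖ = 1 → z₁ * z₂ = x.toCircle →
      Tendsto (fun r : ℝ => ∫ w, poissonKernel 0 (r * z₁) w.1 * poissonKernel 0 (r * z₂) w.2 ∂Λ)
        (𝓝[<] 1) (𝓝 0) := by
  filter_upwards [ae_tendsto_integral_poissonKernel_of_mutuallySingular hsing]
    with x hx z₁ z₂ hz₁ hz₂ hz
  refine (hx.comp tendsto_sq_nhdsLT_one).congr' ?_
  filter_upwards [Ico_mem_nhdsLT (zero_lt_one (α := ℝ))] with r hr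
  rw [hΛ.integral_poissonKernel_mul (abs_lt.2 ⟨by linarith [hr.1], hr.2⟩) hz₁ hz₂, hz,
    Function.comp_apply, integral_angleDistribution (by unfold poissonKernel; fun_prop)
      hΛ.ae_norm_mul]

lemma integrable_poissonKernel_mul (hΛ : HasDiagonalSpectrum Λ) {r : ℝ} {z₁ z₂ : ℂ}
    (hr : |r| < 1) (hz₁ : ‖z₁‖ = 1) (hz₂ : ‖z₂‖ = 1) :
    Integrable (fun w => poissonKernel 0 (r * z₁) w.1 * poissonKernel 0 (r * z₂) w.2) Λ := by
  refine .of_bound (by unfold poissonKernel; fun_prop) (((1 + |r|) / (1 - |r|)) ^ 2) ?_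
  filter_upwards [hΛ.ae_norm_fst, hΛ.ae_norm_snd] with w hw₁ hw₂
  have h₁ := poissonKernel_nonneg hz₁ hw₁ hr.le
  have h₂ := poissonKernel_nonneg hz₂ hw₂ hr.le
  have hle₁ := poissonKernel_le hz₁ hw₁ hr
  have hle₂ := poissonKernel_le hz₂ hw₂ hr
  rw [Real.norm_of_nonneg (mul_nonneg h₁ h₂), sq]
  exact mul_le_mul hle₁ hle₂ h₂ (h₁.trans hle₁)

end HasDiagonalSpectrum

theorem poisson_limit_zero_on_kronecker_line_general {Λ μ : Measure (ℂ × ℂ)} [IsFiniteMeasure Λ]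
    (hΛ : HasDiagonalSpectrum Λ) (hsing : angleDistribution Λ ⟂ₘ volume) (hμ : μ ≤ Λ)
    {α β : ℝ} (hαβ : α + β ≠ 0) :
    ∀ᵐ t : ℝ, Tendsto (fun r : ℝ =>
        ∫ w, (1 - r ^ 2) ^ 2 / (‖1 - r * (Complex.exp (-(t * α) * I) * (starRingEnd ℂ) w.1)‖ ^ 2 *
          ‖1 - r * (Complex.exp (-(t * β) * I) * (starRingEnd ℂ) w.2)‖ ^ 2) ∂μ)
      (𝓝[<] 1) (𝓝 0) := by
  filter_upwards [(quasiMeasurePreserving_coe_mul_left (neg_ne_zero.2 hαβ)).ae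
    (hΛ.ae_tendsto_integral_poissonKernel_mul hsing)] with t ht
  set z₁ := Complex.exp (-(t * α) * I)
  set z₂ := Complex.exp (-(t * β) * I)
  have hz₁ : ‖z₁‖ = 1 := by simp [z₁, norm_exp]
  have hz₂ : ‖z₂‖ = 1 := by simp [z₂, norm_exp]
  have hz : z₁ * z₂ = AddCircle.toCircle ((-(α + β) * t : ℝ) : AddCircle (2 * π)) := by
    rw [AddCircle.toCircle_apply_mk, div_self (by positivity), one_mul, Circle.coe_exp,
      ← Complex.exp_add]
    push_cast
    ring_nf
  refine squeeze_zero' (.of_forall fun r => integral_nonneg fun w => by positivity) ?_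
    (ht z₁ z₂ hz₁ hz₂ hz)
  filter_upwards [Ico_mem_nhdsLT (zero_lt_one (α := ℝ))] with r hr
  have hr_abs : |r| < 1 := by rw [abs_of_nonneg hr.1]; exact hr.2
  have hkernel : ∀ᵐ w ∂Λ, (1 - r ^ 2) ^ 2 / (‖1 - r * (z₁ * (starRingEnd ℂ) w.1)‖ ^ 2 *
      ‖1 - r * (z₂ * (starRingEnd ℂ) w.2)‖ ^ 2) =
      poissonKernel 0 (r * z₁) w.1 * poissonKernel 0 (r * z₂) w.2 := by
    filter_upwards [hΛ.ae_norm_fst, hΛ.ae_norm_snd] with w hw₁ hw₂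
    rw [poissonKernel_zero_left hw₁ hz₁, poissonKernel_zero_left hw₂ hz₂,
      norm_one_sub_mul_conj hw₁, norm_one_sub_mul_conj hw₂, div_mul_div_comm, ← sq]
  rw [← integral_congr_ae hkernel]
  exact integral_mono_measure hμ (.of_forall fun w => by positivity)
    ((integrable_congr hkernel).2 (hΛ.integrable_poissonKernel_mul hr_abs hz₁ hz₂))

lemma isFiniteMeasure_sum_ofReal_smul {Ω : Type*} [MeasurableSpace Ω] {lam : ℕ → Measure Ω}
    [∀ k, IsProbabilityMeasure (lam k)] {a : ℕ → ℝ} (ha : Summable a) :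
    IsFiniteMeasure (Measure.sum fun k => ENNReal.ofReal (a k) • lam k) := by
  refine ⟨?_⟩
  simpa [Measure.sum_apply] using ha.tsum_ofReal_lt_top

/-- If `(a_k)` is a summable sequence of nonnegative reals, the `λ_k` are the Rudin
singular measures on `T²` (with Fourier coefficients `λ̂_k(m,n) = 1` iff `m = n` and
`k ∣ m`), and `0 ≤ μ ≤ ∑_k a_k λ_k`, then the radial Poisson extension of `μ` tends
to `0` at almost every point of the Kronecker line
`L = {(e^{-it log 2}, e^{-it log 3}) : t ∈ ℝ}` with respect to linear measure on `L`. -/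
theorem poisson_limit_zero_on_kronecker_line
    (a : ℕ → ℝ) (ha : ∀ k, 0 ≤ a k) (hsum : Summable a)
    (lam : ℕ → Measure (ℂ × ℂ))
    (hprob : ∀ k, 1 ≤ k → IsProbabilityMeasure (lam k))
    (hsupp : ∀ k, 1 ≤ k →
      lam k {w : ℂ × ℂ | ¬ (‖w.1‖ = 1 ∧ ‖w.2‖ = 1 ∧ (w.1 * w.2) ^ k = 1)} = 0)
    (hfour : ∀ k, 1 ≤ k → ∀ m n : ℤ,
      (∫ w : ℂ × ℂ, w.1 ^ m * w.2 ^ n ∂(lam k)) =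
        if m = n ∧ (k : ℤ) ∣ m then 1 else 0)
    (μ : Measure (ℂ × ℂ))
    (hμ : μ ≤ Measure.sum (fun k : ℕ => ENNReal.ofReal (a (k + 1)) • lam (k + 1))) :
    ∀ᵐ t : ℝ ∂volume,
      Tendsto (fun r : ℝ =>
          ∫ w, (1 - r ^ 2) ^ 2 /
            (‖1 - r * (Complex.exp (-(t * Real.log 2) * I) * (starRingEnd ℂ) w.1)‖ ^ 2 *
              ‖1 - r * (Complex.exp (-(t * Real.log 3) * I) * (starRingEnd ℂ) w.2)‖ ^ 2) ∂μ)
        (nhdsWithin 1 (Set.Iio 1)) (nhds 0) := by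
  have (k : ℕ) : IsProbabilityMeasure (lam (k + 1)) := hprob _ k.succ_pos
  have hcarrier (k : ℕ) :
      ∀ᵐ w ∂lam (k + 1), ‖w.1‖ = 1 ∧ ‖w.2‖ = 1 ∧ (w.1 * w.2) ^ (k + 1) = 1 :=
    ae_iff.2 (hsupp _ k.succ_pos)
  have hdiag (k : ℕ) : HasDiagonalSpectrum (lam (k + 1)) :=
    { ae_norm_fst := (hcarrier k).mono fun _ hw => hw.1
      ae_norm_snd := (hcarrier k).mono fun _ hw => hw.2.1
      integral_zpow_mul_zpow := fun m n hmn =>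
        (hfour _ k.succ_pos m n).trans (if_neg fun h => hmn h.1) }
  have htorsion (k : ℕ) : ∀ᵐ w ∂lam (k + 1), IsOfFinOrder (w.1 * w.2) :=
    (hcarrier k).mono fun _ hw => isOfFinOrder_iff_pow_eq_one.2 ⟨k + 1, k.succ_pos, hw.2.2⟩
  have := isFiniteMeasure_sum_ofReal_smul (lam := fun k => lam (k + 1))
    ((summable_nat_add_iff 1).2 hsum)
  exact poisson_limit_zero_on_kronecker_line_general (.sum fun k => (hdiag k).smul _)
    (angleDistribution_mutuallySingular <|
      Measure.ae_sum_iff.2 fun k => Measure.ae_smul_measure (htorsion k) _) hμ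
    (by positivity : Real.log 2 + Real.log 3 ≠ 0)
end

section
/- There exists a bounded analytic function f on the right half-plane Re s > 0, represented by an ordinary Dirichlet series in some half-plane, such that the limit lim_{T→∞} (1/T) ∫_0^T |f(it)|² dt does not exist, where f(it) denotes the almost-everywhere nontangential boundary value. -/
open MeasureTheory Filter Complex Real

/-!
There are polynomials `P, Q` with `|P| + |Q| ≤ 1` on the unit disc, `|P(1)| ≈ 1` and `Q(0) ≈ 1`. In
the slow variable `w = ((N + 1) / N)⁻ˢ`, and after multiplication by a power of `N⁻ˢ`, they become
Dirichlet polynomials `φ, α` with tiny weighted coefficients. On a fixed disc in `Re s ≥ 0`, `w` is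
close to `1` if `N` is large, so there `|φ| ≈ 1` and `α ≈ 0`; but for `s = it` the mean of `Q(w)`
over long times is `Q(0)`, so that `|α| ≈ 1` in mean.

Choose such pairs `(φᵢ, αᵢ)` and times `Uᵢ → ∞` inductively, so that on `[0, Uᵢ]` the `i`-th pair is
in the first regime and the earlier ones are in the second. Since `∑ⱼ |α₀ ⋯ αⱼ₋₁ φⱼ| ≤ 1` by
telescoping, the sum `f` of `α₀ ⋯ αⱼ₋₁ φⱼ` over even `j` is bounded by `1`. Up to time `Uⱼ` the full
sum is essentially its `j`-th term, which has modulus `≈ 1` in mean and occurs in `f` only for even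
`j`. So the mean square of `f` over `[0, Uⱼ]` is `≈ 1` for even `j` and `≈ 0` for odd `j`.
-/

namespace HinftyMeanSquare

open Finset (range)
open Polynomial (X C)
open scoped Polynomial Topology

section Cascade

variable {𝕜 : Type*} [NormedField 𝕜] {S : Set ℕ} {α φ : ℕ → 𝕜} {ε : ℝ}

/-- The `j`-th term `α₀ ⋯ αⱼ₋₁ φⱼ` of the cascade of the pairs `(φᵢ, αᵢ)`, kept only for `j ∈ S`. -/
noncomputable def cascadeTerm (S : Set ℕ) (α φ : ℕ → 𝕜) : ℕ → 𝕜 :=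
  S.indicator fun j => (∏ i ∈ range j, α i) * φ j

/-- The sum of the cascade: when the pairs satisfy `‖φᵢ‖ + ‖αᵢ‖ ≤ 1`, each term uses up at most a
`‖φⱼ‖` share of what the previous factors `αᵢ` have let through. -/
noncomputable def cascade (S : Set ℕ) (α φ : ℕ → 𝕜) : 𝕜 :=
  ∑' j, cascadeTerm S α φ j

lemma norm_cascadeTerm_of_mem {j : ℕ} (hj : j ∈ S) :
    ‖cascadeTerm S α φ j‖ = (∏ i ∈ range j, ‖α i‖) * ‖φ j‖ := by
  rw [cascadeTerm, Set.indicator_of_mem hj, norm_mul, norm_prod]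

lemma norm_cascadeTerm_le (j : ℕ) :
    ‖cascadeTerm S α φ j‖ ≤ (∏ i ∈ range j, ‖α i‖) * ‖φ j‖ :=
  (norm_indicator_le_norm_self _ _).trans_eq (by rw [norm_mul, norm_prod])

section Bounds

variable (h : ∀ i, ‖φ i‖ + ‖α i‖ ≤ 1)

include h

lemma norm_le_one_of_norm_add_norm_le (i : ℕ) : ‖α i‖ ≤ 1 := by
  linarith [h i, norm_nonneg (φ i)]

lemma prod_norm_le_one (m : ℕ) : ∏ i ∈ range m, ‖α i‖ ≤ 1 :=
  Finset.prod_le_one (fun _ _ => norm_nonneg _) fun i _ => norm_le_one_of_norm_add_norm_le h i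

lemma prod_norm_succ_le (m : ℕ) : ∏ i ∈ range (m + 1), ‖α i‖ ≤ ‖α m‖ := by
  rw [Finset.prod_range_succ]
  exact mul_le_of_le_one_left (norm_nonneg _) (prod_norm_le_one h m)

lemma norm_cascadeTerm_le_prod (j : ℕ) : ‖cascadeTerm S α φ j‖ ≤ ∏ i ∈ range j, ‖α i‖ :=
  (norm_cascadeTerm_le j).trans <| mul_le_of_le_one_right
    (Finset.prod_nonneg fun _ _ => norm_nonneg _) (by linarith [h j, norm_nonneg (α j)])

lemma norm_cascadeTerm_succ_le (j : ℕ) : ‖cascadeTerm S α φ (j + 1)‖ ≤ ‖α j‖ :=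
  (norm_cascadeTerm_le_prod h (j + 1)).trans (prod_norm_succ_le h j)

lemma norm_cascadeTerm_le_one_sub (j : ℕ) : ‖cascadeTerm S α φ j‖ ≤ 1 - ‖α j‖ := by
  have hφ : ‖cascadeTerm S α φ j‖ ≤ ‖φ j‖ :=
    (norm_cascadeTerm_le j).trans (mul_le_of_le_one_left (norm_nonneg _) (prod_norm_le_one h j))
  linarith [h j]

lemma sum_norm_cascadeTerm_add_prod_le (m n : ℕ) :
    ∑ k ∈ range n, ‖cascadeTerm S α φ (k + m)‖ + ∏ i ∈ range (n + m), ‖α i‖ ≤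
      ∏ i ∈ range m, ‖α i‖ := by
  induction n with
  | zero => simp
  | succ n ih =>
    have hterm := norm_cascadeTerm_le (S := S) (α := α) (φ := φ) (n + m)
    have hprod : 0 ≤ ∏ i ∈ range (n + m), ‖α i‖ := Finset.prod_nonneg fun _ _ => norm_nonneg _
    rw [Finset.sum_range_succ, Nat.add_right_comm, Finset.prod_range_succ]
    linarith [mul_le_mul_of_nonneg_left (h (n + m)) hprod]

lemma sum_norm_cascadeTerm_le (m n : ℕ) :
    ∑ k ∈ range n, ‖cascadeTerm S α φ (k + m)‖ ≤ ∏ i ∈ range m, ‖α i‖ := by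
  have hprod : 0 ≤ ∏ i ∈ range (n + m), ‖α i‖ := Finset.prod_nonneg fun _ _ => norm_nonneg _
  linarith [sum_norm_cascadeTerm_add_prod_le (S := S) h m n]

lemma summable_norm_cascadeTerm_nat_add (m : ℕ) :
    Summable fun k => ‖cascadeTerm S α φ (k + m)‖ :=
  summable_of_sum_range_le (fun _ => norm_nonneg _) (sum_norm_cascadeTerm_le h m)

lemma norm_tsum_cascadeTerm_nat_add_le (m : ℕ) :
    ‖∑' k, cascadeTerm S α φ (k + m)‖ ≤ ∏ i ∈ range m, ‖α i‖ :=
  (norm_tsum_le_tsum_norm (summable_norm_cascadeTerm_nat_add h m)).trans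
    (Real.tsum_le_of_sum_range_le (fun _ => norm_nonneg _) (sum_norm_cascadeTerm_le h m))

lemma norm_cascade_le_one : ‖cascade S α φ‖ ≤ 1 := by
  simpa [cascade] using norm_tsum_cascadeTerm_nat_add_le (S := S) h 0

lemma one_sub_sum_le_prod_norm (m : ℕ) :
    1 - ∑ i ∈ range m, (1 - ‖α i‖) ≤ ∏ i ∈ range m, ‖α i‖ := by
  induction m with
  | zero => simp
  | succ m ih =>
    rw [Finset.sum_range_succ, Finset.prod_range_succ]
    nlinarith [prod_norm_le_one h m, norm_le_one_of_norm_add_norm_le h m]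

variable [CompleteSpace 𝕜]

lemma cascade_eq_sum_add_tsum (m : ℕ) :
    cascade S α φ = ∑ k ∈ range m, cascadeTerm S α φ k + ∑' k, cascadeTerm S α φ (k + m) :=
  ((summable_norm_cascadeTerm_nat_add h 0).of_norm.sum_add_tsum_nat_add m).symm

lemma norm_cascade_sub_cascadeTerm_le (j : ℕ) :
    ‖cascade S α φ - cascadeTerm S α φ j‖ ≤ ∑ k ∈ range j, (1 - ‖α k‖) + ‖α j‖ := by
  have hhead : ‖∑ k ∈ range j, cascadeTerm S α φ k‖ ≤ ∑ k ∈ range j, (1 - ‖α k‖) :=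
    norm_sum_le_of_le _ fun k _ => norm_cascadeTerm_le_one_sub h k
  have htail : ‖∑' k, cascadeTerm S α φ (k + (j + 1))‖ ≤ ‖α j‖ :=
    (norm_tsum_cascadeTerm_nat_add_le h (j + 1)).trans (prod_norm_succ_le h j)
  rw [cascade_eq_sum_add_tsum h (j + 1), Finset.sum_range_succ, add_right_comm,
    add_sub_cancel_right]
  exact norm_add_le_of_le hhead htail

lemma sq_norm_cascade_le {j : ℕ} (hj : j ∉ S) (hφ : 1 - ε ≤ ‖φ j‖) :
    ‖cascade S α φ‖ ^ 2 ≤ ∑ k ∈ range j, (1 - ‖α k‖) + ε := by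
  have hsub := norm_cascade_sub_cascadeTerm_le (S := S) h j
  rw [cascadeTerm, Set.indicator_of_notMem hj, sub_zero] at hsub
  calc ‖cascade S α φ‖ ^ 2 ≤ ‖cascade S α φ‖ :=
        pow_le_of_le_one (norm_nonneg _) (norm_cascade_le_one h) two_ne_zero
    _ ≤ ∑ k ∈ range j, (1 - ‖α k‖) + ε := by linarith [h j]

lemma le_sq_norm_cascade {j : ℕ} (hj : j ∈ S) (hφ : 1 - ε ≤ ‖φ j‖) :
    1 - 4 * (∑ k ∈ range j, (1 - ‖α k‖) + ε) ≤ ‖cascade S α φ‖ ^ 2 := by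
  have hterm : ‖φ j‖ - ∑ k ∈ range j, (1 - ‖α k‖) ≤ ‖cascadeTerm S α φ j‖ := by
    have hsum : 0 ≤ ∑ k ∈ range j, (1 - ‖α k‖) :=
      Finset.sum_nonneg fun k _ => sub_nonneg.2 (norm_le_one_of_norm_add_norm_le h k)
    have hφ_le : ‖φ j‖ ≤ 1 := by linarith [h j, norm_nonneg (α j)]
    rw [norm_cascadeTerm_of_mem hj]
    nlinarith [one_sub_sum_le_prod_norm h j, norm_nonneg (φ j)]
  have hsub := norm_cascade_sub_cascadeTerm_le (S := S) h j
  rw [norm_sub_rev] at hsub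
  have htri := norm_sub_norm_le (cascadeTerm S α φ j) (cascade S α φ)
  nlinarith [h j, sq_nonneg (‖cascade S α φ‖ - 1)]

end Bounds

end Cascade

section SwitchPolynomials

/-- `-a + (1 - a²) ∑_{m < K} aᵐ wᵐ⁺¹`, a Taylor polynomial of the disc automorphism
`w ↦ (w - a) / (1 - a w)`, which for `a` near `1` sends `1` to `1` and `0` to nearly `-1`. -/
noncomputable def moebiusTaylor (a : ℝ) (K : ℕ) : ℂ[X] :=
  -C (a : ℂ) + C (1 - (a : ℂ) ^ 2) * X * ∑ m ∈ range K, (C (a : ℂ) * X) ^ m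

lemma eval_moebiusTaylor_mul (a : ℝ) (K : ℕ) (w : ℂ) :
    (moebiusTaylor a K).eval w * (1 - a * w) = (w - a) - (1 - (a : ℂ) ^ 2) * w * (a * w) ^ K := by
  have hgeom := geom_sum_mul_neg ((a : ℂ) * w) K
  have heval : (moebiusTaylor a K).eval w =
      -a + (1 - (a : ℂ) ^ 2) * w * ∑ m ∈ range K, ((a : ℂ) * w) ^ m := by
    simp [moebiusTaylor, Polynomial.eval_finsetSum]
  rw [heval]
  linear_combination (1 - (a : ℂ) ^ 2) * w * hgeom

lemma eval_zero_moebiusTaylor (a : ℝ) (K : ℕ) : (moebiusTaylor a K).eval 0 = -a := by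
  simp [moebiusTaylor]

lemma eval_one_moebiusTaylor {a : ℝ} (ha : a ≠ 1) (K : ℕ) :
    (moebiusTaylor a K).eval 1 = 1 - (1 + a) * (a : ℂ) ^ K := by
  have ha' : (1 : ℂ) - a ≠ 0 := sub_ne_zero.2 (by exact_mod_cast ha.symm)
  have h := eval_moebiusTaylor_mul a K 1
  rw [mul_one] at h
  apply mul_right_cancel₀ ha'
  rw [h]
  ring

lemma norm_sub_le_norm_one_sub_mul {a : ℝ} (ha₀ : 0 ≤ a) (ha₁ : a ≤ 1) {w : ℂ} (hw : ‖w‖ ≤ 1) :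
    ‖w - a‖ ≤ ‖1 - a * w‖ := by
  have hw' : w.re * w.re + w.im * w.im ≤ 1 := by
    rw [← normSq_apply, normSq_eq_norm_sq]
    exact pow_le_one₀ (norm_nonneg w) hw
  rw [← sq_le_sq₀ (norm_nonneg _) (norm_nonneg _), ← normSq_eq_norm_sq, ← normSq_eq_norm_sq,
    normSq_apply, normSq_apply]
  simp only [sub_re, sub_im, ofReal_re, ofReal_im, one_re, one_im, re_ofReal_mul, im_ofReal_mul]
  nlinarith [mul_nonneg (sub_nonneg.2 (pow_le_one₀ ha₀ ha₁ : a ^ 2 ≤ 1)) (sub_nonneg.2 hw')]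

lemma norm_eval_moebiusTaylor_le {a : ℝ} (ha₀ : 0 ≤ a) (ha₁ : a < 1) (K : ℕ) {w : ℂ}
    (hw : ‖w‖ ≤ 1) : ‖(moebiusTaylor a K).eval w‖ ≤ 1 + (1 + a) * a ^ K := by
  have hdenom : 1 - a ≤ ‖1 - a * w‖ := by
    have h := norm_sub_norm_le (1 : ℂ) (a * w)
    rw [norm_one, norm_mul, Complex.norm_of_nonneg ha₀] at h
    linarith [mul_le_of_le_one_right ha₀ hw]
  have hrem : ‖(1 - (a : ℂ) ^ 2) * w * (a * w) ^ K‖ ≤ (1 - a ^ 2) * a ^ K := by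
    have hcoeff : ‖1 - (a : ℂ) ^ 2‖ = 1 - a ^ 2 := by
      rw [← Complex.norm_of_nonneg (sub_nonneg.2 (pow_le_one₀ ha₀ ha₁.le : a ^ 2 ≤ 1))]
      push_cast
      rfl
    rw [norm_mul, norm_mul, norm_pow, norm_mul, hcoeff, Complex.norm_of_nonneg ha₀]
    have : 0 ≤ 1 - a ^ 2 := by nlinarith
    calc (1 - a ^ 2) * ‖w‖ * (a * ‖w‖) ^ K ≤ (1 - a ^ 2) * 1 * (a * 1) ^ K := by gcongr
      _ = (1 - a ^ 2) * a ^ K := by ring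
  have hpos : 0 < ‖1 - a * w‖ := by linarith
  refine le_of_mul_le_mul_right ?_ hpos
  calc ‖(moebiusTaylor a K).eval w‖ * ‖1 - a * w‖
      = ‖(w - a) - (1 - (a : ℂ) ^ 2) * w * (a * w) ^ K‖ := by
        rw [← norm_mul, eval_moebiusTaylor_mul]
    _ ≤ ‖1 - a * w‖ + (1 - a ^ 2) * a ^ K :=
        (norm_sub_le _ _).trans (add_le_add (norm_sub_le_norm_one_sub_mul ha₀ ha₁.le hw) hrem)
    _ = ‖1 - a * w‖ + (1 + a) * a ^ K * (1 - a) := by ring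
    _ ≤ ‖1 - a * w‖ + (1 + a) * a ^ K * ‖1 - a * w‖ := by gcongr
    _ = (1 + (1 + a) * a ^ K) * ‖1 - a * w‖ := by ring

lemma exists_polynomial_norm_le_one_near_one_near_neg_one {ε : ℝ} (hε : 0 < ε) :
    ∃ B : ℂ[X], (∀ w : ℂ, ‖w‖ ≤ 1 → ‖B.eval w‖ ≤ 1) ∧ ‖1 - B.eval 1‖ ≤ ε ∧
      ‖1 + B.eval 0‖ ≤ ε := by
  obtain ⟨δ, hδ, hδε⟩ := exists_between (lt_min one_pos (half_pos hε))
  obtain ⟨hδ₁, hδε⟩ := lt_min_iff.1 hδε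
  set a := 1 - δ
  obtain ⟨K, hK⟩ := exists_pow_lt_of_lt_one (half_pos hδ) (show a < 1 by linarith)
  have ha₀ : 0 < a := by linarith
  set η := (1 + a) * a ^ K with hη
  have hη₀ : 0 < η := by positivity
  have hηδ : η ≤ δ := by nlinarith [pow_pos ha₀ K]
  refine ⟨C ((1 + η : ℝ) : ℂ)⁻¹ * moebiusTaylor a K, fun w hw => ?_, ?_, ?_⟩
  · rw [Polynomial.eval_mul, Polynomial.eval_C, norm_mul, norm_inv,
      Complex.norm_of_nonneg (by positivity), inv_mul_le_one₀ (by positivity)]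
    exact norm_eval_moebiusTaylor_le ha₀.le (by linarith) K hw
  · have heval : 1 - (C ((1 + η : ℝ) : ℂ)⁻¹ * moebiusTaylor a K).eval 1 =
        ((2 * η / (1 + η) : ℝ) : ℂ) := by
      have : (1 + η : ℂ) ≠ 0 := by exact_mod_cast (by positivity : 1 + η ≠ 0)
      rw [Polynomial.eval_mul, Polynomial.eval_C, eval_one_moebiusTaylor (by linarith)]
      push_cast [hη] at this ⊢
      field_simp
      ring
    rw [heval, Complex.norm_of_nonneg (by positivity), div_le_iff₀ (by positivity)]
    nlinarith
  · have heval : 1 + (C ((1 + η : ℝ) : ℂ)⁻¹ * moebiusTaylor a K).eval 0 =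
        (((1 + η - a) / (1 + η) : ℝ) : ℂ) := by
      have : (1 + η : ℂ) ≠ 0 := by exact_mod_cast (by positivity : 1 + η ≠ 0)
      rw [Polynomial.eval_mul, Polynomial.eval_C, eval_zero_moebiusTaylor]
      push_cast
      field_simp
      ring
    rw [heval, Complex.norm_of_nonneg (div_nonneg (by linarith) (by positivity)),
      div_le_iff₀ (by positivity)]
    nlinarith

lemma exists_polynomial_pair_norm_add_norm_le_one {ε : ℝ} (hε : 0 < ε) :
    ∃ P Q : ℂ[X], (∀ w : ℂ, ‖w‖ ≤ 1 → ‖P.eval w‖ + ‖Q.eval w‖ ≤ 1) ∧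
      1 - ε < ‖P.eval 1‖ ∧ 1 - ε < (Q.eval 0).re := by
  obtain ⟨δ, hδ, hδε⟩ := exists_between (lt_min one_pos (half_pos hε))
  obtain ⟨hδ₁, hδε⟩ := lt_min_iff.1 hδε
  obtain ⟨B, hB, hB₁, hB₀⟩ := exists_polynomial_norm_le_one_near_one_near_neg_one hδ
  refine ⟨(C (1 / 2) * (1 + B)) ^ 2, (C (1 / 2) * (1 - B)) ^ 2, fun w hw => ?_, ?_, ?_⟩
  · have hpar := parallelogram_law_with_norm ℝ (1 : ℂ) (B.eval w)
    have hBw : ‖B.eval w‖ ^ 2 ≤ 1 := pow_le_one₀ (norm_nonneg _) (hB w hw)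
    rw [norm_one] at hpar
    simp only [Polynomial.eval_pow, Polynomial.eval_mul, Polynomial.eval_C, Polynomial.eval_add,
      Polynomial.eval_sub, Polynomial.eval_one, norm_pow, norm_mul, norm_div, norm_one,
      Complex.norm_two]
    nlinarith
  · have htri : 2 - δ ≤ ‖1 + B.eval 1‖ := by
      have h := norm_sub_le (1 + B.eval 1) (B.eval 1 - 1)
      rw [norm_sub_rev (B.eval 1) 1, show (1 + B.eval 1) - (B.eval 1 - 1) = 2 by ring,
        Complex.norm_two] at h
      linarith
    simp only [Polynomial.eval_pow, Polynomial.eval_mul, Polynomial.eval_C, Polynomial.eval_add,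
      Polynomial.eval_one, norm_pow, norm_mul, norm_div, norm_one, Complex.norm_two]
    nlinarith
  · set z := 1 + B.eval 0 with hz
    have heval : ((C (1 / 2) * (1 - B)) ^ 2).eval 0 = 1 - (z - z ^ 2 / 4) := by
      simp only [Polynomial.eval_pow, Polynomial.eval_mul, Polynomial.eval_C, Polynomial.eval_sub,
        Polynomial.eval_one, hz]
      ring
    have hnorm : ‖z - z ^ 2 / 4‖ ≤ δ + δ ^ 2 / 4 := by
      refine norm_sub_le_of_le hB₀ ?_
      rw [norm_div, norm_pow, Complex.norm_ofNat]
      gcongr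
    rw [heval, sub_re, one_re]
    nlinarith [re_le_norm (z - z ^ 2 / 4)]

end SwitchPolynomials

section SlowVariable

lemma norm_cexp_neg_ofReal_mul_le_one {l : ℝ} (hl : 0 ≤ l) {s : ℂ} (hs : 0 ≤ s.re) :
    ‖cexp (-(l : ℂ) * s)‖ ≤ 1 := by
  rw [norm_exp, Real.exp_le_one_iff, neg_mul, neg_re, re_ofReal_mul]
  exact neg_nonpos.2 (mul_nonneg hl hs)

lemma eventually_forall_lt_norm_eval_cexp (P : ℂ[X]) {b : ℝ} (hb : b < ‖P.eval 1‖) (R : ℝ) :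
    ∀ᶠ l : ℝ in 𝓝 0, ∀ s : ℂ, ‖s‖ ≤ R → b < ‖P.eval (cexp (-(l : ℂ) * s))‖ := by
  have hP : Continuous fun p : ℂ × ℝ => ‖P.eval (cexp (-(p.2 : ℂ) * p.1))‖ :=
    (P.continuous.comp (by fun_prop)).norm
  have h := (isCompact_closedBall (0 : ℂ) R).eventually_forall_of_forall_eventually
    (x₀ := (0 : ℝ)) (P := fun l s => b < ‖P.eval (cexp (-(l : ℂ) * s))‖) fun s _ =>
      (hP.comp continuous_swap).continuousAt.eventually (lt_mem_nhds (by simpa using hb))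
  simpa using h

lemma tendsto_inv_mul_integral_cexp {ω : ℝ} (hω : ω ≠ 0) :
    Tendsto (fun T : ℝ => (T : ℂ)⁻¹ * ∫ t in (0 : ℝ)..T, cexp (ω * I * t)) atTop (𝓝 0) := by
  have hωI : (ω : ℂ) * I ≠ 0 := mul_ne_zero (by exact_mod_cast hω) I_ne_zero
  have hbound (T : ℝ) : ‖∫ t in (0 : ℝ)..T, cexp (ω * I * t)‖ ≤ 2 / ‖(ω : ℂ) * I‖ := by
    have hnorm (t : ℝ) : ‖cexp (ω * I * t)‖ = 1 := by simp [norm_exp]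
    rw [integral_exp_mul_complex hωI, norm_div]
    gcongr
    exact (norm_sub_le _ _).trans (by rw [hnorm, hnorm]; norm_num)
  have hinv : Tendsto (fun T : ℝ => (T : ℂ)⁻¹) atTop (𝓝 0) :=
    tendsto_inv₀_cobounded.comp (RCLike.tendsto_ofReal_atTop_cobounded ℂ)
  exact hinv.zero_mul_isBoundedUnder_le (isBoundedUnder_of ⟨_, hbound⟩)

lemma tendsto_inv_mul_integral_eval_cexp (P : ℂ[X]) {ω : ℝ} (hω : ω ≠ 0) :
    Tendsto (fun T : ℝ => (T : ℂ)⁻¹ * ∫ t in (0 : ℝ)..T, P.eval (cexp (ω * I * t)))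
      atTop (𝓝 (P.eval 0)) := by
  induction P using Polynomial.induction_on' with
  | add P Q hP hQ =>
    have hint (P : ℂ[X]) (T : ℝ) :
        IntervalIntegrable (fun t : ℝ => P.eval (cexp (ω * I * t))) volume 0 T :=
      (P.continuous.comp (by fun_prop)).intervalIntegrable _ _
    simp only [Polynomial.eval_add, intervalIntegral.integral_add (hint P _) (hint Q _), mul_add]
    exact hP.add hQ
  | monomial n c =>
    rcases eq_or_ne n 0 with rfl | hn
    · refine tendsto_const_nhds.congr' ?_
      filter_upwards [eventually_ne_atTop 0] with T hT
      have : (T : ℂ) ≠ 0 := by exact_mod_cast hT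
      simp [this]
    · have hpow (t : ℝ) : (Polynomial.monomial n c).eval (cexp (ω * I * t)) =
          c * cexp ((n * ω : ℝ) * I * t) := by
        rw [Polynomial.eval_monomial, ← Complex.exp_nat_mul]
        push_cast
        ring_nf
      have h := (tendsto_inv_mul_integral_cexp
        (mul_ne_zero (Nat.cast_ne_zero.2 hn) hω)).const_mul c
      simpa only [hpow, intervalIntegral.integral_const_mul, mul_left_comm,
        Polynomial.eval_monomial, zero_pow hn] using h

lemma eventually_integral_one_sub_norm_eval_le (P : ℂ[X]) {ε ω : ℝ} (hP : 1 - ε < (P.eval 0).re)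
    (hω : ω ≠ 0) :
    ∀ᶠ T : ℝ in atTop, ∫ t in (0 : ℝ)..T, (1 - ‖P.eval (cexp (ω * I * t))‖) ≤ ε * T := by
  have hmean := (continuous_re.tendsto _).comp (tendsto_inv_mul_integral_eval_cexp P hω)
  have hcont : Continuous fun t : ℝ => P.eval (cexp (ω * I * t)) :=
    P.continuous.comp (by fun_prop)
  filter_upwards [hmean.eventually (lt_mem_nhds hP), eventually_gt_atTop 0] with T hT hT₀
  have hre : (1 - ε) * T ≤ (∫ t in (0 : ℝ)..T, P.eval (cexp (ω * I * t))).re := by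
    rw [Function.comp_apply, ← ofReal_inv, re_ofReal_mul, inv_mul_eq_div, lt_div_iff₀ hT₀] at hT
    exact hT.le
  have hnorm : (∫ t in (0 : ℝ)..T, P.eval (cexp (ω * I * t))).re ≤
      ∫ t in (0 : ℝ)..T, ‖P.eval (cexp (ω * I * t))‖ :=
    (re_le_norm _).trans (intervalIntegral.norm_integral_le_integral_norm hT₀.le)
  rw [intervalIntegral.integral_sub intervalIntegrable_const (hcont.norm.intervalIntegrable _ _),
    intervalIntegral.integral_const, sub_zero, smul_eq_mul, mul_one]
  linarith

end SlowVariable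

section DirichletPolynomial

/-- `g` is a Dirichlet polynomial `∑ cᵢ nᵢ⁻ˢ` with `∑ |cᵢ| / nᵢ ≤ L`. The frequencies `nᵢ` may
repeat, so that products of Dirichlet polynomials are indexed by product types. -/
def IsDirichletPolynomial (L : ℝ) (g : ℂ → ℂ) : Prop :=
  ∃ (ι : Type) (_ : Fintype ι) (c : ι → ℂ) (n : ι → ℕ), (∀ i, n i ≠ 0) ∧
    ∑ i, ‖c i‖ / n i ≤ L ∧ ∀ s, g s = ∑ i, c i * (n i : ℂ) ^ (-s)

namespace IsDirichletPolynomial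

variable {L L' : ℝ} {g g' : ℂ → ℂ}

lemma mono (hg : IsDirichletPolynomial L g) (hL : L ≤ L') : IsDirichletPolynomial L' g := by
  obtain ⟨ι, _, c, n, hn, hc, hg⟩ := hg
  exact ⟨ι, _, c, n, hn, hc.trans hL, hg⟩

lemma nonneg (hg : IsDirichletPolynomial L g) : 0 ≤ L := by
  obtain ⟨ι, _, c, n, -, hc, -⟩ := hg
  exact (Finset.sum_nonneg fun i _ => by positivity).trans hc

lemma zero : IsDirichletPolynomial 0 fun _ => 0 :=
  ⟨Empty, inferInstance, 0, 0, fun i => i.elim, by simp, by simp⟩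

lemma one : IsDirichletPolynomial 1 fun _ => 1 :=
  ⟨Unit, inferInstance, 1, 1, by simp, by simp, by simp⟩

lemma mul (hg : IsDirichletPolynomial L g) (hg' : IsDirichletPolynomial L' g') :
    IsDirichletPolynomial (L * L') fun s => g s * g' s := by
  have hL := hg.nonneg
  obtain ⟨ι, _, c, n, hn, hc, hg⟩ := hg
  obtain ⟨ι', _, c', n', hn', hc', hg'⟩ := hg'
  refine ⟨ι × ι', inferInstance, fun p => c p.1 * c' p.2, fun p => n p.1 * n' p.2,
    fun p => mul_ne_zero (hn _) (hn' _), ?_, fun s => ?_⟩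
  · simp only [Fintype.sum_prod_type, norm_mul, Nat.cast_mul, mul_div_mul_comm,
      ← Fintype.sum_mul_sum]
    exact mul_le_mul hc hc' (Finset.sum_nonneg fun i _ => by positivity) hL
  · simp only [hg, hg', Fintype.sum_mul_sum, Fintype.sum_prod_type, Nat.cast_mul,
      natCast_mul_natCast_cpow, mul_mul_mul_comm]

lemma prod {κ : Type*} {L : κ → ℝ} {g : κ → ℂ → ℂ} (t : Finset κ)
    (hg : ∀ i ∈ t, IsDirichletPolynomial (L i) (g i)) :
    IsDirichletPolynomial (∏ i ∈ t, L i) fun s => ∏ i ∈ t, g i s := by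
  induction t using Finset.cons_induction with
  | empty => simpa using one
  | cons i t hi ih =>
    simp only [Finset.prod_cons]
    exact (hg i (Finset.mem_cons_self i t)).mul
      (ih fun k hk => hg k (Finset.mem_cons_of_mem hk))

lemma differentiable (hg : IsDirichletPolynomial L g) : Differentiable ℂ g := by
  obtain ⟨ι, _, c, n, hn, -, hg⟩ := hg
  rw [funext hg]
  refine Differentiable.fun_sum fun i _ => (differentiable_neg.const_cpow ?_).const_mul _
  exact Or.inl (Nat.cast_ne_zero.2 (hn i))

end IsDirichletPolynomial

lemma exists_dirichletSeries_hasSum_tsum {ι : Type*} {c : ι → ℂ} {n : ι → ℕ} {σ : ℝ}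
    (hn : ∀ k, n k ≠ 0) (hc : Summable fun k => ‖c k‖ * (n k : ℝ) ^ (-σ)) :
    ∃ a : ℕ → ℂ, ∀ s : ℂ, σ ≤ s.re →
      Summable (fun k => c k * (n k : ℂ) ^ (-s)) ∧
      HasSum (fun m : ℕ => a (m + 1) * ((m + 1 : ℕ) : ℂ) ^ (-s))
        (∑' k, c k * (n k : ℂ) ^ (-s)) := by
  -- `a m` collects the terms of frequency `m`, indexed by `m - 1` because the series starts at `1`.
  refine ⟨fun m => ∑' k : (fun k => n k - 1) ⁻¹' {m - 1}, c k, fun s hs => ?_⟩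
  have hsum : Summable fun k => c k * (n k : ℂ) ^ (-s) := by
    refine hc.of_norm_bounded fun k => ?_
    have hk : (1 : ℝ) ≤ n k := Nat.one_le_cast.2 (Nat.one_le_iff_ne_zero.2 (hn k))
    rw [norm_mul, norm_natCast_cpow_of_pos (Nat.pos_of_ne_zero (hn k)), neg_re]
    gcongr
  refine ⟨hsum, (hsum.hasSum.tsum_fiberwise fun k => n k - 1).congr_fun fun m => ?_⟩
  change (∑' k : (fun k => n k - 1) ⁻¹' {m}, c k) * _ = _
  rw [← tsum_mul_right]
  refine tsum_congr fun ⟨k, hk⟩ => ?_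
  have hk' : n k = m + 1 := (Nat.sub_eq_iff_eq_add (Nat.one_le_iff_ne_zero.2 (hn k))).1 hk
  rw [hk']

lemma exists_dirichletSeries_hasSum_tsum_of_isDirichletPolynomial {L : ℕ → ℝ} {g : ℕ → ℂ → ℂ}
    (hL : Summable L) (hg : ∀ j, IsDirichletPolynomial (L j) (g j)) :
    ∃ a : ℕ → ℂ, ∀ s : ℂ, 1 ≤ s.re →
      HasSum (fun m : ℕ => a (m + 1) * ((m + 1 : ℕ) : ℂ) ^ (-s)) (∑' j, g j s) := by
  choose ι _ c n hn hc hg using hg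
  have hsum : Summable fun k : Σ j, ι j => ‖c k.1 k.2‖ * (n k.1 k.2 : ℝ) ^ (-1 : ℝ) := by
    simp only [Real.rpow_neg_one, ← div_eq_mul_inv]
    refine (summable_sigma_of_nonneg fun k => by positivity).2
      ⟨fun j => (hasSum_fintype _).summable, ?_⟩
    refine hL.of_nonneg_of_le (fun j => tsum_nonneg fun i => by positivity) fun j => ?_
    rw [tsum_fintype]
    exact hc j
  obtain ⟨a, ha⟩ := exists_dirichletSeries_hasSum_tsum
    (c := fun k : Σ j, ι j => c k.1 k.2) (fun k => hn k.1 k.2) hsum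
  refine ⟨a, fun s hs => ?_⟩
  obtain ⟨hsummable, hasSum⟩ := ha s hs
  simp only [hsummable.tsum_sigma, tsum_fintype, ← hg] at hasSum
  exact hasSum

end DirichletPolynomial

section SlowPolynomial

/-- The frequency of the slow variable `((N + 1) / N)⁻ˢ`, which tends to `0` as `N → ∞`. -/
noncomputable def slowFrequency (N : ℕ) : ℝ :=
  Real.log (N + 1) - Real.log N

/-- The polynomial `P` in the slow variable `((N + 1) / N)⁻ˢ`, multiplied by `(N⁻ˢ)ᵈ` to clear
denominators: it is a Dirichlet polynomial as soon as `d` exceeds the degree of `P`. -/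
noncomputable def slowPolynomial (P : ℂ[X]) (d N : ℕ) (s : ℂ) : ℂ :=
  ((N : ℂ) ^ (-s)) ^ d * P.eval (cexp (-(slowFrequency N : ℂ) * s))

variable {P : ℂ[X]} {d N : ℕ} {s : ℂ}

lemma slowFrequency_pos (hN : N ≠ 0) : 0 < slowFrequency N :=
  sub_pos.2 (Real.log_lt_log (by positivity) (lt_add_one _))

lemma natCast_cpow_mul_cexp_slowFrequency (hN : N ≠ 0) (s : ℂ) :
    (N : ℂ) ^ (-s) * cexp (-(slowFrequency N : ℂ) * s) = ((N + 1 : ℕ) : ℂ) ^ (-s) := by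
  rw [cpow_def_of_ne_zero (Nat.cast_ne_zero.2 hN),
    cpow_def_of_ne_zero (Nat.cast_ne_zero.2 N.succ_ne_zero), ← Complex.exp_add,
    ← natCast_log, ← natCast_log, slowFrequency]
  push_cast
  ring_nf

lemma natCast_cpow_pow_mul_cexp_pow_slowFrequency (hN : N ≠ 0) {m : ℕ} (hm : m ≤ d) (s : ℂ) :
    ((N : ℂ) ^ (-s)) ^ d * cexp (-(slowFrequency N : ℂ) * s) ^ m =
      ((N ^ (d - m) * (N + 1) ^ m : ℕ) : ℂ) ^ (-s) := by
  have hpow (n k : ℕ) : ((n ^ k : ℕ) : ℂ) ^ (-s) = ((n : ℂ) ^ (-s)) ^ k := by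
    rw [Nat.cast_pow, ← natCast_cpow_natCast_mul, cpow_nat_mul]
  rw [Nat.cast_mul, natCast_mul_natCast_cpow, hpow, hpow,
    ← natCast_cpow_mul_cexp_slowFrequency hN, mul_pow, ← mul_assoc, ← pow_add,
    Nat.sub_add_cancel hm]

lemma isDirichletPolynomial_slowPolynomial (hd : P.natDegree < d) (hN : N ≠ 0) :
    IsDirichletPolynomial ((∑ m ∈ range d, ‖P.coeff m‖) / N) (slowPolynomial P d N) := by
  refine ⟨Fin d, inferInstance, fun m => P.coeff m, fun m => N ^ (d - m) * (N + 1) ^ (m : ℕ),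
    fun m => by positivity, ?_, fun s => ?_⟩
  · rw [Finset.sum_div, Finset.sum_range]
    refine Finset.sum_le_sum fun m _ => ?_
    have hfreq : N ≤ N ^ (d - m) * (N + 1) ^ (m : ℕ) :=
      (Nat.le_self_pow (Nat.sub_ne_zero_of_lt m.2) N).trans
        (Nat.le_mul_of_pos_right _ (by positivity))
    gcongr
  · rw [slowPolynomial, Polynomial.eval_eq_sum_range' hd, Finset.mul_sum, Finset.sum_range]
    refine Finset.sum_congr rfl fun m _ => ?_
    rw [mul_left_comm, natCast_cpow_pow_mul_cexp_pow_slowFrequency hN m.2.le]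

lemma norm_slowPolynomial_le (hN : N ≠ 0) (hs : 0 ≤ s.re) :
    ‖slowPolynomial P d N s‖ ≤ ‖P.eval (cexp (-(slowFrequency N : ℂ) * s))‖ := by
  rw [slowPolynomial, norm_mul, norm_pow, norm_natCast_cpow_of_pos (Nat.pos_of_ne_zero hN)]
  refine mul_le_of_le_one_left (norm_nonneg _) (pow_le_one₀ (by positivity) ?_)
  exact Real.rpow_le_one_of_one_le_of_nonpos
    (Nat.one_le_cast.2 (Nat.one_le_iff_ne_zero.2 hN)) (by simpa using hs)

lemma norm_slowPolynomial_ofReal_mul_I (hN : N ≠ 0) (t : ℝ) :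
    ‖slowPolynomial P d N (t * I)‖ = ‖P.eval (cexp (-(slowFrequency N : ℂ) * (t * I)))‖ := by
  simp [slowPolynomial, norm_natCast_cpow_of_pos (Nat.pos_of_ne_zero hN)]

end SlowPolynomial

section Gate

/-- A gate that is open for the signal `φ` and closed for `α` up to time `R`, while over long
times `α` has modulus nearly `1` in mean. Both are Dirichlet polynomials, the coefficients of `φ`
being small. -/
structure IsGate (ε R : ℝ) (φ α : ℂ → ℂ) : Prop where
  norm_add_norm_le : ∀ s : ℂ, 0 ≤ s.re → ‖φ s‖ + ‖α s‖ ≤ 1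
  norm_le : ∀ s : ℂ, 0 ≤ s.re → ‖s‖ ≤ R → ‖α s‖ ≤ ε
  one_sub_le_norm : ∀ t : ℝ, |t| ≤ R → 1 - ε ≤ ‖φ (t * I)‖
  isDirichletPolynomial_left : IsDirichletPolynomial ε φ
  isDirichletPolynomial_right : IsDirichletPolynomial 1 α
  eventually_integral_le : ∀ᶠ T : ℝ in atTop, ∫ t in (0 : ℝ)..T, (1 - ‖α (t * I)‖) ≤ ε * T

lemma eventually_isGate_slowPolynomial {P Q : ℂ[X]} {ε : ℝ} {d : ℕ} (hε : 0 < ε)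
    (hPQ : ∀ w : ℂ, ‖w‖ ≤ 1 → ‖P.eval w‖ + ‖Q.eval w‖ ≤ 1) (hP : 1 - ε < ‖P.eval 1‖)
    (hQ : 1 - ε < (Q.eval 0).re) (hPd : P.natDegree < d) (hQd : Q.natDegree < d) (R : ℝ) :
    ∀ᶠ N : ℕ in atTop, IsGate ε R (slowPolynomial P d N) (slowPolynomial Q d N) := by
  have hnear := Real.tendsto_log_nat_add_one_sub_log.eventually
    (eventually_forall_lt_norm_eval_cexp P hP R)
  have hcoeff (A : ℂ[X]) {δ : ℝ} (hδ : 0 < δ) :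
      ∀ᶠ N : ℕ in atTop, (∑ m ∈ range d, ‖A.coeff m‖) / N ≤ δ :=
    (tendsto_const_div_atTop_nhds_zero_nat _).eventually (ge_mem_nhds hδ)
  filter_upwards [hnear, hcoeff P hε, hcoeff Q one_pos, eventually_ne_atTop 0]
    with N hnear hφ hα hN
  have hω := slowFrequency_pos hN
  have hslow {s : ℂ} (hs : 0 ≤ s.re) := hPQ _ (norm_cexp_neg_ofReal_mul_le_one hω.le hs)
  refine ⟨fun s hs => ?_, fun s hs hsR => ?_, fun t ht => ?_,
    (isDirichletPolynomial_slowPolynomial hPd hN).mono hφ,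
    (isDirichletPolynomial_slowPolynomial hQd hN).mono hα, ?_⟩
  · exact (add_le_add (norm_slowPolynomial_le hN hs)
      (norm_slowPolynomial_le hN hs)).trans (hslow hs)
  · have hclose : 1 - ε < ‖P.eval (cexp (-(slowFrequency N : ℂ) * s))‖ := hnear s hsR
    linarith [hslow hs, norm_slowPolynomial_le (P := Q) (d := d) hN hs]
  · rw [norm_slowPolynomial_ofReal_mul_I hN]
    exact (hnear (t * I) (by simpa using ht)).le
  · have hmean := eventually_integral_one_sub_norm_eval_le Q hQ (neg_ne_zero.2 hω.ne')
    simpa only [norm_slowPolynomial_ofReal_mul_I hN, ofReal_neg, mul_right_comm _ I,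
      mul_assoc] using hmean

lemma exists_isGate {ε : ℝ} (hε : 0 < ε) (R : ℝ) : ∃ φ α : ℂ → ℂ, IsGate ε R φ α := by
  obtain ⟨P, Q, hPQ, hP, hQ⟩ := exists_polynomial_pair_norm_add_norm_le_one hε
  have hPd : P.natDegree < max P.natDegree Q.natDegree + 1 := by omega
  have hQd : Q.natDegree < max P.natDegree Q.natDegree + 1 := by omega
  obtain ⟨N, hN⟩ := (eventually_isGate_slowPolynomial hε hPQ hP hQ hPd hQd R).exists
  exact ⟨_, _, hN⟩

end Gate

section GateSequence

lemma exists_seq_forall_lt_of_forall_eventually {β : Type*} {A : ℕ → ℝ → β → Prop}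
    {B : ℕ → β → ℝ → Prop} (hA : ∀ i R, ∃ x, A i R x)
    (hB : ∀ i R x, A i R x → ∀ᶠ T in atTop, B i x T) :
    ∃ (x : ℕ → β) (U : ℕ → ℝ), (∀ i : ℕ, (i : ℝ) ≤ U i) ∧ (∀ i, A i (U i) (x i)) ∧
      ∀ i j, i < j → B i (x i) (U j) := by
  choose x hx using hA
  choose τ hτ using fun i R => eventually_atTop.1 (hB i R _ (hx i R))
  let U : ℕ → ℝ := fun i => Nat.rec 0 (fun i u => max (u + 1) (τ i u)) i
  have hU (i : ℕ) : U (i + 1) = max (U i + 1) (τ i (U i)) := rfl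
  have hU_add_one (i : ℕ) : U i + 1 ≤ U (i + 1) := (le_max_left _ _).trans_eq (hU i).symm
  have hU_mono : Monotone U := monotone_nat_of_le_succ fun i => by linarith [hU_add_one i]
  refine ⟨fun i => x i (U i), U, fun i => ?_, fun i => hx i (U i), fun i j hij => ?_⟩
  · induction i with
    | zero => exact Nat.cast_zero.le
    | succ i ih =>
      push_cast
      linarith [hU_add_one i]
  · exact hτ i (U i) (U j) <|
      (le_max_right _ _).trans <| (hU i).symm.trans_le (hU_mono (Nat.succ_le_of_lt hij))

/-- Gates with rapidly increasing switching times `Uᵢ`: up to time `Uᵢ` the `i`-th gate lets only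
`φᵢ` pass, while on average over `[0, Uⱼ]`, `j > i`, it lets `αᵢ` pass almost unchanged. -/
structure IsGateSequence (ε U : ℕ → ℝ) (φ α : ℕ → ℂ → ℂ) : Prop where
  natCast_le : ∀ i : ℕ, (i : ℝ) ≤ U i
  isGate : ∀ i, IsGate (ε i) (U i) (φ i) (α i)
  integral_le : ∀ i j, i < j → ∫ t in (0 : ℝ)..U j, (1 - ‖α i (t * I)‖) ≤ ε i * U j

lemma exists_isGateSequence {ε : ℕ → ℝ} (hε : ∀ i, 0 < ε i) :
    ∃ (U : ℕ → ℝ) (φ α : ℕ → ℂ → ℂ), IsGateSequence ε U φ α := by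
  obtain ⟨x, U, hU, hgate, hint⟩ := exists_seq_forall_lt_of_forall_eventually
    (A := fun i R (x : (ℂ → ℂ) × (ℂ → ℂ)) => IsGate (ε i) R x.1 x.2)
    (fun i R => Prod.exists.2 (exists_isGate (hε i) R)) fun i R x hx => hx.eventually_integral_le
  exact ⟨U, fun i => (x i).1, fun i => (x i).2, hU, hgate, hint⟩

/-- The function `∑_{j ∈ S} α₀ ⋯ αⱼ₋₁ φⱼ`. -/
noncomputable def gateCascade (S : Set ℕ) (φ α : ℕ → ℂ → ℂ) (s : ℂ) : ℂ :=
  cascade S (fun i => α i s) fun i => φ i s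

namespace IsGateSequence

variable {ε U : ℕ → ℝ} {φ α : ℕ → ℂ → ℂ} {S : Set ℕ} {s : ℂ}

lemma time_nonneg (h : IsGateSequence ε U φ α) (j : ℕ) : 0 ≤ U j :=
  (Nat.cast_nonneg j).trans (h.natCast_le j)

lemma tendsto_time (h : IsGateSequence ε U φ α) : Tendsto U atTop atTop :=
  tendsto_atTop_mono h.natCast_le tendsto_natCast_atTop_atTop

lemma norm_add_norm_le (h : IsGateSequence ε U φ α) (hs : 0 ≤ s.re) (i : ℕ) :
    ‖φ i s‖ + ‖α i s‖ ≤ 1 :=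
  (h.isGate i).norm_add_norm_le s hs

lemma norm_gateCascade_le_one (h : IsGateSequence ε U φ α) (hs : 0 ≤ s.re) :
    ‖gateCascade S φ α s‖ ≤ 1 :=
  norm_cascade_le_one (h.norm_add_norm_le hs)

lemma isDirichletPolynomial_cascadeTerm (h : IsGateSequence ε U φ α) (j : ℕ) :
    IsDirichletPolynomial (ε j) fun s => cascadeTerm S (fun i => α i s) (fun i => φ i s) j := by
  have hφ := (h.isGate j).isDirichletPolynomial_left
  by_cases hj : j ∈ S
  · have hprod := IsDirichletPolynomial.prod (range j) fun i _ =>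
      (h.isGate i).isDirichletPolynomial_right
    simpa [cascadeTerm, hj] using hprod.mul hφ
  · simpa [cascadeTerm, hj] using IsDirichletPolynomial.zero.mono hφ.nonneg

lemma exists_dirichletSeries (h : IsGateSequence ε U φ α) (hε : Summable ε) (S : Set ℕ) :
    ∃ a : ℕ → ℂ, ∀ s : ℂ, 1 ≤ s.re →
      HasSum (fun m : ℕ => a (m + 1) * ((m + 1 : ℕ) : ℂ) ^ (-s)) (gateCascade S φ α s) :=
  exists_dirichletSeries_hasSum_tsum_of_isDirichletPolynomial hε
    h.isDirichletPolynomial_cascadeTerm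

lemma tendstoLocallyUniformlyOn (h : IsGateSequence ε U φ α) (hε : Summable ε) :
    TendstoLocallyUniformlyOn
      (fun n s => ∑ k ∈ range n, cascadeTerm S (fun i => α i s) (fun i => φ i s) k)
      (gateCascade S φ α) atTop {s | 0 ≤ s.re} := by
  refine tendstoLocallyUniformlyOn_of_forall_exists_nhds fun s _ =>
    ⟨_, inter_mem_nhdsWithin _ (Metric.ball_mem_nhds s one_pos), ?_⟩
  refine tendstoUniformlyOn_tsum_nat_eventually (u := fun k => ε (k - 1))
    ((summable_nat_add_iff 1).1 (by simpa using hε)) ?_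
  obtain ⟨m, hm⟩ := exists_nat_ge (‖s‖ + 1)
  filter_upwards [eventually_gt_atTop m] with k hk z ⟨hz, hzs⟩
  obtain ⟨k, rfl⟩ := Nat.exists_eq_add_one_of_ne_zero (Nat.ne_zero_of_lt hk)
  have hz_le : ‖z‖ ≤ U k := by
    have hmk : (m : ℝ) ≤ k := Nat.cast_le.2 (Nat.le_of_lt_succ hk)
    have hzs' := mem_ball_iff_norm.1 hzs
    linarith [norm_le_norm_add_norm_sub' z s, h.natCast_le k]
  exact (norm_cascadeTerm_succ_le (h.norm_add_norm_le hz) k).trans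
    ((h.isGate k).norm_le z hz hz_le)

lemma differentiableOn_gateCascade (h : IsGateSequence ε U φ α) (hε : Summable ε) :
    DifferentiableOn ℂ (gateCascade S φ α) {s | 0 < s.re} := by
  refine ((h.tendstoLocallyUniformlyOn hε).mono fun s hs => le_of_lt hs).differentiableOn
    (Eventually.of_forall fun n => ?_) (isOpen_lt continuous_const continuous_re)
  exact (Differentiable.fun_sum fun k _ =>
    (h.isDirichletPolynomial_cascadeTerm k).differentiable).differentiableOn

lemma continuousOn_gateCascade (h : IsGateSequence ε U φ α) (hε : Summable ε) :
    ContinuousOn (gateCascade S φ α) {s | 0 ≤ s.re} :=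
  (h.tendstoLocallyUniformlyOn hε).continuousOn <| Frequently.of_forall fun _ =>
    continuousOn_finsetSum _ fun k _ =>
      (h.isDirichletPolynomial_cascadeTerm k).differentiable.continuous.continuousOn

lemma tendsto_gateCascade_nhdsGT_zero (h : IsGateSequence ε U φ α) (hε : Summable ε) (t : ℝ) :
    Tendsto (fun σ : ℝ => gateCascade S φ α (σ + t * I)) (𝓝[>] 0)
      (𝓝 (gateCascade S φ α (t * I))) := by
  have hline : Tendsto (fun σ : ℝ => (σ : ℂ) + t * I) (𝓝[>] 0) (𝓝[{s | 0 ≤ s.re}] (t * I)) := by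
    refine tendsto_nhdsWithin_iff.2 ⟨?_, ?_⟩
    · exact tendsto_nhdsWithin_of_tendsto_nhds (Continuous.tendsto' (by fun_prop) _ _ (by simp))
    · filter_upwards [self_mem_nhdsWithin] with σ hσ
      simpa using le_of_lt hσ
  exact (h.continuousOn_gateCascade hε (t * I) (by simp)).tendsto.comp hline

lemma continuous_gateCascade_ofReal_mul_I (h : IsGateSequence ε U φ α) (hε : Summable ε) :
    Continuous fun t : ℝ => gateCascade S φ α (t * I) :=
  (h.continuousOn_gateCascade hε).comp_continuous (by fun_prop) (by simp)

lemma continuous_one_sub_norm (h : IsGateSequence ε U φ α) (i : ℕ) :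
    Continuous fun t : ℝ => 1 - ‖α i (t * I)‖ :=
  continuous_const.sub <| .norm <|
    (h.isGate i).isDirichletPolynomial_right.differentiable.continuous.comp (by fun_prop)

lemma continuous_sum_one_sub_norm (h : IsGateSequence ε U φ α) (j : ℕ) :
    Continuous fun t : ℝ => ∑ k ∈ range j, (1 - ‖α k (t * I)‖) :=
  continuous_finsetSum _ fun k _ => h.continuous_one_sub_norm k

lemma integral_sum_one_sub_norm_add_le (h : IsGateSequence ε U φ α) (j : ℕ) :
    ∫ t in (0 : ℝ)..U j, (∑ k ∈ range j, (1 - ‖α k (t * I)‖) + ε j) ≤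
      (∑ k ∈ range (j + 1), ε k) * U j := by
  rw [intervalIntegral.integral_add ((h.continuous_sum_one_sub_norm j).intervalIntegrable _ _)
      intervalIntegrable_const, intervalIntegral.integral_finsetSum fun k _ =>
      (h.continuous_one_sub_norm k).intervalIntegrable _ _,
    intervalIntegral.integral_const, sub_zero, smul_eq_mul, mul_comm (U j),
    Finset.sum_range_succ, add_mul, Finset.sum_mul]
  gcongr with k hk
  exact h.integral_le k j (Finset.mem_range.1 hk)

lemma integral_sq_norm_gateCascade_le (h : IsGateSequence ε U φ α) (hε : Summable ε)
    {j : ℕ} (hj : j ∉ S) :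
    ∫ t in (0 : ℝ)..U j, ‖gateCascade S φ α (t * I)‖ ^ 2 ≤ (∑ k ∈ range (j + 1), ε k) * U j := by
  refine (intervalIntegral.integral_mono_on (h.time_nonneg j) ?_ ?_ fun t ht => ?_).trans
    (h.integral_sum_one_sub_norm_add_le j)
  · exact ((h.continuous_gateCascade_ofReal_mul_I hε).norm.pow 2).intervalIntegrable _ _
  · exact ((h.continuous_sum_one_sub_norm j).add continuous_const).intervalIntegrable _ _
  · exact sq_norm_cascade_le (h.norm_add_norm_le (by simp)) hj
      ((h.isGate j).one_sub_le_norm t (by rw [abs_of_nonneg ht.1]; exact ht.2))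

lemma le_integral_sq_norm_gateCascade (h : IsGateSequence ε U φ α) (hε : Summable ε)
    {j : ℕ} (hj : j ∈ S) :
    (1 - 4 * ∑ k ∈ range (j + 1), ε k) * U j ≤
      ∫ t in (0 : ℝ)..U j, ‖gateCascade S φ α (t * I)‖ ^ 2 := by
  have hcont : Continuous fun t : ℝ => ∑ k ∈ range j, (1 - ‖α k (t * I)‖) + ε j :=
    (h.continuous_sum_one_sub_norm j).add continuous_const
  have hmono : ∫ t in (0 : ℝ)..U j, (1 - 4 * (∑ k ∈ range j, (1 - ‖α k (t * I)‖) + ε j)) ≤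
      ∫ t in (0 : ℝ)..U j, ‖gateCascade S φ α (t * I)‖ ^ 2 := by
    refine intervalIntegral.integral_mono_on (h.time_nonneg j) ?_ ?_ fun t ht => ?_
    · exact (continuous_const.sub (hcont.const_mul 4)).intervalIntegrable _ _
    · exact ((h.continuous_gateCascade_ofReal_mul_I hε).norm.pow 2).intervalIntegrable _ _
    · exact le_sq_norm_cascade (h.norm_add_norm_le (by simp)) hj
        ((h.isGate j).one_sub_le_norm t (by rw [abs_of_nonneg ht.1]; exact ht.2))
  rw [intervalIntegral.integral_sub intervalIntegrable_const
      ((hcont.const_mul 4).intervalIntegrable _ _), intervalIntegral.integral_const,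
    intervalIntegral.integral_const_mul, sub_zero, smul_eq_mul, mul_one] at hmono
  linarith [h.integral_sum_one_sub_norm_add_le j]

end IsGateSequence

end GateSequence

lemma not_exists_tendsto_average_of_frequently {g : ℝ → ℝ} {U : ℕ → ℝ} {a b : ℝ} (hab : a < b)
    (hU : Tendsto U atTop atTop) (ha : ∃ᶠ j in atTop, ∫ t in (0 : ℝ)..U j, g t ≤ a * U j)
    (hb : ∃ᶠ j in atTop, b * U j ≤ ∫ t in (0 : ℝ)..U j, g t) :
    ¬ ∃ l : ℝ, Tendsto (fun T : ℝ => (1 / T) * ∫ t in (0 : ℝ)..T, g t) atTop (𝓝 l) := by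
  rintro ⟨l, hl⟩
  have hU₀ := hU.eventually_gt_atTop 0
  have hla : l ≤ a := by
    refine le_of_tendsto_of_frequently (hl.comp hU) ((ha.and_eventually hU₀).mono ?_)
    rintro j ⟨hj, hUj⟩
    rwa [Function.comp_apply, one_div_mul_eq_div, div_le_iff₀ hUj]
  have hbl : b ≤ l := by
    refine ge_of_tendsto_of_frequently (hl.comp hU) ((hb.and_eventually hU₀).mono ?_)
    rintro j ⟨hj, hUj⟩
    rwa [Function.comp_apply, one_div_mul_eq_div, le_div_iff₀ hUj]
  exact hab.not_ge (hla.trans' hbl)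

end HinftyMeanSquare

open HinftyMeanSquare in
/-- There exists a function in `𝓗^∞` (bounded analytic on `Re s > 0`, represented by an
ordinary Dirichlet series in some half-plane) whose boundary values `fb` on the imaginary
axis satisfy: the limit `lim_{T→∞} (1/T) ∫_0^T |f(it)|² dt` does not exist. -/
theorem exists_Hinfty_mean_square_limit_fails :
    ∃ (f : ℂ → ℂ) (a : ℕ → ℂ) (σ₀ : ℝ) (fb : ℝ → ℂ),
      DifferentiableOn ℂ f {s : ℂ | 0 < s.re} ∧
      (∃ C : ℝ, ∀ s : ℂ, 0 < s.re → ‖f s‖ ≤ C) ∧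
      (∀ s : ℂ, σ₀ < s.re →
        HasSum (fun n : ℕ => a (n + 1) * ((n + 1 : ℕ) : ℂ) ^ (-s)) (f s)) ∧
      (∀ᵐ t : ℝ ∂volume,
        Tendsto (fun σ : ℝ => f (σ + t * I)) (nhdsWithin 0 (Set.Ioi 0)) (nhds (fb t))) ∧
      ¬ ∃ l : ℝ,
        Tendsto (fun T : ℝ => (1 / T) * ∫ t in (0:ℝ)..T, ‖fb t‖ ^ 2) atTop (nhds l) := by
  have hsum : Summable fun i : ℕ => (1 / 2 : ℝ) ^ i / 20 := summable_geometric_two.div_const 20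
  have hsum_le (j : ℕ) : ∑ k ∈ Finset.range j, (1 / 2 : ℝ) ^ k / 20 ≤ 1 / 10 := by
    rw [← Finset.sum_div]
    linarith [sum_geometric_two_le j]
  obtain ⟨U, φ, α, h⟩ :=
    exists_isGateSequence (ε := fun i => (1 / 2 : ℝ) ^ i / 20) fun i => by positivity
  obtain ⟨a, ha⟩ := h.exists_dirichletSeries hsum {j | Even j}
  refine ⟨gateCascade {j | Even j} φ α, a, 1, fun t => gateCascade {j | Even j} φ α (t * I),
    h.differentiableOn_gateCascade hsum, ⟨1, fun s hs => h.norm_gateCascade_le_one hs.le⟩,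
    fun s hs => ha s hs.le, ae_of_all _ (h.tendsto_gateCascade_nhdsGT_zero hsum),
    not_exists_tendsto_average_of_frequently (a := 1 / 10) (b := 6 / 10) (by norm_num)
      h.tendsto_time (Nat.frequently_odd.mono fun j hj => ?_)
      (Nat.frequently_even.mono fun j hj => ?_)⟩
  · exact (h.integral_sq_norm_gateCascade_le hsum (Nat.not_even_iff_odd.2 hj)).trans
      (mul_le_mul_of_nonneg_right (hsum_le _) (h.time_nonneg j))
  · refine (mul_le_mul_of_nonneg_right ?_ (h.time_nonneg j)).trans
      (h.le_integral_sq_norm_gateCascade hsum hj)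
    linarith [hsum_le (j + 1)]
end

section
/- For every ε > 0 there exists a singular inner function g in the class 𝓗^∞ (bounded analytic on Re s > 0, representable by a Dirichlet series ∑ a_n n^{-s}) such that |g(it)| = 1 for almost every t, while ∑_{n=1}^∞ |a_n|² ≤ ε². -/
open MeasureTheory Filter Complex Real

/-!
The idea is to start from blocks `H k` of Dirichlet polynomials times their conjugates, so that
`0 ≤ H k ≤ 1` on the imaginary axis, whose Bohr means have a tiny sum although `H k` is close to `1`
on the disc of radius `k`. The weights `q k = H k * ∏ j < k, (1 - H j)` are nonnegative on the axis,
sum to `1`, and multiplying `q k` by a suitable character `n_k⁻ˢ` makes it a Dirichlet polynomial.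
Hence `f = ∑ q k * (1 + n_k⁻ˢ) / (1 - n_k⁻ˢ)` has real part `0` almost everywhere on the axis, and
`g = exp (-l * f)` is singular inner.

Damping `n_k⁻ˢ` by a factor `r < 1` and truncating the sum gives approximants of `g` with absolutely
summable coefficients. They are bounded by `1` by Phragmén–Lindelöf. On the axis their squared
modulus is at most `exp (-2 * l) + ∑ H k`, so by Parseval's identity the squared `ℓ²`-norm of their
coefficients is at most the Bohr mean of this majorant; the bound passes to the limit coefficient by
coefficient.
-/

section DirichletSeries

/-- The completely multiplicative function `n ↦ n ^ (-s)`. -/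
noncomputable def dirichletHom (s : ℂ) : ℕ+ →* ℂ where
  toFun n := (n : ℂ) ^ (-s)
  map_one' := by simp
  map_mul' m n := by rw [PNat.mul_coe, Nat.cast_mul, natCast_mul_natCast_cpow]

lemma dirichletHom_apply (s : ℂ) (n : ℕ+) : dirichletHom s n = (n : ℂ) ^ (-s) := rfl

lemma dirichletHom_eq_exp (s : ℂ) (n : ℕ+) :
    dirichletHom s n = Complex.exp (-(s * (Real.log n : ℝ))) := by
  rw [dirichletHom_apply, cpow_def_of_ne_zero (mod_cast n.ne_zero), natCast_log, mul_neg, mul_comm]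

lemma dirichletHom_add (s w : ℂ) (n : ℕ+) :
    dirichletHom (s + w) n = dirichletHom s n * dirichletHom w n := by
  simp only [dirichletHom_eq_exp, ← Complex.exp_add]
  ring_nf

lemma dirichletHom_mul_I (t : ℝ) (n : ℕ+) :
    dirichletHom (t * I) n = Complex.exp ((-Real.log n * t : ℝ) * I) := by
  rw [dirichletHom_eq_exp]
  push_cast
  ring_nf

lemma dirichletHom_neg_mul_I (t : ℝ) (n : ℕ+) :
    dirichletHom (-(t * I)) n = (starRingEnd ℂ) (dirichletHom (t * I) n) := by
  simp only [dirichletHom_eq_exp, ← exp_conj, map_neg, map_mul, conj_ofReal, conj_I]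
  ring_nf

lemma norm_dirichletHom (s : ℂ) (n : ℕ+) : ‖dirichletHom s n‖ = (n : ℝ) ^ (-s.re) := by
  rw [dirichletHom_apply, norm_natCast_cpow_of_pos n.pos, neg_re]

lemma norm_dirichletHom_le_one {s : ℂ} (hs : 0 ≤ s.re) (n : ℕ+) : ‖dirichletHom s n‖ ≤ 1 := by
  rw [norm_dirichletHom]
  exact Real.rpow_le_one_of_one_le_of_nonpos (mod_cast one_le) (neg_nonpos.2 hs)

lemma norm_dirichletHom_mul_I (t : ℝ) (n : ℕ+) : ‖dirichletHom (t * I) n‖ = 1 := by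
  simp [norm_dirichletHom]

lemma norm_mul_dirichletHom_le {s : ℂ} (hs : 0 ≤ s.re) (c : ℂ) (n : ℕ+) :
    ‖c * dirichletHom s n‖ ≤ ‖c‖ := by
  rw [norm_mul]
  exact mul_le_of_le_one_right (norm_nonneg c) (norm_dirichletHom_le_one hs n)

lemma differentiable_dirichletHom (n : ℕ+) : Differentiable ℂ fun s ↦ dirichletHom s n := by
  simp only [dirichletHom_eq_exp]
  fun_prop

/-- `F` lies in the Wiener algebra of Dirichlet series: on the closed half-plane `0 ≤ Re s` it is
the sum of an absolutely convergent series `∑ aₙ n⁻ˢ` with `∑ |aₙ| ≤ C`. -/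
def WienerDirichlet (F : ℂ → ℂ) (C : ℝ) : Prop :=
  ∃ a : ℕ+ → ℂ, Summable (fun n ↦ ‖a n‖) ∧ ∑' n, ‖a n‖ ≤ C ∧
    ∀ s : ℂ, 0 ≤ s.re → HasSum (fun n ↦ a n * dirichletHom s n) (F s)

namespace WienerDirichlet

variable {F G : ℂ → ℂ} {C D : ℝ} {ι : Type*}

lemma of_hasSum (c : ι → ℂ) (N : ι → ℕ+) (hc : Summable fun i ↦ ‖c i‖) (hC : ∑' i, ‖c i‖ ≤ C)
    (hF : ∀ s : ℂ, 0 ≤ s.re → HasSum (fun i ↦ c i * dirichletHom s (N i)) (F s)) :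
    WienerDirichlet F C := by
  let e := Equiv.sigmaFiberEquiv N
  have hce : Summable fun x ↦ ‖c (e x)‖ := e.summable_iff.2 hc
  have hfiber (n : ℕ+) : Summable fun i : {i // N i = n} ↦ ‖c i‖ := hce.sigma_factor n
  have hle (n : ℕ+) : ‖∑' i : {i // N i = n}, c i‖ ≤ ∑' i : {i // N i = n}, ‖c i‖ :=
    norm_tsum_le_tsum_norm (hfiber n)
  have hnorm : Summable fun n : ℕ+ ↦ ∑' i : {i // N i = n}, ‖c i‖ := hce.sigma
  have hsum : Summable fun n : ℕ+ ↦ ‖∑' i : {i // N i = n}, c i‖ :=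
    hnorm.of_nonneg_of_le (fun _ ↦ norm_nonneg _) hle
  refine ⟨fun n ↦ ∑' i : {i // N i = n}, c i, hsum, ?_, fun s hs ↦ ?_⟩
  · calc ∑' n : ℕ+, ‖∑' i : {i // N i = n}, c i‖
        ≤ ∑' (n : ℕ+) (i : {i // N i = n}), ‖c i‖ := hsum.tsum_le_tsum hle hnorm
      _ = ∑' x, ‖c (e x)‖ := hce.tsum_sigma.symm
      _ = ∑' i, ‖c i‖ := e.tsum_eq fun i ↦ ‖c i‖
      _ ≤ C := hC
  · refine (e.hasSum_iff.2 (hF s hs)).sigma fun n ↦ ?_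
    refine ((hfiber n).of_norm.hasSum.mul_right (dirichletHom s n)).congr_fun fun i ↦ ?_
    exact congrArg (c i * dirichletHom s ·) i.2

lemma mono (hF : WienerDirichlet F C) (hCD : C ≤ D) : WienerDirichlet F D :=
  let ⟨a, ha, haC, hs⟩ := hF
  ⟨a, ha, haC.trans hCD, hs⟩

lemma congr (hF : WienerDirichlet F C) (hG : ∀ s : ℂ, 0 ≤ s.re → G s = F s) :
    WienerDirichlet G C :=
  let ⟨a, ha, haC, hs⟩ := hF
  ⟨a, ha, haC, fun s h ↦ hG s h ▸ hs s h⟩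

lemma norm_le (hF : WienerDirichlet F C) {s : ℂ} (hs : 0 ≤ s.re) : ‖F s‖ ≤ C := by
  obtain ⟨a, ha, haC, hF⟩ := hF
  rw [← (hF s hs).tsum_eq]
  exact (tsum_of_norm_bounded ha.hasSum fun n ↦ norm_mul_dirichletHom_le hs _ _).trans haC

lemma bound_nonneg (hF : WienerDirichlet F C) : 0 ≤ C :=
  let ⟨_, _, haC, _⟩ := hF
  (tsum_nonneg fun _ ↦ norm_nonneg _).trans haC

lemma sum_of_finset (A : Finset ι) (c : ι → ℂ) (N : ι → ℕ+) :
    WienerDirichlet (fun s ↦ ∑ i ∈ A, c i * dirichletHom s (N i)) (∑ i ∈ A, ‖c i‖) := by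
  refine of_hasSum (fun i : A ↦ c i) (fun i ↦ N i) Summable.of_finite ?_ fun s _ ↦ ?_
  · rw [tsum_fintype, Finset.sum_coe_sort A fun i ↦ ‖c i‖]
  · rw [← Finset.sum_coe_sort A fun i ↦ c i * dirichletHom s (N i)]
    exact hasSum_fintype _

lemma const (c : ℂ) : WienerDirichlet (fun _ ↦ c) ‖c‖ := by
  simpa using sum_of_finset {()} (fun _ ↦ c) fun _ ↦ 1

lemma monomial (n : ℕ+) : WienerDirichlet (fun s ↦ dirichletHom s n) 1 := by
  simpa using sum_of_finset {()} (fun _ ↦ 1) fun _ ↦ n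

lemma mul (hF : WienerDirichlet F C) (hG : WienerDirichlet G D) :
    WienerDirichlet (fun s ↦ F s * G s) (C * D) := by
  have hC := hF.bound_nonneg
  obtain ⟨a, ha, haC, hF⟩ := hF
  obtain ⟨b, hb, hbD, hG⟩ := hG
  have hab : Summable fun x : ℕ+ × ℕ+ ↦ ‖a x.1 * b x.2‖ := ha.mul_norm hb
  refine of_hasSum (fun x : ℕ+ × ℕ+ ↦ a x.1 * b x.2) (fun x ↦ x.1 * x.2) hab ?_ fun s hs ↦ ?_
  · simp only [norm_mul] at hab ⊢
    rw [← ha.tsum_mul_tsum hb hab]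
    gcongr
  · have hterm (x : ℕ+ × ℕ+) : a x.1 * b x.2 * dirichletHom s (x.1 * x.2) =
        a x.1 * dirichletHom s x.1 * (b x.2 * dirichletHom s x.2) := by
      rw [map_mul]; ring
    have hsum : Summable fun x : ℕ+ × ℕ+ ↦ a x.1 * b x.2 * dirichletHom s (x.1 * x.2) :=
      .of_norm_bounded hab fun x ↦ norm_mul_dirichletHom_le hs _ _
    simp only [hterm] at hsum ⊢
    exact HasSum.mul (f := fun m ↦ a m * dirichletHom s m) (g := fun n ↦ b n * dirichletHom s n)
      (hF s hs) (hG s hs) hsum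

lemma const_mul (hF : WienerDirichlet F C) (c : ℂ) : WienerDirichlet (fun s ↦ c * F s) (‖c‖ * C) :=
  (const c).mul hF

lemma pow (hF : WienerDirichlet F C) (k : ℕ) : WienerDirichlet (fun s ↦ F s ^ k) (C ^ k) := by
  induction k with
  | zero => simpa using const 1
  | succ k ih => simpa only [pow_succ] using ih.mul hF

lemma prod (A : Finset ι) {F : ι → ℂ → ℂ} {C : ι → ℝ} (hF : ∀ i, WienerDirichlet (F i) (C i)) :
    WienerDirichlet (fun s ↦ ∏ i ∈ A, F i s) (∏ i ∈ A, C i) := by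
  classical
  induction A using Finset.induction_on with
  | empty => simpa using const 1
  | insert i A hi ih => simpa only [Finset.prod_insert hi] using (hF i).mul ih

lemma tsum {F : ι → ℂ → ℂ} {C : ι → ℝ} (hF : ∀ i, WienerDirichlet (F i) (C i))
    (hC : Summable C) : WienerDirichlet (fun s ↦ ∑' i, F i s) (∑' i, C i) := by
  choose a ha haC hF using hF
  have hsum : Summable fun x : ι × ℕ+ ↦ ‖a x.1 x.2‖ := by
    rw [summable_prod_of_nonneg fun _ ↦ norm_nonneg _]
    exact ⟨ha, hC.of_nonneg_of_le (fun i ↦ tsum_nonneg fun _ ↦ norm_nonneg _) haC⟩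
  refine of_hasSum (fun x : ι × ℕ+ ↦ a x.1 x.2) (fun x ↦ x.2) hsum ?_ fun s hs ↦ ?_
  · rw [hsum.tsum_prod]
    exact hsum.prod.tsum_le_tsum haC hC
  · have hprod : Summable fun x : ι × ℕ+ ↦ a x.1 x.2 * dirichletHom s x.2 :=
      .of_norm_bounded hsum fun x ↦ norm_mul_dirichletHom_le hs _ _
    rw [(hprod.hasSum.prod_fiberwise fun i ↦ hF i s hs).tsum_eq]
    exact hprod.hasSum

lemma sum (A : Finset ι) {F : ι → ℂ → ℂ} {C : ι → ℝ} (hF : ∀ i, WienerDirichlet (F i) (C i)) :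
    WienerDirichlet (fun s ↦ ∑ i ∈ A, F i s) (∑ i ∈ A, C i) := by
  simpa only [← Finset.tsum_subtype] using tsum (fun i : A ↦ hF i) Summable.of_finite

lemma add (hF : WienerDirichlet F C) (hG : WienerDirichlet G D) :
    WienerDirichlet (fun s ↦ F s + G s) (C + D) := by
  simpa using sum (F := fun b ↦ cond b F G) (C := fun b ↦ cond b C D) Finset.univ
    (Bool.rec hG hF)

lemma exp (hF : WienerDirichlet F C) :
    WienerDirichlet (fun s ↦ Complex.exp (F s)) (Real.exp C) := by
  have hexp := tsum (fun k ↦ (hF.pow k).const_mul (k.factorial : ℂ)⁻¹) <| by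
    simpa [div_eq_inv_mul] using Real.summable_pow_div_factorial C
  rw [Complex.exp_eq_exp_ℂ, Real.exp_eq_exp_ℝ, NormedSpace.exp_eq_tsum_div,
    NormedSpace.exp_eq_tsum_div]
  simpa [div_eq_inv_mul] using hexp

lemma inv_one_sub (hF : WienerDirichlet F C) (hC : C < 1) :
    WienerDirichlet (fun s ↦ (1 - F s)⁻¹) (1 - C)⁻¹ := by
  have hgeom := tsum hF.pow (summable_geometric_of_lt_one hF.bound_nonneg hC)
  rw [tsum_geometric_of_lt_one hF.bound_nonneg hC] at hgeom
  exact hgeom.congr fun s hs ↦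
    (tsum_geometric_of_norm_lt_one ((hF.norm_le hs).trans_lt hC)).symm

end WienerDirichlet

end DirichletSeries

section Boundary

namespace WienerDirichlet

variable {F : ℂ → ℂ} {C : ℝ}

lemma continuousOn (hF : WienerDirichlet F C) : ContinuousOn F {s | 0 ≤ s.re} := by
  obtain ⟨a, ha, -, hF⟩ := hF
  have hterm (n : ℕ+) : Continuous fun s ↦ a n * dirichletHom s n :=
    (differentiable_dirichletHom n).continuous.const_mul (a n)
  exact (continuousOn_tsum (fun n ↦ (hterm n).continuousOn) ha
    fun n s hs ↦ norm_mul_dirichletHom_le hs _ _).congr fun s hs ↦ (hF s hs).tsum_eq.symm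

lemma differentiableOn (hF : WienerDirichlet F C) : DifferentiableOn ℂ F {s | 0 < s.re} := by
  obtain ⟨a, ha, -, hF⟩ := hF
  have hterm (n : ℕ+) : Differentiable ℂ fun s ↦ a n * dirichletHom s n :=
    (differentiable_dirichletHom n).const_mul (a n)
  exact (differentiableOn_tsum_of_summable_norm ha (fun n ↦ (hterm n).differentiableOn)
    (isOpen_lt continuous_const continuous_re) fun n s hs ↦
    norm_mul_dirichletHom_le (le_of_lt hs) _ _).congr fun s hs ↦ (hF s (le_of_lt hs)).tsum_eq.symm

lemma continuous_mul_I (hF : WienerDirichlet F C) : Continuous fun t : ℝ ↦ F (t * I) :=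
  hF.continuousOn.comp_continuous (by fun_prop) (by simp)

lemma norm_le_of_norm_mul_I_le (hF : WienerDirichlet F C) {M : ℝ}
    (hM : ∀ t : ℝ, ‖F (t * I)‖ ≤ M) {s : ℂ} (hs : 0 ≤ s.re) : ‖F s‖ ≤ M := by
  refine PhragmenLindelof.right_half_plane_of_bounded_on_real
    ⟨hF.differentiableOn, by rw [closure_setOfPred_lt_re]; exact hF.continuousOn⟩
    ⟨0, zero_lt_two, 0, ?_⟩ ?_ hM hs
  · refine Asymptotics.IsBigO.of_bound C ?_
    filter_upwards [mem_inf_of_right (mem_principal_self _)] with z hz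
    simpa using hF.norm_le (le_of_lt hz)
  · refine isBoundedUnder_of_eventually_le (a := C) ?_
    filter_upwards [eventually_ge_atTop 0] with x hx
    exact hF.norm_le (by simpa using hx)

end WienerDirichlet

end Boundary

section BohrMean

open scoped Topology

/-- `f` has Bohr mean `m`: its averages over the symmetric intervals `[-T, T]` tend to `m`. -/
def HasBohrMean {E : Type*} [NormedAddCommGroup E] [NormedSpace ℝ E] (f : ℝ → E) (m : E) : Prop :=
  Tendsto (fun T : ℝ ↦ ⨍ t in (-T)..T, f t) atTop (𝓝 m)

variable {E ι : Type*} [NormedAddCommGroup E] [NormedSpace ℝ E]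

lemma norm_intervalAverage_le {f : ℝ → E} {C : ℝ} (hf : ∀ t, ‖f t‖ ≤ C) (a b : ℝ) :
    ‖⨍ t in a..b, f t‖ ≤ C := by
  have hC : 0 ≤ C := (norm_nonneg _).trans (hf 0)
  rw [interval_average_eq, norm_smul, norm_inv, Real.norm_eq_abs]
  calc |b - a|⁻¹ * ‖∫ t in a..b, f t‖ ≤ |b - a|⁻¹ * (C * |b - a|) := by
        gcongr
        exact intervalIntegral.norm_integral_le_of_norm_le_const fun t _ ↦ hf t
    _ = |b - a| / |b - a| * C := by ring
    _ ≤ C := mul_le_of_le_one_left hC (div_self_le_one _)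

lemma hasBohrMean_const [CompleteSpace E] (c : E) : HasBohrMean (fun _ ↦ c) c := by
  refine tendsto_const_nhds.congr' ?_
  filter_upwards [eventually_gt_atTop 0] with T hT
  rw [interval_average_eq, intervalIntegral.integral_const, inv_smul_smul₀ (by linarith)]

lemma hasBohrMean_exp (ω : ℝ) :
    HasBohrMean (fun t : ℝ ↦ Complex.exp ((ω * t : ℝ) * I)) (if ω = 0 then 1 else 0) := by
  split_ifs with hω
  · simpa [hω] using hasBohrMean_const (1 : ℂ)
  · have hne : (ω * I : ℂ) ≠ 0 := by simp [hω]
    have hint (T : ℝ) : ‖∫ t in (-T)..T, Complex.exp ((ω * t : ℝ) * I)‖ ≤ 2 / |ω| := by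
      have hexp (t : ℝ) : Complex.exp (ω * I * t) = Complex.exp ((ω * t : ℝ) * I) := by
        push_cast; ring_nf
      simp only [← hexp]
      rw [integral_exp_mul_complex hne, norm_div, norm_mul, norm_I, mul_one, norm_real,
        Real.norm_eq_abs]
      gcongr
      refine (norm_sub_le _ _).trans_eq ?_
      rw [hexp, hexp, norm_exp_ofReal_mul_I, norm_exp_ofReal_mul_I, one_add_one_eq_two]
    have hlim : Tendsto (fun T : ℝ ↦ (T - -T)⁻¹ * (2 / |ω|)) atTop (𝓝 0) := by
      have : Tendsto (fun T : ℝ ↦ T - -T) atTop atTop :=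
        (tendsto_id.const_mul_atTop two_pos).congr fun T ↦ by simp [two_mul]
      simpa using this.inv_tendsto_atTop.mul_const (2 / |ω|)
    refine squeeze_zero_norm' ?_ hlim
    filter_upwards [eventually_gt_atTop 0] with T hT
    rw [interval_average_eq, norm_smul, norm_inv, Real.norm_of_nonneg (by linarith)]
    have : 0 ≤ T - -T := by linarith
    gcongr
    exact hint T

lemma hasBohrMean_tsum [Countable ι] [CompleteSpace E] {f : ι → ℝ → E} {m : ι → E} {u : ι → ℝ}
    (hf : ∀ i, Continuous (f i)) (hu : Summable u) (hfu : ∀ i t, ‖f i t‖ ≤ u i)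
    (hm : ∀ i, HasBohrMean (f i) (m i)) : HasBohrMean (fun t ↦ ∑' i, f i t) (∑' i, m i) := by
  have hswap (T : ℝ) : ⨍ t in (-T)..T, ∑' i, f i t = ∑' i, ⨍ t in (-T)..T, f i t := by
    have hsum : HasSum (fun i ↦ ∫ t in (-T)..T, f i t) (∫ t in (-T)..T, ∑' i, f i t) :=
      intervalIntegral.hasSum_integral_of_dominated_convergence (fun i _ ↦ u i)
        (fun i ↦ (hf i).aestronglyMeasurable) (fun i ↦ .of_forall fun t _ ↦ hfu i t)
        (.of_forall fun _ _ ↦ hu) intervalIntegrable_const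
        (.of_forall fun t _ ↦ (Summable.of_norm_bounded hu (hfu · t)).hasSum)
    simp only [interval_average_eq]
    exact (hsum.const_smul _).tsum_eq.symm
  simp only [HasBohrMean, hswap]
  exact tendsto_tsum_of_dominated_convergence hu hm
    (.of_forall fun T i ↦ norm_intervalAverage_le (hfu i) _ _)

namespace HasBohrMean

lemma add {f g : ℝ → E} {a b : E} (hf : HasBohrMean f a) (hg : HasBohrMean g b)
    (hfc : Continuous f) (hgc : Continuous g) : HasBohrMean (fun t ↦ f t + g t) (a + b) := by
  refine (Tendsto.add hf hg).congr fun T ↦ ?_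
  simp only [interval_average_eq, ← smul_add]
  rw [intervalIntegral.integral_add (hfc.intervalIntegrable _ _) (hgc.intervalIntegrable _ _)]

lemma sum [CompleteSpace E] (A : Finset ι) {f : ι → ℝ → E} {m : ι → E}
    (hf : ∀ i, HasBohrMean (f i) (m i)) (hfc : ∀ i, Continuous (f i)) :
    HasBohrMean (fun t ↦ ∑ i ∈ A, f i t) (∑ i ∈ A, m i) := by
  classical
  induction A using Finset.induction_on with
  | empty => simpa using hasBohrMean_const (0 : E)
  | insert i A hi ih =>
    simpa only [Finset.sum_insert hi] using
      (hf i).add ih (hfc i) (continuous_finsetSum _ fun j _ ↦ hfc j)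

lemma const_mul {f : ℝ → ℂ} {m : ℂ} (hf : HasBohrMean f m) (c : ℂ) :
    HasBohrMean (fun t ↦ c * f t) (c * m) := by
  refine (Tendsto.const_mul c hf).congr fun T ↦ ?_
  rw [interval_average_eq, interval_average_eq, intervalIntegral.integral_const_mul,
    mul_smul_comm]

lemma of_ofReal {f : ℝ → ℝ} {m : ℝ} (hf : HasBohrMean (fun t ↦ (f t : ℂ)) m) :
    HasBohrMean f m := by
  refine tendsto_ofReal_iff.1 (hf.congr fun T ↦ ?_)
  rw [interval_average_eq, interval_average_eq, intervalIntegral.integral_ofReal, real_smul,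
    smul_eq_mul, ofReal_mul]

lemma mono {f g : ℝ → ℝ} {a b : ℝ} (hf : HasBohrMean f a) (hg : HasBohrMean g b)
    (hfc : Continuous f) (hgc : Continuous g) (hfg : ∀ t, f t ≤ g t) : a ≤ b := by
  refine le_of_tendsto_of_tendsto hf hg ?_
  filter_upwards [eventually_ge_atTop 0] with T hT
  simp only [interval_average_eq]
  have hle : -T ≤ T := by linarith
  exact smul_le_smul_of_nonneg_left (intervalIntegral.integral_mono_on hle
    (hfc.intervalIntegrable _ _) (hgc.intervalIntegrable _ _) fun t _ ↦ hfg t)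
    (inv_nonneg.2 (sub_nonneg.2 hle))

end HasBohrMean

lemma tsum_prod_eq_tsum_diag {α M : Type*} [AddCommMonoid M] [TopologicalSpace M]
    {f : α × α → M} (hf : ∀ i j, i ≠ j → f (i, j) = 0) :
    ∑' p, f p = ∑' i, f (i, i) := by
  refine (Function.Injective.tsum_eq (g := fun i : α ↦ (i, i))
    (fun i j h ↦ congrArg Prod.fst h) ?_).symm
  rintro ⟨i, j⟩ hij
  have : i = j := not_imp_comm.1 (hf i j) hij
  exact ⟨i, by rw [this]⟩

lemma hasBohrMean_norm_sq_tsum [Countable ι] {c : ι → ℂ} {ω : ι → ℝ} (hc : Summable (‖c ·‖))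
    (hω : Function.Injective ω) :
    HasBohrMean (fun t : ℝ ↦ ‖∑' i, c i * Complex.exp ((ω i * t : ℝ) * I)‖ ^ 2)
      (∑' i, ‖c i‖ ^ 2) := by
  let χ (i : ι) (t : ℝ) : ℂ := c i * Complex.exp ((ω i * t : ℝ) * I)
  have hχ (i : ι) (t : ℝ) : ‖χ i t‖ = ‖c i‖ := by
    rw [norm_mul, norm_exp_ofReal_mul_I, mul_one]
  have hχχ (i j : ι) (t : ℝ) : χ i t * (starRingEnd ℂ) (χ j t) =
      c i * (starRingEnd ℂ) (c j) * Complex.exp (((ω i - ω j) * t : ℝ) * I) := by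
    simp only [χ, map_mul, ← exp_conj, conj_ofReal, conj_I]
    rw [mul_mul_mul_comm, ← Complex.exp_add]
    push_cast
    ring_nf
  have hmean : HasBohrMean (fun t ↦ ∑' p : ι × ι, χ p.1 t * (starRingEnd ℂ) (χ p.2 t))
      (∑' p : ι × ι, c p.1 * (starRingEnd ℂ) (c p.2) * if ω p.1 - ω p.2 = 0 then 1 else 0) := by
    refine hasBohrMean_tsum (u := fun p ↦ ‖c p.1‖ * ‖c p.2‖) (fun p ↦ ?_)
      (hc.mul_of_nonneg hc (fun _ ↦ norm_nonneg _) fun _ ↦ norm_nonneg _) (fun p t ↦ ?_) fun p ↦ ?_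
    · simp only [hχχ]
      fun_prop
    · rw [norm_mul, RCLike.norm_conj, hχ, hχ]
    · simp only [hχχ]
      exact (hasBohrMean_exp _).const_mul _
  have hdiag : ∑' p : ι × ι, c p.1 * (starRingEnd ℂ) (c p.2) *
      (if ω p.1 - ω p.2 = 0 then 1 else 0) = ((∑' i, ‖c i‖ ^ 2 : ℝ) : ℂ) := by
    rw [tsum_prod_eq_tsum_diag fun i j hij ↦ by simp [sub_eq_zero, hω.ne hij], ofReal_tsum]
    simp [mul_conj, normSq_eq_norm_sq]
  have hsq (t : ℝ) : ∑' p : ι × ι, χ p.1 t * (starRingEnd ℂ) (χ p.2 t) =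
      ((‖∑' i, χ i t‖ ^ 2 : ℝ) : ℂ) := by
    have hs : Summable (‖χ · t‖) := by simpa only [hχ] using hc
    rw [← normSq_eq_norm_sq, ← mul_conj, conj_tsum, tsum_mul_tsum_of_summable_norm hs]
    simpa only [RCLike.norm_conj] using hs
  simp only [hdiag, hsq] at hmean
  exact hmean.of_ofReal

lemma injective_neg_log_pnat : Function.Injective fun n : ℕ+ ↦ -Real.log n := fun m n h ↦
  PNat.coe_injective <| Nat.cast_injective (R := ℝ) <|
    Real.log_injOn_pos (Set.mem_Ioi.2 <| mod_cast m.pos) (Set.mem_Ioi.2 <| mod_cast n.pos)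
      (neg_injective h)

lemma WienerDirichlet.exists_sum_norm_sq_le {F : ℂ → ℂ} {C m : ℝ} {u : ℝ → ℝ}
    (hF : WienerDirichlet F C) (hu : Continuous u) (hm : HasBohrMean u m)
    (hFu : ∀ t : ℝ, ‖F (t * I)‖ ^ 2 ≤ u t) :
    ∃ a : ℕ+ → ℂ, (∀ A : Finset ℕ+, ∑ n ∈ A, ‖a n‖ ^ 2 ≤ m) ∧
      ∀ s : ℂ, 0 ≤ s.re → HasSum (fun n ↦ a n * dirichletHom s n) (F s) := by
  have hcont := hF.continuous_mul_I
  obtain ⟨a, ha, -, hF⟩ := hF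
  refine ⟨a, fun A ↦ ?_, hF⟩
  have hparseval : HasBohrMean (fun t : ℝ ↦ ‖F (t * I)‖ ^ 2) (∑' n, ‖a n‖ ^ 2) := by
    refine (hasBohrMean_norm_sq_tsum ha injective_neg_log_pnat).congr fun T ↦ ?_
    simp only [← dirichletHom_mul_I]
    simp_rw [fun t : ℝ ↦ (hF (t * I) (by simp)).tsum_eq]
  have hsq : Summable fun n ↦ ‖a n‖ ^ 2 :=
    (ha.mul_left (∑' k, ‖a k‖)).of_nonneg_of_le (fun n ↦ sq_nonneg _) fun n ↦ by
      rw [sq]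
      gcongr
      exact ha.le_tsum n fun _ _ ↦ norm_nonneg _
  exact (hsq.sum_le_tsum A fun _ _ ↦ sq_nonneg _).trans
    (hparseval.mono hm (hcont.norm.pow 2) hu hFu)

end BohrMean

section SmallDivisors

lemma abs_sub_round_mul_two_pi_le (x : ℝ) :
    |x - round (x / (2 * Real.pi)) * (2 * Real.pi)| ≤ 2 * ‖1 - Complex.exp (x * I)‖ := by
  set j := round (x / (2 * Real.pi))
  set y := x - j * (2 * Real.pi)
  have hy : |y / 2| ≤ Real.pi / 2 := by
    have hy' : y = 2 * Real.pi * (x / (2 * Real.pi) - j) := by simp only [y]; field_simp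
    have := abs_sub_round (x / (2 * Real.pi))
    rw [hy', abs_div, abs_mul, abs_two, abs_of_pos Real.two_pi_pos]
    nlinarith [Real.pi_pos]
  have hexp : Complex.exp (x * I) = Complex.exp (I * y) :=
    Complex.exp_eq_exp_iff_exists_int.2 ⟨j, by push_cast [y]; ring⟩
  have hsin := Real.mul_abs_le_abs_sin hy
  rw [abs_div, abs_two] at hsin
  rw [hexp, norm_sub_rev, norm_exp_I_mul_ofReal_sub_one, norm_mul, Real.norm_eq_abs,
    Real.norm_eq_abs, abs_two]
  have hpi : 1 / 2 ≤ 2 / Real.pi := by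
    rw [div_le_div_iff₀ two_pos Real.pi_pos]
    linarith [Real.pi_le_four]
  calc |y| = 4 * (1 / 2 * (|y| / 2)) := by ring
    _ ≤ 4 * (2 / Real.pi * (|y| / 2)) := by gcongr
    _ ≤ 2 * (2 * |Real.sin (y / 2)|) := by linarith

lemma setOf_norm_one_sub_exp_lt_subset {L T η : ℝ} {J : ℕ} (hL : L ≠ 0) (hJ : |L| * T + 1 ≤ J) :
    {t : ℝ | |t| ≤ T ∧ ‖1 - Complex.exp ((L * t : ℝ) * I)‖ < η} ⊆
      ⋃ j ∈ Finset.Icc (-J : ℤ) J, Metric.closedBall (j * (2 * Real.pi) / L) (2 * η / |L|) := by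
  rintro t ⟨ht, hlt⟩
  have hnear := abs_sub_round_mul_two_pi_le (L * t)
  set j := round (L * t / (2 * Real.pi))
  have hj : |(j : ℝ)| ≤ J := by
    have hround : |(j : ℝ)| - |L * t / (2 * Real.pi)| ≤ 1 / 2 := by
      refine (abs_sub_abs_le_abs_sub _ _).trans ?_
      rw [abs_sub_comm]
      exact abs_sub_round _
    have hquot : |L * t / (2 * Real.pi)| ≤ |L| * T := by
      rw [abs_div, abs_mul, abs_of_pos Real.two_pi_pos]
      exact (div_le_self (by positivity) (by linarith [Real.pi_gt_three])).trans (by gcongr)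
    linarith
  refine Set.mem_iUnion₂.2 ⟨j, Finset.mem_Icc.2 (abs_le.1 (mod_cast hj)), ?_⟩
  rw [Metric.mem_closedBall, Real.dist_eq,
    show t - j * (2 * Real.pi) / L = (L * t - j * (2 * Real.pi)) / L by field_simp, abs_div]
  gcongr
  linarith

lemma volume_norm_one_sub_exp_lt_le {L T η : ℝ} (hL : L ≠ 0) (hη : 0 ≤ η) (hT : 0 ≤ T) :
    volume {t : ℝ | |t| ≤ T ∧ ‖1 - Complex.exp ((L * t : ℝ) * I)‖ < η} ≤
      ENNReal.ofReal ((8 * T + 20 / |L|) * η) := by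
  have hL' : 0 < |L| := abs_pos.2 hL
  set J := ⌈|L| * T⌉₊ + 1
  have hJ : |L| * T + 1 ≤ J := by push_cast [J]; linarith [Nat.le_ceil (|L| * T)]
  have hJ' : (J : ℝ) ≤ |L| * T + 2 := by
    push_cast [J]; linarith [Nat.ceil_lt_add_one (mul_nonneg hL'.le hT)]
  calc volume {t : ℝ | |t| ≤ T ∧ ‖1 - Complex.exp ((L * t : ℝ) * I)‖ < η}
      ≤ ∑ j ∈ Finset.Icc (-J : ℤ) J,
          volume (Metric.closedBall (j * (2 * Real.pi) / L) (2 * η / |L|)) :=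
        (measure_mono (setOf_norm_one_sub_exp_lt_subset hL hJ)).trans
          (measure_biUnion_finset_le _ _)
    _ = ENNReal.ofReal ((2 * J + 1) * (2 * (2 * η / |L|))) := by
        have hcard : ((J : ℤ) + 1 - -J).toNat = 2 * J + 1 := by omega
        simp only [Real.volume_closedBall, Finset.sum_const, Int.card_Icc, nsmul_eq_mul, hcard]
        rw [← ENNReal.ofReal_natCast, ← ENNReal.ofReal_mul (by positivity)]
        push_cast
        rfl
    _ ≤ ENNReal.ofReal ((8 * T + 20 / |L|) * η) := by
        refine ENNReal.ofReal_le_ofReal ?_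
        calc (2 * J + 1) * (2 * (2 * η / |L|))
            ≤ (2 * (|L| * T + 2) + 1) * (2 * (2 * η / |L|)) := by gcongr
          _ = (8 * T + 20 / |L|) * η := by field_simp; ring

lemma ae_exp_mul_I_ne_one {L : ℝ} (hL : L ≠ 0) :
    ∀ᵐ t : ℝ, Complex.exp ((L * t : ℝ) * I) ≠ 1 := by
  have hcount : {t : ℝ | Complex.exp ((L * t : ℝ) * I) = 1}.Countable := by
    refine (Set.countable_range fun n : ℤ ↦ n * (2 * Real.pi) / L).mono fun t ht ↦ ?_
    obtain ⟨n, hn⟩ := Complex.exp_eq_one_iff.1 ht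
    have : L * t = n * (2 * Real.pi) := by
      rw [← mul_assoc] at hn
      exact_mod_cast mul_right_cancel₀ I_ne_zero hn
    exact ⟨n, by field_simp; linarith⟩
  exact hcount.ae_notMem volume

lemma ae_summable_div_norm_one_sub_exp {L c : ℕ → ℝ} {L₀ : ℝ} (hL₀ : 0 < L₀) (hL : ∀ k, L₀ ≤ |L k|)
    (hc : ∀ k, 0 ≤ c k) (hsum : Summable fun k ↦ √(c k)) :
    ∀ᵐ t : ℝ, Summable fun k ↦ c k / ‖1 - Complex.exp ((L k * t : ℝ) * I)‖ := by
  have hLpos (k : ℕ) : 0 < |L k| := hL₀.trans_le (hL k)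
  have hbad (T : ℕ) : ∀ᵐ t : ℝ, ∀ᶠ k in atTop,
      t ∉ {t : ℝ | |t| ≤ T ∧ ‖1 - Complex.exp ((L k * t : ℝ) * I)‖ < √(c k)} := by
    refine ae_eventually_notMem (ne_top_of_le_ne_top
      (ENNReal.ofReal_ne_top (r := ∑' k, (8 * T + 20 / L₀) * √(c k))) ?_)
    rw [ENNReal.ofReal_tsum_of_nonneg (fun k ↦ by positivity) (hsum.mul_left _)]
    refine ENNReal.tsum_le_tsum fun k ↦ (volume_norm_one_sub_exp_lt_le (abs_pos.1 (hLpos k))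
      (Real.sqrt_nonneg _) T.cast_nonneg).trans (ENNReal.ofReal_le_ofReal ?_)
    gcongr
    exact hL k
  filter_upwards [ae_all_iff.2 hbad] with t ht
  obtain ⟨T, hT⟩ := exists_nat_ge |t|
  refine Summable.of_norm_bounded_eventually_nat hsum ?_
  filter_upwards [ht T] with k hk
  have hle : √(c k) ≤ ‖1 - Complex.exp ((L k * t : ℝ) * I)‖ := not_lt.1 fun h ↦ hk ⟨hT, h⟩
  rw [Real.norm_of_nonneg (div_nonneg (hc k) (norm_nonneg _))]
  refine div_le_of_le_mul₀ (norm_nonneg _) (Real.sqrt_nonneg _) ?_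
  calc c k = √(c k) * √(c k) := (Real.mul_self_sqrt (hc k)).symm
    _ ≤ √(c k) * ‖1 - Complex.exp ((L k * t : ℝ) * I)‖ := by gcongr

end SmallDivisors

section Cayley

/-- The Cayley transform `(1 + z) / (1 - z)` of the unit disc onto the right half-plane. -/
noncomputable def cayley (z : ℂ) : ℂ := (1 + z) / (1 - z)

lemma re_cayley (z : ℂ) : (cayley z).re = (1 - ‖z‖ ^ 2) / ‖1 - z‖ ^ 2 := by
  have h : poissonKernel 0 z 1 = (herglotzRieszKernel 0 z 1).re :=
    congrFun poissonKernel_eq_re_herglotzRieszKernel 1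
  simpa [cayley, poissonKernel, herglotzRieszKernel] using h.symm

lemma re_cayley_nonneg {z : ℂ} (hz : ‖z‖ ≤ 1) : 0 ≤ (cayley z).re := by
  rw [re_cayley]
  have := pow_le_one₀ (n := 2) (norm_nonneg z) hz
  exact div_nonneg (by linarith) (sq_nonneg _)

lemma re_cayley_eq_zero {z : ℂ} (hz : ‖z‖ = 1) : (cayley z).re = 0 := by simp [re_cayley, hz]

lemma norm_cayley_le {z : ℂ} (hz : ‖z‖ ≤ 1) : ‖cayley z‖ ≤ 2 / ‖1 - z‖ := by
  rw [cayley, norm_div]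
  gcongr
  exact (norm_add_le _ _).trans (by rw [norm_one]; linarith)

lemma norm_cayley_le_of_norm_le {z : ℂ} {q : ℝ} (hz : ‖z‖ ≤ q) (hq : q < 1) :
    ‖cayley z‖ ≤ 2 / (1 - q) := by
  have hsub : 1 - q ≤ ‖1 - z‖ := by
    linarith [norm_sub_norm_le (1 : ℂ) z, norm_one (α := ℂ)]
  exact (norm_cayley_le (hz.trans hq.le)).trans <|
    div_le_div_of_nonneg_left zero_le_two (sub_pos.2 hq) hsub

lemma cayley_eq_one_add {z : ℂ} (hz : z ≠ 1) : cayley z = 1 + 2 * z * (1 - z)⁻¹ := by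
  have := sub_ne_zero.2 hz.symm
  rw [cayley]
  field_simp
  ring

lemma differentiableAt_cayley {z : ℂ} (hz : z ≠ 1) : DifferentiableAt ℂ cayley z :=
  ((differentiableAt_const 1).add differentiableAt_id).div
    ((differentiableAt_const 1).sub differentiableAt_id) (sub_ne_zero.2 hz.symm)

lemma norm_one_sub_le_two_mul {z : ℂ} (hz : ‖z‖ ≤ 1) {ρ : ℝ} (hρ₀ : 0 ≤ ρ) (hρ₁ : ρ ≤ 1) :
    ‖1 - z‖ ≤ 2 * ‖1 - ρ * z‖ := by
  have hρz : ‖(ρ : ℂ) * z‖ ≤ ρ := by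
    rw [norm_mul, Complex.norm_of_nonneg hρ₀]
    exact mul_le_of_le_one_right hρ₀ hz
  have hgap : 1 - ρ ≤ ‖1 - ρ * z‖ := by
    have := norm_sub_norm_le (1 : ℂ) (ρ * z)
    rw [norm_one] at this
    linarith
  have hsplit : 1 - z = (1 - ρ * z) - ((1 - ρ : ℝ) : ℂ) * z := by push_cast; ring
  calc ‖1 - z‖ ≤ ‖1 - ρ * z‖ + ‖((1 - ρ : ℝ) : ℂ) * z‖ := hsplit ▸ norm_sub_le _ _
    _ ≤ ‖1 - ρ * z‖ + (1 - ρ) := by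
        rw [norm_mul, Complex.norm_of_nonneg (sub_nonneg.2 hρ₁)]
        gcongr
        exact mul_le_of_le_one_right (sub_nonneg.2 hρ₁) hz
    _ ≤ 2 * ‖1 - ρ * z‖ := by linarith

lemma norm_cayley_ofReal_mul_le {z : ℂ} (hz : ‖z‖ ≤ 1) (hz₁ : z ≠ 1) {ρ : ℝ} (hρ₀ : 0 ≤ ρ)
    (hρ₁ : ρ ≤ 1) : ‖cayley (ρ * z)‖ ≤ 4 / ‖1 - z‖ := by
  have hpos : 0 < ‖1 - z‖ := norm_pos_iff.2 (sub_ne_zero.2 hz₁.symm)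
  have hle := norm_one_sub_le_two_mul hz hρ₀ hρ₁
  have hρz : ‖(ρ : ℂ) * z‖ ≤ 1 := by
    rw [norm_mul, Complex.norm_of_nonneg hρ₀]
    exact mul_le_one₀ hρ₁ (norm_nonneg z) hz
  calc ‖cayley (ρ * z)‖ ≤ 2 / ‖1 - ρ * z‖ := norm_cayley_le hρz
    _ ≤ 2 / (‖1 - z‖ / 2) := by gcongr; linarith
    _ = 4 / ‖1 - z‖ := by field_simp; norm_num

end Cayley

section Blocks

open scoped ComplexOrder

lemma WienerDirichlet.average {ι : Type*} (A : Finset ι) (N : ι → ℕ+) :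
    WienerDirichlet (fun s ↦ (A.card : ℂ)⁻¹ * ∑ i ∈ A, dirichletHom s (N i)) 1 := by
  simp only [Finset.mul_sum]
  refine (sum_of_finset A (fun _ ↦ (A.card : ℂ)⁻¹) N).mono ?_
  simpa using mul_inv_le_one

/-- The mean value of `n⁻ˢ` over `n ∈ S`. -/
noncomputable def dirichletMean (S : Finset ℕ+) (s : ℂ) : ℂ :=
  (S.card : ℂ)⁻¹ * ∑ n ∈ S, dirichletHom s n

/-- The entire function that equals `|dirichletMean S|²` on the imaginary axis. -/
noncomputable def block (S : Finset ℕ+) (s : ℂ) : ℂ := dirichletMean S s * dirichletMean S (-s)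

variable (S : Finset ℕ+)

lemma differentiable_block : Differentiable ℂ (block S) := by
  have hmean : Differentiable ℂ (dirichletMean S) :=
    (Differentiable.fun_sum fun n _ ↦ differentiable_dirichletHom n).const_mul _
  exact hmean.mul (hmean.comp differentiable_neg)

lemma block_mul_I (t : ℝ) : block S (t * I) = ((‖dirichletMean S (t * I)‖ ^ 2 : ℝ) : ℂ) := by
  have hconj : dirichletMean S (-(t * I)) = (starRingEnd ℂ) (dirichletMean S (t * I)) := by
    simp only [dirichletMean, map_mul, map_inv₀, map_natCast, map_sum, dirichletHom_neg_mul_I]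
  rw [block, hconj, mul_conj, normSq_eq_norm_sq]

lemma block_mul_I_mem_Icc (t : ℝ) : block S (t * I) ∈ Set.Icc (0 : ℂ) 1 := by
  have hle : ‖dirichletMean S (t * I)‖ ≤ 1 := (WienerDirichlet.average S id).norm_le (by simp)
  rw [block_mul_I]
  exact ⟨mod_cast sq_nonneg _, mod_cast pow_le_one₀ (norm_nonneg _) hle⟩

lemma hasBohrMean_re_block : HasBohrMean (fun t : ℝ ↦ (block S (t * I)).re) (S.card : ℝ)⁻¹ := by
  have hparseval := hasBohrMean_norm_sq_tsum (ι := S) (c := fun _ ↦ (S.card : ℂ)⁻¹)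
    Summable.of_finite (injective_neg_log_pnat.comp Subtype.val_injective)
  simp only [tsum_fintype, Function.comp_apply, ← dirichletHom_mul_I, ← Finset.mul_sum] at hparseval
  rw [Finset.sum_const, Finset.card_univ, Fintype.card_coe, nsmul_eq_mul, norm_inv,
    Complex.norm_natCast, show (S.card * (S.card : ℝ)⁻¹ ^ 2 : ℝ) = (S.card : ℝ)⁻¹ by
      field_simp] at hparseval
  refine hparseval.congr fun T ↦ ?_
  simp only [block_mul_I, ofReal_re, dirichletMean]
  simp_rw [fun t : ℝ ↦ S.sum_coe_sort (dirichletHom (t * I))]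

lemma WienerDirichlet.prod_mul_block :
    WienerDirichlet (fun s ↦ dirichletHom s (∏ n ∈ S, n) * block S s) 1 := by
  have hcancel (s : ℂ) {n : ℕ+} (hn : n ∈ S) :
      dirichletHom s (∏ m ∈ S, m) * dirichletHom (-s) n = dirichletHom s (∏ m ∈ S.erase n, m) := by
    rw [← Finset.prod_erase_mul S _ hn, map_mul, mul_assoc, ← dirichletHom_add, add_neg_cancel,
      dirichletHom_eq_exp 0]
    simp
  have := (average S id).mul (average S fun n ↦ ∏ m ∈ S.erase n, m)
  rw [one_mul] at this
  refine this.congr fun s _ ↦ ?_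
  rw [← Finset.sum_congr rfl fun n hn ↦ hcancel s hn, ← Finset.mul_sum]
  simp only [block, dirichletMean, id]
  ring

variable {S}

lemma norm_one_sub_block_le (hS : S.Nonempty) {s : ℂ} {κ : ℝ} (hκ : κ ≤ 1)
    (h : ∀ m ∈ S, ∀ n ∈ S, ‖s‖ * |Real.log m - Real.log n| ≤ κ) : ‖1 - block S s‖ ≤ 2 * κ := by
  have hterm : ∀ p ∈ S ×ˢ S,
      dirichletHom s p.1 * dirichletHom (-s) p.2 ∈ Metric.closedBall (1 : ℂ) (2 * κ) := by
    intro p hp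
    obtain ⟨hp₁, hp₂⟩ := Finset.mem_product.1 hp
    have hexp : dirichletHom s p.1 * dirichletHom (-s) p.2 =
        Complex.exp (-(s * (Real.log p.1 - Real.log p.2 : ℝ))) := by
      rw [dirichletHom_eq_exp, dirichletHom_eq_exp, ← Complex.exp_add]
      push_cast
      ring_nf
    have hnorm : ‖-(s * (Real.log p.1 - Real.log p.2 : ℝ))‖ ≤ κ := by
      rw [norm_neg, norm_mul, norm_real]
      exact h _ hp₁ _ hp₂
    rw [mem_closedBall_iff_norm, hexp]
    exact (norm_exp_sub_one_le (hnorm.trans hκ)).trans (by gcongr)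
  have hcard : (S.card : ℝ) ≠ 0 := mod_cast hS.card_ne_zero
  have hblock : block S s = ∑ p ∈ S ×ˢ S, ((S.card : ℝ)⁻¹ * (S.card : ℝ)⁻¹) •
      (dirichletHom s p.1 * dirichletHom (-s) p.2) := by
    rw [← Finset.smul_sum, Finset.sum_product, real_smul]
    simp only [block, dirichletMean, ← Finset.sum_mul_sum]
    push_cast
    ring
  rw [norm_sub_rev, ← mem_closedBall_iff_norm, hblock]
  refine (convex_closedBall 1 (2 * κ)).sum_mem (fun _ _ ↦ by positivity) ?_ hterm
  rw [Finset.sum_const, Finset.card_product, nsmul_eq_mul]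
  push_cast
  field_simp

lemma abs_log_sub_log_le {a x y : ℝ} (ha : 0 < a) (hx : a ≤ x) (hy : a ≤ y) :
    |Real.log x - Real.log y| ≤ |x - y| / a := by
  wlog hxy : y ≤ x generalizing x y
  · rw [abs_sub_comm, abs_sub_comm x]
    exact this hy hx (le_of_not_ge hxy)
  have hy₀ := ha.trans_le hy
  rw [abs_of_nonneg (sub_nonneg.2 (Real.log_le_log hy₀ hxy)), abs_of_nonneg (sub_nonneg.2 hxy),
    ← Real.log_div (by linarith) hy₀.ne']
  calc Real.log (x / y) ≤ x / y - 1 := Real.log_le_sub_one_of_pos (div_pos (ha.trans_le hx) hy₀)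
    _ = (x - y) / y := by field_simp
    _ ≤ (x - y) / a := by have := sub_nonneg.2 hxy; gcongr

lemma abs_log_sub_log_le_of_mem_Ico {m N j n : ℕ+} (hj : j ∈ Finset.Ico m (m + N))
    (hn : n ∈ Finset.Ico m (m + N)) : |Real.log j - Real.log n| ≤ N / m := by
  rw [Finset.mem_Ico, ← PNat.coe_le_coe, ← PNat.coe_lt_coe, PNat.add_coe] at hj hn
  have hmj : (m : ℝ) ≤ j := mod_cast hj.1
  have hmn : (m : ℝ) ≤ n := mod_cast hn.1
  have hjN : (j : ℝ) < m + N := mod_cast hj.2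
  have hnN : (n : ℝ) < m + N := mod_cast hn.2
  refine (abs_log_sub_log_le (mod_cast m.pos) hmj hmn).trans ?_
  gcongr
  rw [abs_le]
  constructor <;> linarith

lemma exists_block_near_one {δ η : ℝ} (R : ℝ) (hδ : 0 < δ) (hη : 0 < η) :
    ∃ S : Finset ℕ+, 1 < ∏ n ∈ S, n ∧ (S.card : ℝ)⁻¹ ≤ δ ∧
      ∀ s : ℂ, ‖s‖ ≤ R → ‖1 - block S s‖ ≤ η := by
  obtain ⟨N, hN⟩ := exists_nat_gt δ⁻¹
  have hN₀ : 0 < N := by exact_mod_cast (inv_pos.2 hδ).trans hN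
  lift N to ℕ+ using hN₀
  set κ := min 1 (η / 2)
  have hκ : 0 < κ := by positivity
  obtain ⟨m, hm⟩ := exists_nat_gt (|R| * N / κ + 1)
  have hm₁ : 1 < m := by
    have : 0 ≤ |R| * N / κ := by positivity
    exact_mod_cast (by linarith : (1 : ℝ) < m)
  lift m to ℕ+ using (zero_lt_one.trans hm₁)
  have hm' : |R| * N / κ ≤ m := by linarith
  have hmem : m ∈ Finset.Ico m (m + N) := Finset.mem_Ico.2 ⟨le_rfl, PNat.lt_add_right m N⟩
  refine ⟨Finset.Ico m (m + N), ?_, ?_, fun s hs ↦ ?_⟩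
  · have hone : ∀ n ∈ Finset.Ico m (m + N), 1 < n := fun n hn ↦
      lt_of_lt_of_le (mod_cast hm₁) (Finset.mem_Ico.1 hn).1
    exact Finset.one_lt_prod' (fun n hn ↦ (hone n hn).le) ⟨m, hmem, hone m hmem⟩
  · rw [PNat.card_Ico, PNat.add_coe, Nat.add_sub_cancel_left]
    exact inv_le_of_inv_le₀ hδ hN.le
  · refine (norm_one_sub_block_le ⟨m, hmem⟩ (min_le_left 1 (η / 2)) fun j hj n hn ↦ ?_).trans
      (by linarith [min_le_right 1 (η / 2)])
    have hm₀ : (0 : ℝ) < m := mod_cast m.pos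
    calc ‖s‖ * |Real.log j - Real.log n| ≤ |R| * (N / m) := by
          gcongr
          · exact hs.trans (le_abs_self R)
          · exact abs_log_sub_log_le_of_mem_Ico hj hn
      _ ≤ κ := by
          rw [div_le_iff₀ hκ] at hm'
          rw [← mul_div_assoc, div_le_iff₀ hm₀]
          linarith

end Blocks

section Telescoping

open scoped ComplexOrder

variable (S : ℕ → Finset ℕ+)

/-- The product `∏_{j < k} (1 - H_j)`, where `H_j = block (S j)`. -/
noncomputable def remainder (k : ℕ) (s : ℂ) : ℂ := ∏ j ∈ Finset.range k, (1 - block (S j) s)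

/-- The weight `q_k = H_k ∏_{j < k} (1 - H_j)`, where `H_j = block (S j)`; the weights and the
`remainder` form a partition of unity. -/
noncomputable def weight (k : ℕ) (s : ℂ) : ℂ := block (S k) s * remainder S k s

/-- The number `n_k` of the construction: multiplication by `n_k⁻ˢ` cancels the factors `nˢ` that
occur in `weight S k` and leaves a Dirichlet polynomial. -/
def modulus (k : ℕ) : ℕ+ := ∏ j ∈ Finset.range (k + 1), ∏ n ∈ S j, n

lemma differentiable_remainder (k : ℕ) : Differentiable ℂ (remainder S k) :=
  Differentiable.fun_finsetProd fun j _ ↦ (differentiable_block (S j)).const_sub 1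

lemma differentiable_weight (k : ℕ) : Differentiable ℂ (weight S k) :=
  (differentiable_block (S k)).mul (differentiable_remainder S k)

lemma weight_eq_sub (k : ℕ) (s : ℂ) :
    weight S k s = remainder S k s - remainder S (k + 1) s := by
  simp only [weight, remainder, Finset.prod_range_succ]
  ring

lemma sum_weight (K : ℕ) (s : ℂ) :
    ∑ k ∈ Finset.range K, weight S k s = 1 - remainder S K s := by
  simp only [weight_eq_sub, Finset.sum_range_sub']
  simp [remainder]

lemma remainder_mul_I_mem_Icc (k : ℕ) (t : ℝ) : remainder S k (t * I) ∈ Set.Icc (0 : ℂ) 1 := by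
  have hblock (j : ℕ) := block_mul_I_mem_Icc (S j) t
  exact ⟨Finset.prod_nonneg fun j _ ↦ sub_nonneg.2 (hblock j).2,
    Finset.prod_le_one (fun j _ ↦ sub_nonneg.2 (hblock j).2) fun j _ ↦
      sub_le_self 1 (hblock j).1⟩

lemma weight_mul_I_nonneg (k : ℕ) (t : ℝ) : 0 ≤ weight S k (t * I) :=
  mul_nonneg (block_mul_I_mem_Icc _ t).1 (remainder_mul_I_mem_Icc S k t).1

lemma one_sub_remainder_mul_I_le (K : ℕ) (t : ℝ) :
    1 - remainder S K (t * I) ≤ ∑ k ∈ Finset.range K, block (S k) (t * I) := by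
  rw [← sum_weight]
  exact Finset.sum_le_sum fun k _ ↦
    mul_le_of_le_one_right (block_mul_I_mem_Icc _ t).1 (remainder_mul_I_mem_Icc S k t).2

lemma WienerDirichlet.modulus_mul_weight (k : ℕ) :
    WienerDirichlet (fun s ↦ dirichletHom s (modulus S k) * weight S k s) (2 ^ k) := by
  have hfactor (j : ℕ) :
      WienerDirichlet (fun s ↦ dirichletHom s (∏ n ∈ S j, n) * (1 - block (S j) s)) 2 := by
    have := (monomial (∏ n ∈ S j, n)).add ((prod_mul_block (S j)).const_mul (-1))
    refine (this.congr fun s _ ↦ ?_).mono ?_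
    · ring
    · norm_num
  have := (prod (Finset.range k) hfactor).mul (prod_mul_block (S k))
  simp only [Finset.prod_const, Finset.card_range, mul_one] at this
  refine this.congr fun s _ ↦ ?_
  rw [modulus, map_prod, Finset.prod_range_succ, Finset.prod_mul_distrib, weight, remainder]
  ring

/-- The Herglotz transform `∑ q_k (1 + n_k⁻ˢ) / (1 - n_k⁻ˢ)` attached to the blocks `S k`, with
weights `q_k = weight S k` and `n_k = modulus S k`. -/
noncomputable def herglotzSum (s : ℂ) : ℂ :=
  ∑' k, weight S k s * cayley (dirichletHom s (modulus S k))

/-- The approximation to `herglotzSum` obtained by damping `n_k⁻ˢ` by a factor `r` and replacing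
the weights of index at least `K` by the constant function `1` with the remaining mass. -/
noncomputable def herglotzPartial (r : ℝ) (K : ℕ) (s : ℂ) : ℂ :=
  remainder S K s +
    ∑ k ∈ Finset.range K, weight S k s * cayley (r * dirichletHom s (modulus S k))

variable {r : ℝ}

lemma norm_ofReal_mul_dirichletHom_le (hr₀ : 0 ≤ r) {s : ℂ} (hs : 0 ≤ s.re) (n : ℕ+) :
    ‖r * dirichletHom s n‖ ≤ r :=
  (norm_mul_dirichletHom_le hs _ n).trans_eq (Complex.norm_of_nonneg hr₀)

lemma exists_wienerDirichlet_herglotzPartial (hr₀ : 0 ≤ r) (hr₁ : r < 1) (K : ℕ) :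
    ∃ C, WienerDirichlet (herglotzPartial S r K) C := by
  have hdamped (k : ℕ) : WienerDirichlet (fun s ↦ r * dirichletHom s (modulus S k)) r := by
    simpa [abs_of_nonneg hr₀] using (WienerDirichlet.monomial (modulus S k)).const_mul r
  have hterm (k : ℕ) := ((WienerDirichlet.modulus_mul_weight S k).const_mul (2 * r)).mul
    ((hdamped k).inv_one_sub hr₁)
  refine ⟨_, ((WienerDirichlet.const 1).add
    (WienerDirichlet.sum (Finset.range K) hterm)).congr fun s hs ↦ ?_⟩
  have hne (k : ℕ) : r * dirichletHom s (modulus S k) ≠ 1 := fun h ↦ hr₁.not_ge <| by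
    simpa [h] using norm_ofReal_mul_dirichletHom_le hr₀ hs (modulus S k)
  simp only [herglotzPartial, cayley_eq_one_add (hne _), mul_add, mul_one, Finset.sum_add_distrib,
    sum_weight, ← add_assoc, add_sub_cancel]
  exact congrArg (1 + ·) (Finset.sum_congr rfl fun k _ ↦ by ring)

lemma re_remainder_le_re_herglotzPartial (hr₀ : 0 ≤ r) (hr₁ : r ≤ 1) (K : ℕ) (t : ℝ) :
    (remainder S K (t * I)).re ≤ (herglotzPartial S r K (t * I)).re := by
  rw [herglotzPartial, add_re, re_sum]
  refine le_add_of_nonneg_right (Finset.sum_nonneg fun k _ ↦ ?_)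
  obtain ⟨hre, him⟩ := Complex.nonneg_iff.1 (weight_mul_I_nonneg S k t)
  rw [mul_re, ← him, zero_mul, sub_zero]
  exact mul_nonneg hre (re_cayley_nonneg
    ((norm_ofReal_mul_dirichletHom_le hr₀ (by simp) _).trans hr₁))

lemma exp_neg_mul_le_add_one_sub {c x : ℝ} (hx₀ : 0 ≤ x) (hx₁ : x ≤ 1) :
    Real.exp (-c * x) ≤ Real.exp (-c) + (1 - x) := by
  have hconvex := convexOn_exp.2 (Set.mem_univ (-c)) (Set.mem_univ 0) hx₀ (sub_nonneg.2 hx₁)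
    (add_sub_cancel x 1)
  simp only [smul_eq_mul, mul_zero, add_zero, Real.exp_zero, mul_one] at hconvex
  rw [mul_comm]
  nlinarith [Real.exp_pos (-c)]

lemma norm_exp_neg_ofReal_mul (l : ℝ) (z : ℂ) :
    ‖Complex.exp (-l * z)‖ = Real.exp (-l * z.re) := by
  rw [Complex.norm_exp, ← ofReal_neg, re_ofReal_mul]

variable {l : ℝ}

lemma norm_exp_herglotzPartial_le_one (hl : 0 ≤ l) (hr₀ : 0 ≤ r) (hr₁ : r < 1) (K : ℕ) {s : ℂ}
    (hs : 0 ≤ s.re) : ‖Complex.exp (-l * herglotzPartial S r K s)‖ ≤ 1 := by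
  obtain ⟨C, hC⟩ := exists_wienerDirichlet_herglotzPartial S hr₀ hr₁ K
  refine (hC.const_mul (-l)).exp.norm_le_of_norm_mul_I_le (fun t ↦ ?_) hs
  have hre : 0 ≤ (herglotzPartial S r K (t * I)).re :=
    (Complex.nonneg_iff.1 (remainder_mul_I_mem_Icc S K t).1).1.trans
      (re_remainder_le_re_herglotzPartial S hr₀ hr₁.le K t)
  rw [norm_exp_neg_ofReal_mul, Real.exp_le_one_iff, neg_mul]
  exact neg_nonpos.2 (mul_nonneg hl hre)

lemma norm_sq_exp_herglotzPartial_mul_I_le (hl : 0 ≤ l) (hr₀ : 0 ≤ r) (hr₁ : r ≤ 1) (K : ℕ)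
    (t : ℝ) : ‖Complex.exp (-l * herglotzPartial S r K (t * I))‖ ^ 2 ≤
      Real.exp (-(2 * l)) + ∑ k ∈ Finset.range K, (block (S k) (t * I)).re := by
  set x := (remainder S K (t * I)).re
  have hmem := remainder_mul_I_mem_Icc S K t
  have hx₀ : 0 ≤ x := (Complex.nonneg_iff.1 hmem.1).1
  have hx₁ : x ≤ 1 := (Complex.le_def.1 hmem.2).1
  have hblocks : 1 - x ≤ ∑ k ∈ Finset.range K, (block (S k) (t * I)).re := by
    simpa using (Complex.le_def.1 (one_sub_remainder_mul_I_le S K t)).1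
  calc ‖Complex.exp (-l * herglotzPartial S r K (t * I))‖ ^ 2
      = Real.exp (-(2 * l) * (herglotzPartial S r K (t * I)).re) := by
        rw [norm_exp_neg_ofReal_mul, ← Real.exp_nat_mul]
        ring_nf
    _ ≤ Real.exp (-(2 * l) * x) := Real.exp_le_exp.2 <|
        mul_le_mul_of_nonpos_left (re_remainder_le_re_herglotzPartial S hr₀ hr₁ K t) (by linarith)
    _ ≤ Real.exp (-(2 * l)) + (1 - x) := exp_neg_mul_le_add_one_sub hx₀ hx₁
    _ ≤ _ := by gcongr

lemma exists_coeff_exp_herglotzPartial (hl : 0 ≤ l) (hr₀ : 0 ≤ r) (hr₁ : r < 1) (K : ℕ) :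
    ∃ a : ℕ+ → ℂ, (∀ A : Finset ℕ+, ∑ n ∈ A, ‖a n‖ ^ 2 ≤
        Real.exp (-(2 * l)) + ∑ k ∈ Finset.range K, ((S k).card : ℝ)⁻¹) ∧
      ∀ s : ℂ, 0 ≤ s.re → HasSum (fun n ↦ a n * dirichletHom s n)
        (Complex.exp (-l * herglotzPartial S r K s)) := by
  obtain ⟨C, hC⟩ := exists_wienerDirichlet_herglotzPartial S hr₀ hr₁ K
  have hcont (k : ℕ) : Continuous fun t : ℝ ↦ (block (S k) (t * I)).re :=
    continuous_re.comp ((differentiable_block (S k)).continuous.comp (by fun_prop))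
  exact (hC.const_mul (-l)).exp.exists_sum_norm_sq_le
    (continuous_const.add (continuous_finsetSum _ fun k _ ↦ hcont k))
    ((hasBohrMean_const _).add (.sum _ (fun k ↦ hasBohrMean_re_block (S k)) hcont)
      continuous_const (continuous_finsetSum _ fun k _ ↦ hcont k))
    (norm_sq_exp_herglotzPartial_mul_I_le S hl hr₀ hr₁.le K)

end Telescoping

section Admissible

open scoped Topology

/-- The requirements on the blocks `S k` under which `herglotzSum S` converges: the moduli are
nontrivial and `block (S k)` is close to `1` on the disc of radius `k`. -/
structure IsAdmissible (S : ℕ → Finset ℕ+) : Prop where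
  one_lt_prod : ∀ k, 1 < ∏ n ∈ S k, n
  norm_one_sub_block_le : ∀ (k : ℕ) (s : ℂ), ‖s‖ ≤ k → ‖1 - block (S k) s‖ ≤ 1 / 4

lemma exists_isAdmissible {δ : ℝ} (hδ : 0 < δ) : ∃ S, IsAdmissible S ∧
    ∀ K, ∑ k ∈ Finset.range K, ((S k).card : ℝ)⁻¹ ≤ δ := by
  choose S hprod hcard hblock using fun k : ℕ ↦
    exists_block_near_one k (δ := δ / 2 / 2 ^ k) (η := 1 / 4) (by positivity) (by norm_num)
  refine ⟨S, ⟨hprod, hblock⟩, fun K ↦ (Finset.sum_le_sum fun k _ ↦ hcard k).trans ?_⟩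
  exact sum_le_hasSum _ (fun k _ ↦ by positivity) (hasSum_geometric_two' δ)

lemma norm_dirichletHom_le_two_rpow {n : ℕ+} (hn : 1 < n) {s : ℂ} {a : ℝ} (ha : 0 ≤ a)
    (hs : a ≤ s.re) : ‖dirichletHom s n‖ ≤ 2 ^ (-a) := by
  have hn₂ : (2 : ℝ) ≤ n := mod_cast PNat.add_one_le_iff.2 hn
  rw [norm_dirichletHom]
  calc (n : ℝ) ^ (-s.re) ≤ 2 ^ (-s.re) :=
        Real.rpow_le_rpow_of_nonpos zero_lt_two hn₂ (by linarith)
    _ ≤ 2 ^ (-a) := Real.rpow_le_rpow_of_exponent_le one_le_two (by linarith)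

lemma dirichletHom_ne_one {n : ℕ+} (hn : 1 < n) {s : ℂ} (hs : 0 < s.re) :
    dirichletHom s n ≠ 1 := fun h ↦ by
  have hle := norm_dirichletHom_le_two_rpow hn hs.le le_rfl
  rw [h, norm_one] at hle
  exact hle.not_gt (Real.rpow_lt_one_of_one_lt_of_neg one_lt_two (neg_neg_iff_pos.2 hs))

lemma dirichletHom_ofReal_add_mul_I (σ t : ℝ) (n : ℕ+) :
    dirichletHom (σ + t * I) n = ((n : ℝ) ^ (-σ) : ℝ) * dirichletHom (t * I) n := by
  rw [dirichletHom_add, dirichletHom_apply, ofReal_cpow (by positivity)]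
  simp

variable {S : ℕ → Finset ℕ+}

lemma differentiableAt_weight_mul_cayley (k : ℕ) {s : ℂ} (hs : dirichletHom s (modulus S k) ≠ 1) :
    DifferentiableAt ℂ (fun s ↦ weight S k s * cayley (dirichletHom s (modulus S k))) s :=
  (differentiable_weight S k s).fun_mul <|
    (differentiableAt_cayley hs).fun_comp' s (differentiable_dirichletHom (modulus S k) s)

namespace IsAdmissible

lemma one_lt_modulus (hS : IsAdmissible S) (k : ℕ) : 1 < modulus S k := by
  rw [modulus, Finset.prod_range_succ]
  exact (hS.one_lt_prod k).trans_le (le_mul_of_one_le_left' (one_le))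

lemma exists_norm_remainder_le (hS : IsAdmissible S) (R : ℝ) :
    ∃ C, ∀ k s, ‖s‖ ≤ R → ‖remainder S k s‖ ≤ C * (1 / 4) ^ k := by
  obtain ⟨N, hN⟩ := exists_nat_ge R
  have hcont : Continuous fun s ↦ ∑ i ∈ Finset.range (N + 1), 4 ^ i * ‖remainder S i s‖ :=
    continuous_finsetSum _ fun i _ ↦ (differentiable_remainder S i).continuous.norm.const_mul _
  obtain ⟨C, hC⟩ := (isCompact_closedBall (0 : ℂ) R).exists_bound_of_continuousOn hcont.continuousOn
  refine ⟨C, fun k s hs ↦ ?_⟩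
  have hinit {i : ℕ} (hi : i ≤ N) : 4 ^ i * ‖remainder S i s‖ ≤ C :=
    (Finset.single_le_sum (f := fun i ↦ 4 ^ i * ‖remainder S i s‖) (fun _ _ ↦ by positivity)
      (Finset.mem_range_succ_iff.2 hi)).trans <|
        (le_abs_self _).trans (hC s (mem_closedBall_zero_iff.2 hs))
  have hall : 4 ^ k * ‖remainder S k s‖ ≤ C := by
    obtain hk | hk := le_total k N
    · exact hinit hk
    induction k, hk using Nat.le_induction with
    | base => exact hinit le_rfl
    | succ k hk ih =>
      have hblock := hS.norm_one_sub_block_le k s (hs.trans (hN.trans (mod_cast hk)))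
      calc 4 ^ (k + 1) * ‖remainder S (k + 1) s‖
          = 4 ^ k * ‖remainder S k s‖ * (4 * ‖1 - block (S k) s‖) := by
            rw [remainder, Finset.prod_range_succ, norm_mul, remainder]
            ring
        _ ≤ C := (mul_le_of_le_one_right (by positivity) (by linarith)).trans ih
  rwa [one_div, inv_pow, ← div_eq_mul_inv, le_div_iff₀' (by positivity)]

lemma tendsto_remainder (hS : IsAdmissible S) (s : ℂ) :
    Tendsto (fun K ↦ remainder S K s) atTop (𝓝 0) := by
  obtain ⟨C, hC⟩ := hS.exists_norm_remainder_le ‖s‖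
  refine squeeze_zero_norm (fun K ↦ hC K s le_rfl) ?_
  simpa using (tendsto_pow_atTop_nhds_zero_of_lt_one (r := (1 / 4 : ℝ)) (by norm_num)
    (by norm_num)).const_mul C

lemma exists_norm_weight_le (hS : IsAdmissible S) (R : ℝ) :
    ∃ C, ∀ k s, ‖s‖ ≤ R → ‖weight S k s‖ ≤ C * (1 / 4) ^ k := by
  obtain ⟨C, hC⟩ := hS.exists_norm_remainder_le R
  refine ⟨C + C / 4, fun k s hs ↦ ?_⟩
  rw [weight_eq_sub]
  calc _ ≤ ‖remainder S k s‖ + ‖remainder S (k + 1) s‖ := norm_sub_le _ _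
    _ ≤ C * (1 / 4) ^ k + C * (1 / 4) ^ (k + 1) := add_le_add (hC k s hs) (hC (k + 1) s hs)
    _ = _ := by ring

lemma exists_norm_weight_mul_cayley_le (hS : IsAdmissible S) (R : ℝ) {q : ℝ} (hq : q < 1) :
    ∃ C, ∀ k s z, ‖s‖ ≤ R → ‖z‖ ≤ q → ‖weight S k s * cayley z‖ ≤ C * (1 / 4) ^ k := by
  obtain ⟨C, hC⟩ := hS.exists_norm_weight_le R
  refine ⟨C * (2 / (1 - q)), fun k s z hs hz ↦ ?_⟩
  rw [norm_mul, mul_right_comm]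
  exact mul_le_mul (hC k s hs) (norm_cayley_le_of_norm_le hz hq) (norm_nonneg _)
    ((norm_nonneg _).trans (hC k s hs))

lemma tendsto_herglotzPartial (hS : IsAdmissible S) {r : ℕ → ℝ} (hr₀ : ∀ K, 0 ≤ r K)
    (hr₁ : ∀ K, r K ≤ 1) (hr : Tendsto r atTop (𝓝 1)) {s : ℂ} (hs : 0 < s.re) :
    Tendsto (fun K ↦ herglotzPartial S (r K) K s) atTop (𝓝 (herglotzSum S s)) := by
  obtain ⟨C, hC⟩ := hS.exists_norm_weight_mul_cayley_le ‖s‖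
    (Real.rpow_lt_one_of_one_lt_of_neg one_lt_two (neg_neg_iff_pos.2 hs))
  rw [← zero_add (herglotzSum S s)]
  refine (hS.tendsto_remainder s).add ?_
  simp only [sum_eq_tsum_indicator (L := .unconditional ℕ)]
  refine tendsto_tsum_of_dominated_convergence
    ((summable_geometric_of_lt_one (by norm_num) (by norm_num)).mul_left C) (fun k ↦ ?_)
    (.of_forall fun K k ↦ (norm_indicator_le_norm_self _ _).trans (hC k s _ le_rfl ?_))
  · have hlim : Tendsto (fun K ↦ (r K : ℂ) * dirichletHom s (modulus S k)) atTop
        (𝓝 (dirichletHom s (modulus S k))) := by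
      simpa using ((continuous_ofReal.tendsto 1).comp hr).mul_const (dirichletHom s (modulus S k))
    refine Tendsto.congr' ?_ (((differentiableAt_cayley
      (dirichletHom_ne_one (hS.one_lt_modulus k) hs)).continuousAt.tendsto.comp hlim).const_mul _)
    filter_upwards [eventually_gt_atTop k] with K hK
    simp [hK]
  · rw [norm_mul, Complex.norm_of_nonneg (hr₀ K)]
    exact (mul_le_of_le_one_left (norm_nonneg _) (hr₁ K)).trans
      (norm_dirichletHom_le_two_rpow (hS.one_lt_modulus k) hs.le le_rfl)

lemma differentiableOn_herglotzSum (hS : IsAdmissible S) :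
    DifferentiableOn ℂ (herglotzSum S) {s | 0 < s.re} := by
  intro s (hs : 0 < s.re)
  obtain ⟨C, hC⟩ := hS.exists_norm_weight_mul_cayley_le (‖s‖ + 1)
    (Real.rpow_lt_one_of_one_lt_of_neg one_lt_two (neg_neg_iff_pos.2 (half_pos hs)))
  set U := {z : ℂ | s.re / 2 < z.re} ∩ Metric.ball 0 (‖s‖ + 1)
  have hU : IsOpen U := (isOpen_lt continuous_const continuous_re).inter Metric.isOpen_ball
  have hsU : s ∈ U := ⟨half_lt_self hs, by simp⟩
  refine (DifferentiableOn.differentiableAt ?_ (hU.mem_nhds hsU)).differentiableWithinAt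
  refine differentiableOn_tsum_of_summable_norm
    ((summable_geometric_of_lt_one (r := (1 / 4 : ℝ)) (by norm_num) (by norm_num)).mul_left C)
    (fun k z hz ↦ ?_) hU fun k z hz ↦ ?_
  · exact (differentiableAt_weight_mul_cayley k <| dirichletHom_ne_one (hS.one_lt_modulus k) <|
      (half_pos hs).trans hz.1).differentiableWithinAt
  · exact hC k z _ (mem_ball_zero_iff.1 hz.2).le
      (norm_dirichletHom_le_two_rpow (hS.one_lt_modulus k) (half_pos hs).le hz.1.le)

lemma ae_summable_pow_div_norm_one_sub (hS : IsAdmissible S) : ∀ᵐ t : ℝ,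
    Summable fun k ↦ (1 / 4 : ℝ) ^ k / ‖1 - dirichletHom (t * I) (modulus S k)‖ := by
  have hlog (k : ℕ) : Real.log 2 ≤ |-Real.log (modulus S k)| := by
    rw [abs_neg]
    refine (Real.log_le_log zero_lt_two ?_).trans (le_abs_self _)
    exact_mod_cast PNat.add_one_le_iff.2 (hS.one_lt_modulus k)
  have hsqrt (k : ℕ) : √((1 / 4 : ℝ) ^ k) = (1 / 2) ^ k := by
    rw [show (1 / 4 : ℝ) = (1 / 2) ^ 2 by norm_num, pow_right_comm, Real.sqrt_sq (by positivity)]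
  simp only [dirichletHom_mul_I]
  refine ae_summable_div_norm_one_sub_exp (Real.log_pos one_lt_two) hlog
    (fun k ↦ by positivity) ?_
  simpa only [hsqrt] using summable_geometric_two

lemma ae_dirichletHom_mul_I_ne_one (hS : IsAdmissible S) :
    ∀ᵐ t : ℝ, ∀ k, dirichletHom (t * I) (modulus S k) ≠ 1 := by
  simp only [ae_all_iff, dirichletHom_mul_I]
  exact fun k ↦ ae_exp_mul_I_ne_one <|
    neg_ne_zero.2 (Real.log_pos (mod_cast hS.one_lt_modulus k)).ne'

lemma ae_tendsto_herglotzSum (hS : IsAdmissible S) : ∀ᵐ t : ℝ,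
    Tendsto (fun σ : ℝ ↦ herglotzSum S (σ + t * I)) (𝓝[>] 0) (𝓝 (herglotzSum S (t * I))) := by
  filter_upwards [hS.ae_summable_pow_div_norm_one_sub, hS.ae_dirichletHom_mul_I_ne_one]
    with t hsum hne
  obtain ⟨C, hC⟩ := hS.exists_norm_weight_le (1 + |t|)
  refine tendsto_tsum_of_dominated_convergence (hsum.mul_left (4 * C)) (fun k ↦ ?_) ?_
  · have hpath : Tendsto (fun σ : ℝ ↦ (σ + t * I : ℂ)) (𝓝[>] 0) (𝓝 (t * I)) :=
      tendsto_nhdsWithin_of_tendsto_nhds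
        (Continuous.tendsto' (by fun_prop) _ _ (by simp))
    exact (differentiableAt_weight_mul_cayley k (hne k)).continuousAt.tendsto.comp hpath
  · filter_upwards [Ioc_mem_nhdsGT zero_lt_one] with σ ⟨hσ₀, hσ₁⟩ k
    have hnorm : ‖(σ + t * I : ℂ)‖ ≤ 1 + |t| := (norm_add_le _ _).trans <| by
      simpa [abs_of_pos hσ₀] using hσ₁
    have hweight := hC k _ hnorm
    have hcayley := norm_cayley_ofReal_mul_le (norm_dirichletHom_le_one (by simp) _) (hne k)
      (Real.rpow_nonneg (Nat.cast_nonneg (modulus S k : ℕ)) (-σ))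
      (Real.rpow_le_one_of_one_le_of_nonpos (mod_cast one_le) (neg_nonpos.2 hσ₀.le))
    rw [← dirichletHom_ofReal_add_mul_I] at hcayley
    rw [norm_mul]
    calc _ ≤ C * (1 / 4) ^ k * (4 / ‖1 - dirichletHom (t * I) (modulus S k)‖) :=
          mul_le_mul hweight hcayley (norm_nonneg _) ((norm_nonneg _).trans hweight)
      _ = _ := by ring

end IsAdmissible

variable (S) in
lemma re_herglotzSum_mul_I (t : ℝ) : (herglotzSum S (t * I)).re = 0 := by
  have hterm (k : ℕ) :
      (weight S k (t * I) * cayley (dirichletHom (t * I) (modulus S k))).re = 0 := by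
    rw [mul_re, ← (Complex.nonneg_iff.1 (weight_mul_I_nonneg S k t)).2,
      re_cayley_eq_zero (norm_dirichletHom_mul_I t _)]
    simp
  by_cases hsum : Summable fun k ↦ weight S k (t * I) * cayley (dirichletHom (t * I) (modulus S k))
  · rw [herglotzSum, re_tsum hsum]
    simp only [hterm, tsum_zero]
  · rw [herglotzSum, tsum_eq_zero_of_not_summable hsum, zero_re]

end Admissible

section Compactness

open scoped Topology

lemma summable_const_mul_pnat_rpow (c : ℝ) {σ : ℝ} (hσ : 1 < σ) :
    Summable fun n : ℕ+ ↦ c * (n : ℝ) ^ (-σ) :=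
  ((Real.summable_nat_rpow.2 (neg_lt_neg hσ)).comp_injective PNat.coe_injective).mul_left c

lemma exists_hasSum_dirichlet_of_tendsto {G : ℕ → ℂ → ℂ} {g : ℂ → ℂ} {a : ℕ → ℕ+ → ℂ} {B : ℝ}
    (haB : ∀ K, ∀ A : Finset ℕ+, ∑ n ∈ A, ‖a K n‖ ^ 2 ≤ B)
    (hG : ∀ K s, 1 < s.re → HasSum (fun n ↦ a K n * dirichletHom s n) (G K s))
    (hg : ∀ s, 1 < s.re → Tendsto (G · s) atTop (𝓝 (g s))) :
    ∃ b : ℕ+ → ℂ, (∀ A : Finset ℕ+, ∑ n ∈ A, ‖b n‖ ^ 2 ≤ B) ∧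
      ∀ s, 1 < s.re → HasSum (fun n ↦ b n * dirichletHom s n) (g s) := by
  have ha (K : ℕ) (n : ℕ+) : ‖a K n‖ ≤ √B := Real.le_sqrt_of_sq_le (by simpa using haB K {n})
  obtain ⟨b, hb, φ, hφ, hlim⟩ :=
    (isCompact_univ_pi fun _ : ℕ+ ↦ isCompact_closedBall (0 : ℂ) √B).tendsto_subseq
      (x := a) fun K n _ ↦ mem_closedBall_zero_iff.2 (ha K n)
  rw [tendsto_pi_nhds] at hlim
  refine ⟨b, fun A ↦ ?_, fun s hs ↦ ?_⟩
  · exact le_of_tendsto (tendsto_finsetSum A fun n _ ↦ (hlim n).norm.pow 2)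
      (.of_forall fun K ↦ haB (φ K) A)
  have hle {c : ℂ} (hc : ‖c‖ ≤ √B) (n : ℕ+) : ‖c * dirichletHom s n‖ ≤ √B * (n : ℝ) ^ (-s.re) := by
    rw [norm_mul, norm_dirichletHom]
    gcongr
  have hsum := summable_const_mul_pnat_rpow √B hs
  have hseries : Tendsto (fun K ↦ ∑' n, a (φ K) n * dirichletHom s n) atTop
      (𝓝 (∑' n, b n * dirichletHom s n)) :=
    tendsto_tsum_of_dominated_convergence hsum (fun n ↦ (hlim n).mul_const _)
      (.of_forall fun K n ↦ hle (ha (φ K) n) n)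
  simp only [(hG _ s hs).tsum_eq] at hseries
  rw [tendsto_nhds_unique ((hg s hs).comp hφ.tendsto_atTop) hseries]
  exact (Summable.of_norm_bounded hsum fun n ↦
    hle (mem_closedBall_zero_iff.1 (hb n (Set.mem_univ n))) n).hasSum

end Compactness

section Inner

open scoped Topology

lemma hasSum_nat_of_hasSum_pnat {b : ℕ+ → ℂ} {s z : ℂ}
    (h : HasSum (fun n ↦ b n * dirichletHom s n) z) :
    HasSum (fun n : ℕ ↦ b (n + 1).toPNat' * ((n + 1 : ℕ) : ℂ) ^ (-s)) z :=
  (Equiv.pnatEquivNat.symm.hasSum_iff (f := fun n ↦ b n * dirichletHom s n)).2 h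

lemma tsum_nat_norm_sq_le_of_sum_pnat_le {b : ℕ+ → ℂ} {B : ℝ}
    (hb : ∀ A : Finset ℕ+, ∑ n ∈ A, ‖b n‖ ^ 2 ≤ B) :
    ∑' n : ℕ, ‖b (n + 1).toPNat'‖ ^ 2 ≤ B :=
  Real.tsum_le_of_sum_le (fun _ ↦ sq_nonneg _) fun A ↦ by
    simpa using! hb (A.map Equiv.pnatEquivNat.symm.toEmbedding)

namespace IsAdmissible

variable {S : ℕ → Finset ℕ+} {l : ℝ}

lemma exists_tendsto_exp_herglotzPartial (hS : IsAdmissible S) (l : ℝ) :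
    ∃ r : ℕ → ℝ, (∀ K, 0 ≤ r K) ∧ (∀ K, r K < 1) ∧ ∀ s : ℂ, 0 < s.re →
      Tendsto (fun K ↦ Complex.exp (-l * herglotzPartial S (r K) K s)) atTop
        (𝓝 (Complex.exp (-l * herglotzSum S s))) := by
  obtain ⟨r, -, hr, hlim⟩ := exists_seq_strictMono_tendsto' (zero_lt_one' ℝ)
  exact ⟨r, fun K ↦ (hr K).1.le, fun K ↦ (hr K).2, fun s hs ↦ ((hS.tendsto_herglotzPartial
    (fun K ↦ (hr K).1.le) (fun K ↦ (hr K).2.le) hlim hs).const_mul _).cexp⟩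

lemma norm_exp_herglotzSum_le_one (hS : IsAdmissible S) (hl : 0 ≤ l) {s : ℂ} (hs : 0 < s.re) :
    ‖Complex.exp (-l * herglotzSum S s)‖ ≤ 1 := by
  obtain ⟨r, hr₀, hr₁, hlim⟩ := hS.exists_tendsto_exp_herglotzPartial l
  exact le_of_tendsto (hlim s hs).norm
    (.of_forall fun K ↦ norm_exp_herglotzPartial_le_one S hl (hr₀ K) (hr₁ K) K hs.le)

lemma exists_coeff_exp_herglotzSum (hS : IsAdmissible S) (hl : 0 ≤ l) {δ : ℝ}
    (hδ : ∀ K, ∑ k ∈ Finset.range K, ((S k).card : ℝ)⁻¹ ≤ δ) :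
    ∃ a : ℕ+ → ℂ, (∀ A : Finset ℕ+, ∑ n ∈ A, ‖a n‖ ^ 2 ≤ Real.exp (-(2 * l)) + δ) ∧
      ∀ s : ℂ, 1 < s.re → HasSum (fun n ↦ a n * dirichletHom s n)
        (Complex.exp (-l * herglotzSum S s)) := by
  obtain ⟨r, hr₀, hr₁, hlim⟩ := hS.exists_tendsto_exp_herglotzPartial l
  choose a ha hasum using fun K ↦ exists_coeff_exp_herglotzPartial S hl (hr₀ K) (hr₁ K) K
  exact exists_hasSum_dirichlet_of_tendsto
    (fun K A ↦ (ha K A).trans (add_le_add_right (hδ K) _))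
    (fun K s hs ↦ hasum K s (zero_lt_one.trans hs).le)
    fun s hs ↦ hlim s (zero_lt_one.trans hs)

end IsAdmissible

end Inner

/-- For every `ε > 0` there is a singular inner function `g` in `𝓗^∞`: `g` is analytic
and zero-free on `Re s > 0` with `|g| ≤ 1`, is represented by a Dirichlet series
`∑ aₙ n^{-s}` in some half-plane, its boundary values have modulus `1` almost
everywhere, and yet `∑ |aₙ|² ≤ ε²`. -/
theorem exists_singular_inner_small_coefficients (ε : ℝ) (hε : 0 < ε) :
    ∃ (g : ℂ → ℂ) (a : ℕ → ℂ) (σ₀ : ℝ) (gb : ℝ → ℂ),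
      DifferentiableOn ℂ g {s : ℂ | 0 < s.re} ∧
      (∀ s : ℂ, 0 < s.re → ‖g s‖ ≤ 1) ∧
      (∀ s : ℂ, 0 < s.re → g s ≠ 0) ∧
      (∀ s : ℂ, σ₀ < s.re →
        HasSum (fun n : ℕ => a (n + 1) * ((n + 1 : ℕ) : ℂ) ^ (-s)) (g s)) ∧
      (∀ᵐ t : ℝ ∂volume,
        Tendsto (fun σ : ℝ => g (σ + t * I)) (nhdsWithin 0 (Set.Ioi 0)) (nhds (gb t))) ∧
      (∀ᵐ t : ℝ ∂volume, ‖gb t‖ = 1) ∧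
      (∑' n : ℕ, ‖a (n + 1)‖ ^ 2) ≤ ε ^ 2 := by
  have hδ : 0 < ε ^ 2 / 2 := by positivity
  obtain ⟨S, hS, hcard⟩ := exists_isAdmissible hδ
  obtain ⟨l, hl, hlε⟩ : ∃ l : ℝ, 0 ≤ l ∧ Real.exp (-(2 * l)) ≤ ε ^ 2 / 2 :=
    ((eventually_ge_atTop 0).and ((Real.tendsto_exp_neg_atTop_nhds_zero.comp
      (tendsto_id.const_mul_atTop two_pos)).eventually_le_const hδ)).exists
  obtain ⟨a, ha, hsum⟩ := hS.exists_coeff_exp_herglotzSum hl hcard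
  refine ⟨fun s ↦ Complex.exp (-l * herglotzSum S s), fun n ↦ a n.toPNat', 1,
    fun t ↦ Complex.exp (-l * herglotzSum S (t * I)), ?_, ?_, ?_, ?_, ?_, ?_, ?_⟩
  · exact (hS.differentiableOn_herglotzSum.const_mul _).cexp
  · exact fun s hs ↦ hS.norm_exp_herglotzSum_le_one hl hs
  · exact fun s _ ↦ Complex.exp_ne_zero _
  · exact fun s hs ↦ hasSum_nat_of_hasSum_pnat (hsum s hs)
  · filter_upwards [hS.ae_tendsto_herglotzSum] with t ht using (ht.const_mul _).cexp
  · exact .of_forall fun t ↦ by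
      rw [norm_exp_neg_ofReal_mul, re_herglotzSum_mul_I, mul_zero, Real.exp_zero]
  · exact (tsum_nat_norm_sq_le_of_sum_pnat_le ha).trans (by linarith)
end
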